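/- arXiv:1906.05485 — 4 statements merged into one kernel-verified Lean document; each statement's English description precedes it below -/
import Mathlib

section
/- Let ε > 0, let A ≥ 0, let k ≥ 1 be an integer, and let U : ℝ → ℝ be a fixed smooth function compactly supported in [1,2]. Then there is a constant C, depending only on k, U, A and ε, such that for all a, b > 0 and X > 1 with b²X > 1 and |a − b|·√X ≥ X^ε, one has |I_k(a,b;X)| ≤ C·X^{−A}. -/
/-- `e(t) = exp(2πit)`. -/
noncomputable def e (t : ℝ) : ℂ := Complex.exp (2 * (Real.pi : ℂ) * Complex.I * t)

/-- The Bessel function of the first kind of integer order `m`: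
`J_m(x) = Σ_{n≥0} (−1)^n (x/2)^{m+2n} / (n! (m+n)!)`. -/
noncomputable def besselJ (m : ℕ) (x : ℝ) : ℝ :=
  ∑' n : ℕ, (-1 : ℝ) ^ n * (x / 2) ^ (m + 2 * n) / ((n.factorial : ℝ) * ((m + n).factorial : ℝ))

/-- The Bessel integral `I_k(a,b;X) = ∫_0^∞ U(x/X) e(2a√x) J_{k−1}(4πb√x) dx`. -/
noncomputable def Ik (U : ℝ → ℝ) (k : ℕ) (a b X : ℝ) : ℂ :=
  ∫ x in Set.Ioi (0 : ℝ),
    (U (x / X) : ℂ) * e (2 * a * Real.sqrt x) *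
      (besselJ (k - 1) (4 * Real.pi * b * Real.sqrt x) : ℂ)

/-!
Substituting `x = X t²` turns `I_k(a, b; X)` into `2X ∫₀^∞ φ(t) exp(iαt) J_m(βt) dt` with
`m = k - 1`, `φ(t) = t U(t²)`, `α = 4πa√X` and `β = 4πb√X`. By Bessel's equation the wave
`w(t) = exp(iαt) J_m(βt)` satisfies `(β² - α²) w = L w`, where `L` is a second order differential
operator. Moving `L` onto the amplitude by partial integration replaces `φ` by `φ₁ + iα φ₂`, with
`φ₁` and `φ₂` independent of `α` and `β`. As `|β² - α²| = ||β| - |α|| (|β| + |α|)`, the second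
factor absorbs the `α`, and each such step gains a factor `||β| - |α||`, which is at least `X^ε`.
Since `J_m` is bounded on the whole real line (by monotonicity of an energy of Bessel's equation),
`(A + 1) / ε` steps suffice. No asymptotic expansion of `J_m` enters.
-/

open MeasureTheory Set Filter Topology
open scoped ContDiff

section Bessel

/-- The Bessel–Clifford function `C_m(w) = ∑ wⁿ / (n! (m + n)!)`, the entire function through which
`J_m(x) = (x / 2)ᵐ C_m(-(x / 2)²)`. -/
noncomputable def besselClifford (m : ℕ) (w : ℝ) : ℝ :=
  ∑' n : ℕ, w ^ n / (n.factorial * (m + n).factorial)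

lemma norm_besselClifford_term_le (m n : ℕ) {w R : ℝ} (hw : |w| ≤ R) :
    ‖w ^ n / (n.factorial * (m + n).factorial)‖ ≤ R ^ n / n.factorial := by
  have h_one_le : (1 : ℝ) ≤ (m + n).factorial := mod_cast (m + n).factorial_pos
  have h_pos : (0 : ℝ) < n.factorial := mod_cast n.factorial_pos
  rw [norm_div, norm_pow, Real.norm_eq_abs, Real.norm_of_nonneg (by positivity)]
  have hR : 0 ≤ R := (abs_nonneg w).trans hw
  gcongr
  exact le_mul_of_one_le_right h_pos.le h_one_le

lemma summable_besselClifford (m : ℕ) (w : ℝ) :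
    Summable fun n : ℕ => w ^ n / (n.factorial * (m + n).factorial) :=
  .of_norm_bounded (Real.summable_pow_div_factorial |w|)
    fun n => norm_besselClifford_term_le m n le_rfl

lemma hasDerivAt_besselClifford_term (m n : ℕ) (w : ℝ) :
    HasDerivAt (fun w : ℝ => w ^ (n + 1) / ((n + 1).factorial * (m + (n + 1)).factorial))
      (w ^ n / (n.factorial * (m + 1 + n).factorial)) w := by
  refine ((hasDerivAt_pow (n + 1) w).div_const _).congr_deriv ?_
  rw [add_tsub_cancel_right, show m + (n + 1) = m + 1 + n by ring, n.factorial_succ]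
  push_cast
  field_simp

lemma hasDerivAt_besselClifford (m : ℕ) (w : ℝ) :
    HasDerivAt (besselClifford m) (besselClifford (m + 1) w) w := by
  have h_split : besselClifford m = fun w => 1 / (m.factorial : ℝ) +
      ∑' n : ℕ, w ^ (n + 1) / ((n + 1).factorial * (m + (n + 1)).factorial : ℝ) := by
    funext w
    simpa [besselClifford] using (summable_besselClifford m w).tsum_eq_zero_add
  have hw : w ∈ Metric.ball (0 : ℝ) (|w| + 1) := by simp
  rw [h_split]
  refine (hasDerivAt_tsum_of_isPreconnected (Real.summable_pow_div_factorial (|w| + 1))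
    Metric.isOpen_ball (convex_ball _ _).isPreconnected
    (fun n y _ => hasDerivAt_besselClifford_term m n y) (fun n y hy => ?_) hw
    ((summable_nat_add_iff 1).2 (summable_besselClifford m w)) hw).const_add _
  exact norm_besselClifford_term_le (m + 1) n (by simpa using (Metric.mem_ball.1 hy).le)

lemma contDiff_besselClifford (m : ℕ) : ContDiff ℝ ∞ (besselClifford m) := by
  refine contDiff_infty.2 fun n => ?_
  induction n generalizing m with
  | zero =>
    exact contDiff_zero.2 (continuous_iff_continuousAt.2 fun w =>
      (hasDerivAt_besselClifford m w).continuousAt)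
  | succ n ih =>
    have h_deriv : deriv (besselClifford m) = besselClifford (m + 1) :=
      funext fun w => (hasDerivAt_besselClifford m w).deriv
    rw [Nat.cast_succ, contDiff_succ_iff_deriv, h_deriv]
    exact ⟨fun w => (hasDerivAt_besselClifford m w).differentiableAt, by simp, ih (m + 1)⟩

lemma besselClifford_recurrence (m : ℕ) (w : ℝ) :
    besselClifford m w = (m + 1) * besselClifford (m + 1) w + w * besselClifford (m + 2) w := by
  have h_shifted : HasSum (fun n : ℕ => n * (w ^ n / (n.factorial * (m + 1 + n).factorial)))
      (w * besselClifford (m + 2) w) := by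
    rw [← hasSum_nat_add_iff' 1]
    simp only [Finset.sum_range_one, Nat.cast_zero, zero_mul, sub_zero]
    refine ((summable_besselClifford (m + 2) w).hasSum.mul_left w).congr_fun fun n => ?_
    rw [show m + 1 + (n + 1) = m + 2 + n by ring, n.factorial_succ, pow_succ']
    push_cast
    field_simp
  refine HasSum.unique (summable_besselClifford m w).hasSum
    ((((summable_besselClifford (m + 1) w).hasSum.mul_left ((m : ℝ) + 1)).add h_shifted).congr_fun
      fun n => ?_)
  rw [show m + 1 + n = (m + n) + 1 by ring, (m + n).factorial_succ]
  push_cast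
  field_simp
  ring

lemma besselJ_eq_besselClifford (m : ℕ) (x : ℝ) :
    besselJ m x = (x / 2) ^ m * besselClifford m (-(x / 2) ^ 2) := by
  rw [besselJ, besselClifford, ← tsum_mul_left]
  refine tsum_congr fun n => ?_
  rw [neg_pow ((x / 2) ^ 2), ← pow_mul, pow_add]
  ring

lemma contDiff_besselJ (m : ℕ) : ContDiff ℝ ∞ (besselJ m) := by
  have h_clifford := contDiff_besselClifford m
  rw [funext (besselJ_eq_besselClifford m)]
  fun_prop

lemma hasDerivAt_besselJ (m : ℕ) (x : ℝ) : HasDerivAt (besselJ m) (deriv (besselJ m) x) x :=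
  ((contDiff_besselJ m).differentiable (by simp) x).hasDerivAt

lemma hasDerivAt_deriv_besselJ (m : ℕ) (x : ℝ) :
    HasDerivAt (deriv (besselJ m)) (deriv (deriv (besselJ m)) x) x :=
  ((contDiff_infty_iff_deriv.1 (contDiff_besselJ m)).2.differentiable (by simp) x).hasDerivAt

lemma besselJ_neg (m : ℕ) (x : ℝ) : besselJ m (-x) = (-1) ^ m * besselJ m x := by
  rw [besselJ_eq_besselClifford, besselJ_eq_besselClifford, neg_div, neg_sq, neg_pow, mul_assoc]

lemma mul_deriv_besselJ (m : ℕ) (x : ℝ) :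
    x * deriv (besselJ m) x = m * besselJ m x - x * besselJ (m + 1) x := by
  have h_half : HasDerivAt (fun x : ℝ => x / 2) (1 / 2) x := (hasDerivAt_id x).div_const 2
  have h_deriv := (h_half.fun_pow m).mul
    ((hasDerivAt_besselClifford m (-(x / 2) ^ 2)).comp x (h_half.fun_pow 2).fun_neg)
  rw [(h_deriv.congr_of_eventuallyEq (.of_forall (besselJ_eq_besselClifford m))).deriv,
    besselJ_eq_besselClifford m, besselJ_eq_besselClifford (m + 1)]
  rcases m with _ | m
  · simp only [Nat.cast_zero, zero_mul, pow_zero]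
    ring
  · simp only [add_tsub_cancel_right, Function.comp_apply]
    push_cast
    ring

lemma besselJ_recurrence (m : ℕ) (x : ℝ) :
    2 * (m + 1) * besselJ (m + 1) x = x * (besselJ m x + besselJ (m + 2) x) := by
  simp only [besselJ_eq_besselClifford, besselClifford_recurrence m]
  ring

lemma mul_deriv_besselJ_succ (m : ℕ) (x : ℝ) :
    x * deriv (besselJ (m + 1)) x = x * besselJ m x - (m + 1) * besselJ (m + 1) x := by
  have h_deriv := mul_deriv_besselJ (m + 1) x
  push_cast at h_deriv
  linear_combination h_deriv + besselJ_recurrence m x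

theorem besselJ_ode (m : ℕ) (x : ℝ) :
    x ^ 2 * deriv (deriv (besselJ m)) x + x * deriv (besselJ m) x
      + (x ^ 2 - m ^ 2) * besselJ m x = 0 := by
  have h_left := (hasDerivAt_id' x).mul (hasDerivAt_deriv_besselJ m x)
  have h_right := ((hasDerivAt_besselJ m x).const_mul (m : ℝ)).sub
    ((hasDerivAt_id' x).mul (hasDerivAt_besselJ (m + 1) x))
  have h_eq := h_left.unique
    (h_right.congr_of_eventuallyEq (.of_forall (mul_deriv_besselJ m)))
  linear_combination x * h_eq + m * mul_deriv_besselJ m x - x * mul_deriv_besselJ_succ m x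

/-- An energy of Bessel's equation. The weight `exp (m² / x)` absorbs the `m² / x²` term of the
equation, which makes the energy nonincreasing on `(0, ∞)`. -/
noncomputable def besselEnergy (m : ℕ) (x : ℝ) : ℝ :=
  (besselJ m x ^ 2 + deriv (besselJ m) x ^ 2) * Real.exp (m ^ 2 / x)

lemma hasDerivAt_besselEnergy (m : ℕ) {x : ℝ} (hx : 0 < x) :
    HasDerivAt (besselEnergy m)
      (-(Real.exp (m ^ 2 / x) * (2 * deriv (besselJ m) x ^ 2 / x
        + m ^ 2 / x ^ 2 * (besselJ m x - deriv (besselJ m) x) ^ 2))) x := by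
  have h_exp : HasDerivAt (fun x : ℝ => Real.exp (m ^ 2 / x))
      (Real.exp (m ^ 2 / x) * (m ^ 2 * -(x ^ 2)⁻¹)) x :=
    ((hasDerivAt_inv hx.ne').const_mul ((m : ℝ) ^ 2)).exp
  refine ((((hasDerivAt_besselJ m x).fun_pow 2).add
    ((hasDerivAt_deriv_besselJ m x).fun_pow 2)).mul h_exp).congr_deriv ?_
  have h_ode : deriv (deriv (besselJ m)) x
      = -deriv (besselJ m) x / x - (1 - m ^ 2 / x ^ 2) * besselJ m x := by
    field_simp
    linear_combination besselJ_ode m x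
  rw [h_ode]
  simp only [Pi.add_apply]
  field_simp
  ring

lemma antitoneOn_besselEnergy (m : ℕ) : AntitoneOn (besselEnergy m) (Ioi 0) := by
  refine antitoneOn_of_hasDerivWithinAt_nonpos (convex_Ioi 0)
    (fun x hx => (hasDerivAt_besselEnergy m hx).continuousAt.continuousWithinAt)
    (fun x hx => (hasDerivAt_besselEnergy m (interior_subset hx)).hasDerivWithinAt)
    fun x hx => ?_
  have hx_pos : 0 < x := interior_subset hx
  rw [neg_nonpos]
  positivity

lemma sq_besselJ_le_besselEnergy (m : ℕ) {x : ℝ} (hx : 0 < x) :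
    besselJ m x ^ 2 ≤ besselEnergy m x :=
  calc besselJ m x ^ 2 ≤ besselJ m x ^ 2 + deriv (besselJ m) x ^ 2 :=
        le_add_of_nonneg_right (sq_nonneg _)
    _ ≤ besselEnergy m x :=
        le_mul_of_one_le_right (by positivity) (Real.one_le_exp (by positivity))

theorem exists_abs_besselJ_le (m : ℕ) : ∃ M : ℝ, ∀ x : ℝ, |besselJ m x| ≤ M := by
  obtain ⟨B, hB⟩ := (isCompact_Icc (a := (0 : ℝ)) (b := 1)).exists_bound_of_continuousOn
    (contDiff_besselJ m).continuous.continuousOn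
  have h_nonneg : ∀ x, 0 ≤ x → |besselJ m x| ≤ max B (√(besselEnergy m 1)) := by
    intro x hx
    rcases le_total x 1 with hx_le | hx_ge
    · exact le_max_of_le_left (hB x ⟨hx, hx_le⟩)
    · have hx_pos : 0 < x := one_pos.trans_le hx_ge
      exact le_max_of_le_right (Real.abs_le_sqrt ((sq_besselJ_le_besselEnergy m hx_pos).trans
        (antitoneOn_besselEnergy m (mem_Ioi.2 one_pos) hx_pos hx_ge)))
  refine ⟨max B (√(besselEnergy m 1)), fun x => ?_⟩
  rcases le_total 0 x with hx | hx
  · exact h_nonneg x hx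
  · have h_abs : |besselJ m x| = |besselJ m (-x)| := by
      rw [besselJ_neg, abs_mul, abs_pow, abs_neg, abs_one, one_pow, one_mul]
    exact h_abs ▸ h_nonneg (-x) (neg_nonneg.2 hx)

end Bessel

section TestFunctions

/-- Smooth functions on `ℝ` with compact support in `ℝ ∖ {0}`, the support condition at `0` being
encoded as vanishing on a neighbourhood of `0`. These are the amplitudes of the oscillatory
integrals below; unlike arbitrary test functions they may be divided by the variable. -/
structure IsTestFunctionOffZero {E : Type*} [NormedAddCommGroup E] [NormedSpace ℝ E]
    (φ : ℝ → E) : Prop where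
  contDiff : ContDiff ℝ ∞ φ
  hasCompactSupport : HasCompactSupport φ
  eventuallyEq_zero : φ =ᶠ[𝓝 0] 0

namespace IsTestFunctionOffZero

section NormedSpace

variable {E : Type*} [NormedAddCommGroup E] [NormedSpace ℝ E] {φ : ℝ → E}

lemma of_support_subset_Icc {a b : ℝ} (hφ : ContDiff ℝ ∞ φ) (ha : 0 < a)
    (h_supp : Function.support φ ⊆ Icc a b) : IsTestFunctionOffZero φ where
  contDiff := hφ
  hasCompactSupport := .of_support_subset_isCompact isCompact_Icc h_supp
  eventuallyEq_zero := by
    filter_upwards [Iio_mem_nhds ha] with t ht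
    exact Function.notMem_support.1 fun h => (h_supp h).1.not_gt ht

lemma deriv (hφ : IsTestFunctionOffZero φ) : IsTestFunctionOffZero (deriv φ) where
  contDiff := (contDiff_infty_iff_deriv.1 hφ.contDiff).2
  hasCompactSupport := hφ.hasCompactSupport.deriv
  eventuallyEq_zero := hφ.eventuallyEq_zero.deriv.trans (by simp)

lemma hasDerivAt (hφ : IsTestFunctionOffZero φ) (t : ℝ) :
    HasDerivAt φ (_root_.deriv φ t) t :=
  (hφ.contDiff.differentiable (by simp) t).hasDerivAt

lemma integral_Ioi_deriv_eq_zero [CompleteSpace E] (hφ : IsTestFunctionOffZero φ) :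
    ∫ t in Ioi 0, _root_.deriv φ t = 0 := by
  rw [hφ.hasCompactSupport.integral_Ioi_deriv_eq (hφ.contDiff.of_le (by simp)) 0,
    hφ.eventuallyEq_zero.eq_of_nhds, Pi.zero_apply, neg_zero]

lemma integrable (hφ : IsTestFunctionOffZero φ) : Integrable φ :=
  hφ.contDiff.continuous.integrable_of_hasCompactSupport hφ.hasCompactSupport

end NormedSpace

variable {φ ψ : ℝ → ℂ}

lemma add (hφ : IsTestFunctionOffZero φ) (hψ : IsTestFunctionOffZero ψ) :
    IsTestFunctionOffZero (fun t => φ t + ψ t) where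
  contDiff := hφ.contDiff.add hψ.contDiff
  hasCompactSupport := hφ.hasCompactSupport.add hψ.hasCompactSupport
  eventuallyEq_zero := by
    filter_upwards [hφ.eventuallyEq_zero, hψ.eventuallyEq_zero] with t hφt hψt
    simp [hφt, hψt]

lemma mul_of_contDiffAt (hφ : IsTestFunctionOffZero φ) {g : ℝ → ℂ}
    (hg : ∀ t ≠ 0, ContDiffAt ℝ ∞ g t) : IsTestFunctionOffZero (fun t => φ t * g t) := by
  have h_zero : (fun t => φ t * g t) =ᶠ[𝓝 0] 0 := by
    filter_upwards [hφ.eventuallyEq_zero] with t ht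
    simp [ht]
  refine ⟨contDiff_iff_contDiffAt.2 fun t => ?_, hφ.hasCompactSupport.mul_right, h_zero⟩
  rcases eq_or_ne t 0 with rfl | ht
  · exact contDiffAt_const.congr_of_eventuallyEq h_zero
  · exact hφ.contDiff.contDiffAt.mul (hg t ht)

lemma mul_contDiff (hφ : IsTestFunctionOffZero φ) {g : ℝ → ℂ} (hg : ContDiff ℝ ∞ g) :
    IsTestFunctionOffZero (fun t => φ t * g t) :=
  hφ.mul_of_contDiffAt fun _ _ => hg.contDiffAt

lemma const_mul (hφ : IsTestFunctionOffZero φ) (c : ℂ) :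
    IsTestFunctionOffZero (fun t => c * φ t) := by
  simpa only [mul_comm] using hφ.mul_contDiff (contDiff_const (c := c))

lemma div_ofReal (hφ : IsTestFunctionOffZero φ) :
    IsTestFunctionOffZero (fun t => φ t / t) := by
  simp only [div_eq_mul_inv]
  exact hφ.mul_of_contDiffAt fun t ht =>
    Complex.ofRealCLM.contDiff.contDiffAt.inv (Complex.ofReal_ne_zero.2 ht)

lemma ofReal_mul_comp_sq {U : ℝ → ℝ} (hU : IsTestFunctionOffZero U) :
    IsTestFunctionOffZero (fun t : ℝ => ((t * U (t ^ 2) : ℝ) : ℂ)) where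
  contDiff := Complex.ofRealCLM.contDiff.comp
    (contDiff_id.mul (hU.contDiff.comp (contDiff_id.pow 2)))
  hasCompactSupport := by
    obtain ⟨R, hR⟩ := hU.hasCompactSupport.isBounded.subset_closedBall 0
    refine .intro (isCompact_closedBall (0 : ℝ) (R + 1)) fun t ht => ?_
    have h_far : t ^ 2 ∉ Metric.closedBall (0 : ℝ) R := by
      simp only [mem_closedBall_zero_iff, Real.norm_eq_abs, abs_pow, sq_abs, not_le] at ht ⊢
      nlinarith [sq_abs t, sq_nonneg (|t| - 1)]
    simp [image_eq_zero_of_notMem_tsupport fun h => h_far (hR h)]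
  eventuallyEq_zero := by
    have h_tendsto : Tendsto (fun t : ℝ => t ^ 2) (𝓝 0) (𝓝 0) := by
      simpa using (continuous_pow 2).tendsto (0 : ℝ)
    filter_upwards [h_tendsto.eventually hU.eventuallyEq_zero] with t ht
    simp [ht]

end IsTestFunctionOffZero

end TestFunctions

section BesselWave

open Complex (I)

/-- The oscillating factor `exp(iαt) J_m(βt)`. -/
noncomputable def besselWave (m : ℕ) (α β t : ℝ) : ℂ :=
  Complex.exp (I * α * t) * besselJ m (β * t)

variable (m : ℕ) (α β : ℝ)

lemma contDiff_besselWave : ContDiff ℝ ∞ (besselWave m α β) := by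
  have h_exp : ContDiff ℝ ∞ fun t : ℝ => Complex.exp (I * α * t) :=
    (contDiff_const.mul Complex.ofRealCLM.contDiff).cexp
  exact h_exp.mul (Complex.ofRealCLM.contDiff.comp
    ((contDiff_besselJ m).comp (contDiff_const.mul contDiff_id)))

lemma hasDerivAt_exp_mul_comp_mul {f : ℝ → ℝ} {f' t : ℝ} (hf : HasDerivAt f f' (β * t)) :
    HasDerivAt (fun t : ℝ => Complex.exp (I * α * t) * f (β * t))
      (Complex.exp (I * α * t) * (I * α * f (β * t) + β * f')) t := by
  have h_phase : HasDerivAt (fun t : ℝ => I * α * (t : ℂ)) (I * α) t := by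
    simpa using (hasDerivAt_id t).ofReal_comp.const_mul (I * (α : ℂ))
  have h_lin : HasDerivAt (fun t : ℝ => β * t) β t := by
    simpa using (hasDerivAt_id t).const_mul β
  refine (h_phase.cexp.mul (hf.comp t h_lin).ofReal_comp).congr_deriv ?_
  push_cast [Function.comp_apply]
  ring

lemma hasDerivAt_besselWave (t : ℝ) : HasDerivAt (besselWave m α β)
    (I * α * besselWave m α β t + β * (Complex.exp (I * α * t) * deriv (besselJ m) (β * t))) t := by
  refine (hasDerivAt_exp_mul_comp_mul α β (hasDerivAt_besselJ m (β * t))).congr_deriv ?_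
  rw [besselWave]
  ring

lemma hasDerivAt_deriv_besselWave (t : ℝ) : HasDerivAt (deriv (besselWave m α β))
    (Complex.exp (I * α * t) * (-α ^ 2 * besselJ m (β * t)
      + 2 * I * α * β * deriv (besselJ m) (β * t)
      + β ^ 2 * deriv (deriv (besselJ m)) (β * t))) t := by
  rw [funext fun t => (hasDerivAt_besselWave m α β t).deriv]
  refine (((hasDerivAt_besselWave m α β t).const_mul (I * α : ℂ)).add
    ((hasDerivAt_exp_mul_comp_mul α β (hasDerivAt_deriv_besselJ m (β * t))).const_mul
      (β : ℂ))).congr_deriv ?_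
  rw [besselWave]
  linear_combination
    (Complex.exp (I * α * t) * α ^ 2 * besselJ m (β * t)) * Complex.I_sq

/-- Bessel's equation conjugated by `exp(iαt)`. -/
lemma besselWave_ode {t : ℝ} (ht : t ≠ 0) :
    ((β : ℂ) ^ 2 - α ^ 2) * besselWave m α β t =
      -deriv (deriv (besselWave m α β)) t + 2 * I * α * deriv (besselWave m α β) t
        - (deriv (besselWave m α β) t - I * α * besselWave m α β t) / t
        + m ^ 2 / t ^ 2 * besselWave m α β t := by
  have h_ode : ((β * t : ℝ) : ℂ) ^ 2 * (deriv (deriv (besselJ m)) (β * t) : ℝ)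
      + (β * t : ℝ) * (deriv (besselJ m) (β * t) : ℝ)
      + (((β * t : ℝ) : ℂ) ^ 2 - m ^ 2) * (besselJ m (β * t) : ℝ) = 0 := mod_cast
    besselJ_ode m (β * t)
  have ht' : (t : ℂ) ≠ 0 := Complex.ofReal_ne_zero.2 ht
  rw [(hasDerivAt_deriv_besselWave m α β t).deriv, (hasDerivAt_besselWave m α β t).deriv]
  simp only [besselWave]
  push_cast at h_ode
  field_simp
  linear_combination h_ode - (2 * α ^ 2 * t ^ 2 * besselJ m (β * t)) * Complex.I_sq

/-- The formal adjoint `-φ'' + (φ/t)' + m²φ/t²` of the Bessel operator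
`-d²/dt² - (1/t) d/dt + m²/t²`. -/
noncomputable def besselAdjoint (φ : ℝ → ℂ) (t : ℝ) : ℂ :=
  -deriv (deriv φ) t + deriv (fun s : ℝ => φ s / s) t + m ^ 2 * (φ t / t / t)

/-- The formal adjoint `φ/t - 2φ'` of the transport operator `2 d/dt + 1/t`, which is what
conjugating the Bessel operator by `exp(iαt)` contributes to first order in `iα`. -/
noncomputable def transportAdjoint (φ : ℝ → ℂ) (t : ℝ) : ℂ :=
  φ t / t - 2 * deriv φ t

/-- The boundary term of the integration by parts that moves the conjugated Bessel operator from
the wave to the amplitude `φ`. -/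
noncomputable def lagrangeBracket (φ : ℝ → ℂ) (t : ℝ) : ℂ :=
  (deriv φ t + 2 * I * α * φ t + -1 * (φ t / t)) * besselWave m α β t
    + -1 * φ t * deriv (besselWave m α β) t

variable {φ : ℝ → ℂ}

lemma IsTestFunctionOffZero.besselAdjoint (hφ : IsTestFunctionOffZero φ) :
    IsTestFunctionOffZero (besselAdjoint m φ) := by
  have h := ((hφ.deriv.deriv.const_mul (-1)).add hφ.div_ofReal.deriv).add
    (hφ.div_ofReal.div_ofReal.const_mul ((m : ℂ) ^ 2))
  simp only [neg_one_mul] at h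
  exact h

lemma IsTestFunctionOffZero.transportAdjoint (hφ : IsTestFunctionOffZero φ) :
    IsTestFunctionOffZero (transportAdjoint φ) := by
  have h := hφ.div_ofReal.add (hφ.deriv.const_mul (-2))
  simp only [neg_mul, ← sub_eq_add_neg] at h
  exact h

lemma IsTestFunctionOffZero.lagrangeBracket (hφ : IsTestFunctionOffZero φ) :
    IsTestFunctionOffZero (lagrangeBracket m α β φ) :=
  (((hφ.deriv.add (hφ.const_mul (2 * I * α))).add (hφ.div_ofReal.const_mul (-1))).mul_contDiff
    (contDiff_besselWave m α β)).add
    ((hφ.const_mul (-1)).mul_contDiff (contDiff_infty_iff_deriv.1 (contDiff_besselWave m α β)).2)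

lemma besselWave_lagrange_identity (hφ : IsTestFunctionOffZero φ) {t : ℝ} (ht : t ≠ 0) :
    ((β : ℂ) ^ 2 - α ^ 2) * (φ t * besselWave m α β t) =
      besselAdjoint m φ t * besselWave m α β t
        + I * α * (transportAdjoint φ t * besselWave m α β t)
        + deriv (lagrangeBracket m α β φ) t := by
  have h_wave := (hasDerivAt_besselWave m α β t).differentiableAt.hasDerivAt
  have h_wave' := (hasDerivAt_deriv_besselWave m α β t).differentiableAt.hasDerivAt
  have h_bracket := ((((hφ.deriv.hasDerivAt t).add ((hφ.hasDerivAt t).const_mul (2 * I * α))).add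
    ((hφ.div_ofReal.hasDerivAt t).const_mul (-1))).mul h_wave).add
    (((hφ.hasDerivAt t).const_mul (-1)).mul h_wave')
  have h_deriv : deriv (lagrangeBracket m α β φ) t = _ := h_bracket.deriv
  simp only [h_deriv, besselAdjoint, transportAdjoint, Pi.add_apply]
  linear_combination φ t * besselWave_ode m α β ht

end BesselWave

section OscillatoryIntegral

open Complex (I)

/-- The oscillatory integral `∫₀^∞ φ(t) exp(iαt) J_m(βt) dt` to which `Ik` reduces. -/
noncomputable def besselOscIntegral (m : ℕ) (α β : ℝ) (φ : ℝ → ℂ) : ℂ :=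
  ∫ t in Ioi 0, φ t * besselWave m α β t

lemma norm_besselWave (m : ℕ) (α β t : ℝ) : ‖besselWave m α β t‖ = |besselJ m (β * t)| := by
  have h_phase : I * α * t = ((α * t : ℝ) : ℂ) * I := by
    push_cast
    ring
  rw [besselWave, norm_mul, h_phase, Complex.norm_exp_ofReal_mul_I, one_mul, Complex.norm_real,
    Real.norm_eq_abs]

theorem besselOscIntegral_recurrence (m : ℕ) (α β : ℝ) {φ : ℝ → ℂ}
    (hφ : IsTestFunctionOffZero φ) :
    ((β : ℂ) ^ 2 - α ^ 2) * besselOscIntegral m α β φ =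
      besselOscIntegral m α β (besselAdjoint m φ)
        + I * α * besselOscIntegral m α β (transportAdjoint φ) := by
  have h_smooth := contDiff_besselWave m α β
  have h_bracket := hφ.lagrangeBracket m α β
  have h_bessel := ((hφ.besselAdjoint m).mul_contDiff h_smooth).integrable.integrableOn (s := Ioi 0)
  have h_transport := ((hφ.transportAdjoint.mul_contDiff h_smooth).const_mul
    (I * α)).integrable.integrableOn (s := Ioi 0)
  have h_deriv := h_bracket.deriv.integrable.integrableOn (s := Ioi 0)
  simp only [besselOscIntegral, ← integral_const_mul]
  rw [setIntegral_congr_fun measurableSet_Ioi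
      fun t (ht : 0 < t) => besselWave_lagrange_identity m α β hφ ht.ne',
    integral_add (h_bessel.fun_add h_transport) h_deriv, integral_add h_bessel h_transport,
    h_bracket.integral_Ioi_deriv_eq_zero, add_zero]

lemma exists_norm_besselOscIntegral_le (m : ℕ) {φ : ℝ → ℂ} (hφ : IsTestFunctionOffZero φ) :
    ∃ C : ℝ, ∀ α β : ℝ, ‖besselOscIntegral m α β φ‖ ≤ C := by
  obtain ⟨M, hM⟩ := exists_abs_besselJ_le m
  have h_int : IntegrableOn (fun t => ‖φ t‖ * M) (Ioi 0) :=
    (hφ.integrable.norm.mul_const M).integrableOn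
  refine ⟨∫ t in Ioi 0, ‖φ t‖ * M, fun α β =>
    norm_integral_le_of_norm_le h_int (.of_forall fun t => ?_)⟩
  rw [norm_mul, norm_besselWave]
  gcongr
  exact hM _

lemma norm_besselOscIntegral_mul_le (m : ℕ) (α β : ℝ) {φ : ℝ → ℂ}
    (hφ : IsTestFunctionOffZero φ) :
    (|β| + |α|) * (‖besselOscIntegral m α β φ‖ * |(|β| - |α|)|) ≤
      ‖besselOscIntegral m α β (besselAdjoint m φ)‖
        + |α| * ‖besselOscIntegral m α β (transportAdjoint φ)‖ := by
  have h_factor : ‖(β : ℂ) ^ 2 - (α : ℂ) ^ 2‖ = (|β| + |α|) * |(|β| - |α|)| := by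
    have h_cast : (β : ℂ) ^ 2 - (α : ℂ) ^ 2 = (((|β| + |α|) * (|β| - |α|) : ℝ) : ℂ) := by
      rw [← sq_sub_sq, sq_abs, sq_abs]
      push_cast
      rfl
    rw [h_cast, Complex.norm_real, norm_mul, Real.norm_eq_abs, Real.norm_eq_abs,
      abs_of_nonneg (add_nonneg (abs_nonneg β) (abs_nonneg α))]
  calc (|β| + |α|) * (‖besselOscIntegral m α β φ‖ * |(|β| - |α|)|)
      = ‖((β : ℂ) ^ 2 - α ^ 2) * besselOscIntegral m α β φ‖ := by
        rw [norm_mul, h_factor]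
        ring
    _ ≤ ‖besselOscIntegral m α β (besselAdjoint m φ)‖
          + ‖I * α * besselOscIntegral m α β (transportAdjoint φ)‖ := by
        rw [besselOscIntegral_recurrence m α β hφ]
        exact norm_add_le _ _
    _ = _ := by simp

theorem exists_norm_besselOscIntegral_mul_pow_le (m N : ℕ) {φ : ℝ → ℂ}
    (hφ : IsTestFunctionOffZero φ) :
    ∃ C : ℝ, ∀ α β : ℝ, 1 ≤ |(|β| - |α|)| →
      ‖besselOscIntegral m α β φ‖ * |(|β| - |α|)| ^ N ≤ C := by
  induction N generalizing φ with
  | zero =>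
    obtain ⟨C, hC⟩ := exists_norm_besselOscIntegral_le m hφ
    exact ⟨C, fun α β _ => by simpa using hC α β⟩
  | succ N ih =>
    obtain ⟨C₁, hC₁⟩ := ih (hφ.besselAdjoint m)
    obtain ⟨C₂, hC₂⟩ := ih hφ.transportAdjoint
    refine ⟨C₁ + C₂, fun α β h_gap => ?_⟩
    have h_bessel := hC₁ α β h_gap
    have h_transport := hC₂ α β h_gap
    have hC₁_nonneg : 0 ≤ C₁ := le_trans (by positivity) h_bessel
    have hC₂_nonneg : 0 ≤ C₂ := le_trans (by positivity) h_transport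
    have h_sum : 1 ≤ |β| + |α| := by
      simpa using h_gap.trans (abs_sub |β| |α|)
    set D := |(|β| - |α|)|
    refine le_of_mul_le_mul_left ?_ (one_pos.trans_le h_sum)
    calc (|β| + |α|) * (‖besselOscIntegral m α β φ‖ * D ^ (N + 1))
        = (|β| + |α|) * (‖besselOscIntegral m α β φ‖ * D) * D ^ N := by ring
      _ ≤ (‖besselOscIntegral m α β (besselAdjoint m φ)‖
            + |α| * ‖besselOscIntegral m α β (transportAdjoint φ)‖) * D ^ N := by
          gcongr
          exact norm_besselOscIntegral_mul_le m α β hφ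
      _ = ‖besselOscIntegral m α β (besselAdjoint m φ)‖ * D ^ N
            + |α| * (‖besselOscIntegral m α β (transportAdjoint φ)‖ * D ^ N) := by ring
      _ ≤ 1 * C₁ + |α| * C₂ := by
          rw [one_mul]
          gcongr
      _ ≤ (|β| + |α|) * C₁ + (|β| + |α|) * C₂ := by
          gcongr
          exact le_add_of_nonneg_left (abs_nonneg β)
      _ = (|β| + |α|) * (C₁ + C₂) := by ring

end OscillatoryIntegral

lemma Ik_eq_besselOscIntegral (U : ℝ → ℝ) (k : ℕ) (a b : ℝ) {X : ℝ} (hX : 0 < X) :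
    Ik U k a b X = 2 * X * besselOscIntegral (k - 1) (4 * Real.pi * a * √X)
      (4 * Real.pi * b * √X) (fun t => ((t * U (t ^ 2) : ℝ) : ℂ)) := by
  set g : ℝ → ℂ := fun x =>
    (U (x / X) : ℂ) * e (2 * a * √x) * (besselJ (k - 1) (4 * Real.pi * b * √x) : ℂ)
  have h_scale : ∫ x in Ioi 0, g x = X • ∫ s in Ioi 0, g (X * s) := by
    simpa using (integral_comp_mul_left_Ioi' g 0 hX).symm
  have h_sq : ∫ s in Ioi 0, g (X * s) =
      ∫ t in Ioi (0 : ℝ), (2 * t ^ ((2 : ℝ) - 1)) • g (X * t ^ (2 : ℝ)) :=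
    (integral_comp_rpow_Ioi_of_pos (g := fun s => g (X * s)) two_pos).symm
  rw [Ik, h_scale, h_sq, besselOscIntegral, mul_comm 2 (X : ℂ), mul_assoc, ← integral_const_mul,
    Complex.real_smul]
  congr 1
  refine setIntegral_congr_fun measurableSet_Ioi fun t (ht : 0 < t) => ?_
  have h_sqrt : √(X * t ^ 2) = √X * t := by rw [Real.sqrt_mul hX.le, Real.sqrt_sq ht.le]
  have h_div : X * t ^ 2 / X = t ^ 2 := mul_div_cancel_left₀ _ hX.ne'
  have h_exponent : (2 : ℝ) - 1 = 1 := by norm_num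
  simp only [g, e, besselWave, h_exponent, Real.rpow_one, Real.rpow_two, h_sqrt, h_div,
    Complex.real_smul]
  push_cast
  ring_nf

lemma rpow_le_pow_of_rpow_le {X ε A D : ℝ} {N : ℕ} (hX : 1 ≤ X) (hN : A ≤ ε * N) (hD : X ^ ε ≤ D) :
    X ^ A ≤ D ^ N := by
  have hX_pos : 0 < X := one_pos.trans_le hX
  calc X ^ A ≤ X ^ (ε * N) := Real.rpow_le_rpow_of_exponent_le hX hN
    _ = (X ^ ε) ^ N := Real.rpow_mul_natCast hX_pos.le ε N
    _ ≤ D ^ N := by gcongr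

lemma rpow_le_abs_sub_abs_frequencies {a b X ε : ℝ} (h_gap : X ^ ε ≤ |(|a| - |b|)| * √X) :
    X ^ ε ≤ |(|4 * Real.pi * b * √X| - |4 * Real.pi * a * √X|)| := by
  have h_factor : |4 * Real.pi * b * √X| - |4 * Real.pi * a * √X|
      = 4 * Real.pi * √X * (|b| - |a|) := by
    simp only [abs_mul, abs_of_pos Real.pi_pos, abs_of_nonneg (Real.sqrt_nonneg X), Nat.abs_ofNat]
    ring
  rw [h_factor, abs_mul, abs_of_nonneg (by positivity), abs_sub_comm, mul_right_comm, mul_assoc]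
  exact h_gap.trans (le_mul_of_one_le_left (by positivity) (by linarith [Real.pi_gt_three]))

theorem stmt6_general {ε : ℝ} (hε : 0 < ε) (A : ℝ) (m : ℕ) {U : ℝ → ℝ}
    (hU : IsTestFunctionOffZero U) :
    ∃ C : ℝ, 0 < C ∧ ∀ a b X : ℝ, 1 ≤ X → X ^ ε ≤ |(|a| - |b|)| * √X →
      ‖Ik U (m + 1) a b X‖ ≤ C * X ^ (-A) := by
  obtain ⟨N, hN⟩ := exists_nat_ge ((A + 1) / ε)
  rw [div_le_iff₀' hε] at hN
  obtain ⟨C, hC⟩ := exists_norm_besselOscIntegral_mul_pow_le m N hU.ofReal_mul_comp_sq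
  refine ⟨2 * max C 1, by positivity, fun a b X hX h_gap => ?_⟩
  have hX_pos : 0 < X := one_pos.trans_le hX
  have h_gap' := rpow_le_abs_sub_abs_frequencies h_gap
  have h_osc := hC _ _ ((Real.one_le_rpow hX hε.le).trans h_gap')
  rw [Ik_eq_besselOscIntegral U (m + 1) a b hX_pos, add_tsub_cancel_right]
  set K := besselOscIntegral m (4 * Real.pi * a * √X) (4 * Real.pi * b * √X)
    (fun t => ((t * U (t ^ 2) : ℝ) : ℂ))
  calc ‖2 * (X : ℂ) * K‖ = 2 * (‖K‖ * X ^ (A + 1)) * X ^ (-A) := by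
        rw [Real.rpow_add_one hX_pos.ne', Real.rpow_neg hX_pos.le, norm_mul, norm_mul,
          Complex.norm_ofNat, Complex.norm_real, Real.norm_of_nonneg hX_pos.le]
        field_simp
    _ ≤ 2 * max C 1 * X ^ (-A) := by
        gcongr
        refine le_max_of_le_left (le_trans ?_ h_osc)
        gcongr
        exact rpow_le_pow_of_rpow_le hX hN h_gap'

/-- Off-diagonal decay of the Bessel integral: for `k ≥ 1`, a fixed smooth `U`
supported in `[1,2]`, `ε > 0` and `A ≥ 0`, if `b²X > 1` and `|a−b|√X ≥ X^ε`
then `I_k(a,b;X) ≪ X^{−A}`. -/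
theorem stmt6 (ε A : ℝ) (hε : 0 < ε) (hA : 0 ≤ A) (k : ℕ) (hk : 1 ≤ k)
    (U : ℝ → ℝ) (hU : ContDiff ℝ (⊤ : ℕ∞) U) (hsupp : Function.support U ⊆ Set.Icc 1 2) :
    ∃ C : ℝ, 0 < C ∧
      ∀ a b X : ℝ, 0 < a → 0 < b → 1 < X → 1 < b ^ 2 * X →
        X ^ ε ≤ |a - b| * Real.sqrt X →
        ‖Ik U k a b X‖ ≤ C * X ^ (-A) := by
  obtain ⟨m, rfl⟩ := Nat.exists_eq_add_of_le' hk
  obtain ⟨C, hC_pos, hC⟩ := stmt6_general hε A m (.of_support_subset_Icc hU one_pos hsupp)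
  exact ⟨C, hC_pos, fun a b X ha hb hX _ h_gap =>
    hC a b X hX.le (by rwa [abs_of_pos ha, abs_of_pos hb])⟩
end

section
/- (Bessel δ-method.) Let ε > 0, let A ≥ 0, let k ≥ 1 be an integer, and let U : ℝ → ℝ be a fixed smooth nonnegative function compactly supported in [1,2] and not identically zero; set C_U = (1+i)/Ũ(3/4). Let p be a prime and let N, X > 1 satisfy X > p²/N and X^{1−ε} > N. Then for all integers r, n with N ≤ r, n ≤ 2N, one has (2π C_U r^{1/4} / (i^k p^{1/2} X^{3/4})) · (1/p) Σ_{a mod p} e(a(n−r)/p) · I_k(√r/p, √n/p; X) = δ(r=n)·(1 + E₁) + E₂, where |E₁| ≤ C₁·p/√(NX) with C₁ depending only on k and U, and |E₂| ≤ C₂·X^{−A} with C₂ depending only on k, U, A and ε. Here δ(r=n) equals 1 if r = n and 0 otherwise, and the sum over a runs over a complete set of residues modulo p. -/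
/-- The Mellin transform `Ũ(s) = ∫_0^∞ U(x) x^{s−1} dx` (for real `s`). -/
noncomputable def mellinU (U : ℝ → ℝ) (s : ℝ) : ℝ :=
  ∫ x in Set.Ioi (0 : ℝ), U x * x ^ (s - 1)

/-!
Substituting `x = X u²` and writing `J_{k-1}` as the integral of `e^{-iβu cos φ} cos((k-1)φ)` over a
period, `I_k(√r/p, √n/p; X)` becomes `∫ V(u) e^{iαu} ∫ e^{-iβu cos φ} cos((k-1)φ) dφ du` with
`α = 4π√(rX)/p` and `β = 4π√(nX)/p`. The character sum kills every `n ≢ r (mod p)`.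

For `n ≡ r (mod p)` and `n ≠ r`, the Bessel equation rewrites `(α² - β²)` times the integral as
integrals of the same type with new weights, of total size `O(1 + α)`. Since
`|α² - β²| ≥ (4π)² X / p`, each iteration gains `(1 + α)/|α² - β²| ≪ √(N/X) ≪ X^{-ε/2}`.

For `n = r`, integrating over `u` first leaves `∫ cos((k-1)φ) V̂(b(1 - cos φ)) dφ` with
`b = α/(2π)` and `V̂` the inverse Fourier transform of `V`. Laplace's method at `φ = 0` replaces it
by `b^{-1/2} ∫ V̂(y²/2) dy` up to `O(b^{-3/2})`, and that last integral is a Fresnel integral,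
`(1 + i)/√2 · ∫ V(u) u^{-1/2} du = (1 + i)/√2 · Ũ(3/4)`.
-/

section BesselDeltaMethod

open Real Set Filter Topology MeasureTheory Complex
open scoped FourierTransform SchwartzMap ContDiff

/-- The `j`-th derivative of `x ↦ ∫ cos(mφ) e^{-ix cos φ} dφ = 2π i⁻ᵐ J_m(x)`, differentiated under
the integral sign. -/
noncomputable def besselIntegral (m j : ℕ) (x : ℝ) : ℂ :=
  ∫ φ in (-π)..π, (-(Real.cos φ * I)) ^ j * (Real.cos (m * φ) * cexp (-(x * Real.cos φ) * I))

lemma norm_besselIntegral_zero_le (m : ℕ) (x : ℝ) : ‖besselIntegral m 0 x‖ ≤ 2 * π := by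
  have hbound : ∀ φ ∈ uIoc (-π) π, ‖(-(Real.cos φ * I)) ^ 0 *
      (Real.cos (m * φ) * cexp (-(x * Real.cos φ) * I))‖ ≤ 1 := fun φ _ => by
    have hexp : ‖cexp (-(x * Real.cos φ) * I)‖ = 1 := by
      exact_mod_cast norm_exp_ofReal_mul_I (-(x * Real.cos φ))
    rw [pow_zero, one_mul, norm_mul, hexp, mul_one, norm_real]
    exact Real.abs_cos_le_one _
  refine (intervalIntegral.norm_integral_le_of_norm_le_const hbound).trans_eq ?_
  rw [one_mul, sub_neg_eq_add, abs_of_pos (by positivity), two_mul]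

lemma hasDerivAt_besselIntegral (m j : ℕ) (x : ℝ) :
    HasDerivAt (besselIntegral m j) (besselIntegral m (j + 1) x) x := by
  refine (intervalIntegral.hasDerivAt_integral_of_dominated_loc_of_deriv_le (μ := volume)
    (F := fun (x φ : ℝ) => (-(Real.cos φ * I)) ^ j *
      (Real.cos (m * φ) * cexp (-(x * Real.cos φ) * I)))
    (F' := fun (x φ : ℝ) => (-(Real.cos φ * I)) ^ (j + 1) *
      (Real.cos (m * φ) * cexp (-(x * Real.cos φ) * I)))
    (bound := fun _ => 1) univ_mem
    (.of_forall fun y => (by fun_prop : Continuous _).aestronglyMeasurable)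
    ((by fun_prop : Continuous _).intervalIntegrable _ _)
    (by fun_prop : Continuous _).aestronglyMeasurable
    (.of_forall fun φ _ y _ => ?_) intervalIntegrable_const (.of_forall fun φ _ y _ => ?_)).2
  · have hexp : ‖cexp (-(y * Real.cos φ) * I)‖ = 1 := by
      exact_mod_cast norm_exp_ofReal_mul_I (-(y * Real.cos φ))
    rw [norm_mul, norm_pow, norm_neg, norm_mul, norm_I, mul_one, norm_mul, hexp, mul_one,
      norm_real, norm_real]
    exact mul_le_one₀ (pow_le_one₀ (norm_nonneg _) (Real.abs_cos_le_one φ)) (norm_nonneg _)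
      (Real.abs_cos_le_one _)
  · have hphase : HasDerivAt (fun y : ℝ => -((y : ℂ) * Real.cos φ) * I) (-(Real.cos φ * I)) y := by
      simpa using (((hasDerivAt_id y).ofReal_comp.mul_const (Real.cos φ : ℂ)).neg.mul_const I)
    refine ((hphase.cexp.const_mul _).const_mul _).congr_deriv ?_
    ring

@[fun_prop]
lemma continuous_besselIntegral (m j : ℕ) : Continuous (besselIntegral m j) :=
  continuous_iff_continuousAt.2 fun x => (hasDerivAt_besselIntegral m j x).continuousAt

-- The integrand of the left-hand side is `d/dφ [-(m sin mφ + i x sin φ cos mφ) e^{-ix cos φ}]`.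
lemma besselIntegral_ode (m : ℕ) (x : ℝ) :
    (x : ℂ) ^ 2 * besselIntegral m 2 x + x * besselIntegral m 1 x
      + (x ^ 2 - m ^ 2) * besselIntegral m 0 x = 0 := by
  have hderiv : ∀ φ : ℝ, HasDerivAt (fun φ : ℝ =>
      -(m * Complex.sin (m * φ) + I * x * (Complex.sin φ * Complex.cos (m * φ)))
        * cexp (-(x * Complex.cos φ) * I))
      ((x : ℂ) ^ 2 * ((-(Real.cos φ * I)) ^ 2 *
          (Real.cos (m * φ) * cexp (-(x * Real.cos φ) * I)))
        + x * ((-(Real.cos φ * I)) ^ 1 * (Real.cos (m * φ) * cexp (-(x * Real.cos φ) * I)))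
        + (x ^ 2 - m ^ 2) * ((-(Real.cos φ * I)) ^ 0 *
          (Real.cos (m * φ) * cexp (-(x * Real.cos φ) * I)))) φ := fun φ => by
    have hlin : HasDerivAt (fun z : ℂ => m * z) m (φ : ℂ) := by
      simpa using (hasDerivAt_id (φ : ℂ)).const_mul (m : ℂ)
    have h := (((hlin.csin.const_mul (m : ℂ)).add
      (((Complex.hasDerivAt_sin φ).mul hlin.ccos).const_mul (I * x))).neg.mul
      (((Complex.hasDerivAt_cos φ).const_mul (x : ℂ)).neg.mul_const I).cexp).comp_ofReal
    refine h.congr_deriv ?_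
    push_cast
    simp only [Pi.add_apply, Pi.neg_apply, Pi.mul_apply]
    linear_combination (Complex.cos (m * φ) * cexp (-(x * Complex.cos φ) * I) * x ^ 2
      * (-Complex.sin φ ^ 2 - Complex.cos φ ^ 2)) * I_sq
      + x ^ 2 * Complex.cos (m * φ) * cexp (-(x * Complex.cos φ) * I)
        * Complex.sin_sq_add_cos_sq φ
  have hint : ∀ j : ℕ, IntervalIntegrable (fun φ : ℝ => (-(Real.cos φ * I)) ^ j *
      (Real.cos (m * φ) * cexp (-(x * Real.cos φ) * I))) volume (-π) π := fun j =>
    (by fun_prop : Continuous _).intervalIntegrable _ _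
  simp only [besselIntegral]
  rw [← intervalIntegral.integral_const_mul, ← intervalIntegral.integral_const_mul,
    ← intervalIntegral.integral_const_mul,
    ← intervalIntegral.integral_add ((hint 2).const_mul _) ((hint 1).const_mul _),
    ← intervalIntegral.integral_add (((hint 2).const_mul _).add ((hint 1).const_mul _))
      ((hint 0).const_mul _),
    intervalIntegral.integral_eq_sub_of_hasDerivAt (fun φ _ => hderiv φ)
      (((hint 2).const_mul _).add ((hint 1).const_mul _) |>.add ((hint 0).const_mul _))]
  simp [Complex.sin_nat_mul_pi]

lemma besselIntegral_zero_eq_integral_exp (m : ℕ) (x : ℝ) :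
    besselIntegral m 0 x =
      ∫ φ in (-π)..π, cexp (m * φ * I) * cexp (-(x * Real.cos φ) * I) := by
  have hcont : Continuous fun φ : ℝ => cexp (m * φ * I) * cexp (-(x * Real.cos φ) * I) := by
    fun_prop
  have hrefl := intervalIntegral.integral_comp_neg (a := -π) (b := π)
    fun φ : ℝ => cexp (m * φ * I) * cexp (-(x * Real.cos φ) * I)
  rw [neg_neg] at hrefl
  rw [← add_halves (∫ φ in (-π)..π, cexp (m * φ * I) * cexp (-(x * Real.cos φ) * I))]
  nth_rw 1 [← hrefl]
  rw [← add_div, ← intervalIntegral.integral_add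
    ((by fun_prop : Continuous _).intervalIntegrable _ _) (hcont.intervalIntegrable _ _),
    ← intervalIntegral.integral_div]
  refine intervalIntegral.integral_congr fun φ _ => ?_
  simp only [pow_zero, one_mul, Real.cos_neg, ofReal_neg, ofReal_cos, Complex.cos]
  push_cast
  ring_nf

lemma integral_exp_int_mul (n : ℤ) :
    ∫ φ in (-π)..π, cexp (n * φ * I) = if n = 0 then 2 * (π : ℂ) else 0 := by
  split_ifs with hn
  · simp [hn, two_mul]
  · have hc : (n : ℂ) * I ≠ 0 := mul_ne_zero (by exact_mod_cast hn) I_ne_zero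
    simp_rw [mul_right_comm (n : ℂ) _ I]
    rw [integral_exp_mul_complex hc, div_eq_zero_iff, sub_eq_zero, exp_eq_exp_iff_exists_int]
    exact .inl ⟨n, by push_cast; ring⟩

lemma summable_norm_pow_div_factorial (z : ℂ) :
    Summable fun n : ℕ => ‖z ^ n / (n.factorial : ℂ)‖ := by
  simpa only [norm_div, norm_pow, Complex.norm_natCast] using Real.summable_pow_div_factorial ‖z‖

lemma hasSum_exp_mul_exp (z w : ℂ) :
    HasSum (fun q : ℕ × ℕ => z ^ q.1 / (q.1.factorial : ℂ) * (w ^ q.2 / (q.2.factorial : ℂ)))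
      (cexp z * cexp w) := by
  have hexp (z : ℂ) : HasSum (fun n : ℕ => z ^ n / (n.factorial : ℂ)) (cexp z) := by
    simpa only [exp_eq_exp_ℂ] using NormedSpace.expSeries_div_hasSum_exp z
  exact HasSum.mul (f := fun n : ℕ => z ^ n / (n.factorial : ℂ))
    (g := fun n : ℕ => w ^ n / (n.factorial : ℂ)) (hexp z) (hexp w)
    (summable_mul_of_summable_norm (f := fun n : ℕ => z ^ n / (n.factorial : ℂ))
      (g := fun n : ℕ => w ^ n / (n.factorial : ℂ))
      (summable_norm_pow_div_factorial z) (summable_norm_pow_div_factorial w))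

-- `e^{-ix cos φ} = exp(z e^{iφ}) exp(z e^{-iφ})` with `z = -ix/2`; expand both factors.
lemma hasSum_exp_mul_exp_neg_cos (m : ℕ) (x φ : ℝ) :
    HasSum (fun q : ℕ × ℕ => (-(x / 2 * I)) ^ q.1 / (q.1.factorial : ℂ) *
      ((-(x / 2 * I)) ^ q.2 / (q.2.factorial : ℂ)) * cexp (((m : ℤ) + q.1 - q.2 : ℤ) * φ * I))
      (cexp (m * φ * I) * cexp (-(x * Real.cos φ) * I)) := by
  set z : ℂ := -(x / 2 * I) with hz
  have hvalue : cexp (-(x * Real.cos φ) * I)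
      = cexp (z * cexp (φ * I)) * cexp (z * cexp (-φ * I)) := by
    rw [← Complex.exp_add, hz, ofReal_cos, Complex.cos]
    ring_nf
  have hterm (q : ℕ × ℕ) : z ^ q.1 / (q.1.factorial : ℂ) * (z ^ q.2 / (q.2.factorial : ℂ)) *
        cexp (((m : ℤ) + q.1 - q.2 : ℤ) * φ * I)
      = cexp (m * φ * I) * ((z * cexp (φ * I)) ^ q.1 / (q.1.factorial : ℂ) *
        ((z * cexp (-φ * I)) ^ q.2 / (q.2.factorial : ℂ))) := by
    simp only [mul_pow, ← Complex.exp_nat_mul]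
    rw [show (((m : ℤ) + q.1 - q.2 : ℤ) : ℂ) * φ * I
      = m * φ * I + q.1 * (φ * I) + q.2 * (-φ * I) by push_cast; ring,
      Complex.exp_add, Complex.exp_add]
    ring
  simp_rw [hterm, hvalue]
  exact (hasSum_exp_mul_exp _ _).mul_left _

lemma hasSum_besselIntegral (m : ℕ) (x : ℝ) :
    HasSum (fun q : ℕ × ℕ => (-(x / 2 * I)) ^ q.1 / (q.1.factorial : ℂ) *
      ((-(x / 2 * I)) ^ q.2 / (q.2.factorial : ℂ)) *
        if (m : ℤ) + q.1 - q.2 = 0 then 2 * (π : ℂ) else 0) (besselIntegral m 0 x) := by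
  set z : ℂ := -(x / 2 * I)
  have hsummable : Summable fun q : ℕ × ℕ =>
      ‖z ^ q.1 / (q.1.factorial : ℂ) * (z ^ q.2 / (q.2.factorial : ℂ))‖ :=
    Summable.mul_norm (f := fun n : ℕ => z ^ n / (n.factorial : ℂ))
      (g := fun n : ℕ => z ^ n / (n.factorial : ℂ))
      (summable_norm_pow_div_factorial z) (summable_norm_pow_div_factorial z)
  simp_rw [← integral_exp_int_mul, ← intervalIntegral.integral_const_mul]
  rw [besselIntegral_zero_eq_integral_exp]
  refine intervalIntegral.hasSum_integral_of_dominated_convergence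
    (fun q _ => ‖z ^ q.1 / (q.1.factorial : ℂ) * (z ^ q.2 / (q.2.factorial : ℂ))‖)
    (fun q => (by fun_prop : Continuous _).aestronglyMeasurable)
    (fun q => .of_forall fun φ _ => ?_) (.of_forall fun φ _ => hsummable)
    intervalIntegrable_const (.of_forall fun φ _ => hasSum_exp_mul_exp_neg_cos m x φ)
  have hexp : ‖cexp (((m : ℤ) + q.1 - q.2 : ℤ) * φ * I)‖ = 1 := by
    exact_mod_cast norm_exp_ofReal_mul_I (((m : ℤ) + q.1 - q.2 : ℤ) * φ)
  rw [norm_mul, hexp, mul_one]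

lemma besselJ_eq_besselIntegral (m : ℕ) (x : ℝ) :
    (besselJ m x : ℂ) = I ^ m / (2 * π) * besselIntegral m 0 x := by
  have hinj : Function.Injective fun n : ℕ => (n, m + n) := fun _ _ h => congrArg Prod.fst h
  have hsum := hasSum_besselIntegral m x
  rw [← hinj.hasSum_iff] at hsum
  · rw [besselJ, ofReal_tsum, ← (hsum.mul_left (I ^ m / (2 * (π : ℂ)))).tsum_eq]
    refine tsum_congr fun n => ?_
    have hpow : (-(x / 2 * I)) ^ n * (-(x / 2 * I)) ^ (m + n) * I ^ m
        = (-1) ^ n * (x / 2 : ℂ) ^ (m + 2 * n) := by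
      have hI : (-I) ^ m * I ^ m = 1 := by rw [← mul_pow, neg_mul, I_mul_I, neg_neg, one_pow]
      rw [← pow_add, ← mul_neg, mul_pow, show n + (m + n) = m + 2 * n by ring, mul_assoc,
        pow_add (-I), mul_right_comm, hI, one_mul, pow_mul, neg_sq, I_sq, mul_comm]
    have hπ : (π : ℂ) ≠ 0 := ofReal_ne_zero.2 Real.pi_ne_zero
    have hn : (n.factorial : ℂ) ≠ 0 := Nat.cast_ne_zero.2 n.factorial_ne_zero
    have hmn : ((m + n).factorial : ℂ) ≠ 0 := Nat.cast_ne_zero.2 (m + n).factorial_ne_zero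
    simp only [Function.comp_apply]
    rw [if_pos (by push_cast; ring)]
    push_cast
    rw [← hpow]
    field_simp
  · rintro ⟨i, j⟩ hij
    rw [if_neg, mul_zero]
    exact fun h => hij ⟨i, Prod.ext rfl (by simp only; omega)⟩

/-- Smooth complex weights compactly supported in the open half-line `(0, ∞)`. -/
structure IsPosTestFunction (V : ℝ → ℂ) : Prop where
  contDiff : ContDiff ℝ ∞ V
  hasCompactSupport : HasCompactSupport V
  tsupport_subset : tsupport V ⊆ Ioi 0

namespace IsPosTestFunction

variable {V W F : ℝ → ℂ}

lemma eq_zero_of_nonpos (hV : IsPosTestFunction V) {u : ℝ} (hu : u ≤ 0) : V u = 0 :=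
  image_eq_zero_of_notMem_tsupport fun h => hu.not_gt (hV.tsupport_subset h)

lemma integrable_mul (hV : IsPosTestFunction V) (hF : Continuous F) :
    Integrable fun u => V u * F u :=
  (hV.contDiff.continuous.mul hF).integrable_of_hasCompactSupport hV.hasCompactSupport.mul_right

lemma integrable (hV : IsPosTestFunction V) : Integrable V :=
  hV.contDiff.continuous.integrable_of_hasCompactSupport hV.hasCompactSupport

lemma hasDerivAt (hV : IsPosTestFunction V) (u : ℝ) : HasDerivAt V (deriv V u) u :=
  (hV.contDiff.differentiable (by simp) u).hasDerivAt

protected lemma deriv (hV : IsPosTestFunction V) : IsPosTestFunction (deriv V) where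
  contDiff := (contDiff_infty_iff_deriv.1 hV.contDiff).2
  hasCompactSupport := hV.hasCompactSupport.deriv
  tsupport_subset := tsupport_deriv_subset.trans hV.tsupport_subset

lemma add (hV : IsPosTestFunction V) (hW : IsPosTestFunction W) :
    IsPosTestFunction fun u => V u + W u where
  contDiff := hV.contDiff.add hW.contDiff
  hasCompactSupport := hV.hasCompactSupport.add hW.hasCompactSupport
  tsupport_subset := (tsupport_add V W).trans (union_subset hV.tsupport_subset hW.tsupport_subset)

lemma mul_left (hV : IsPosTestFunction V) (hF : ContDiffOn ℝ ∞ F (Ioi 0)) :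
    IsPosTestFunction fun u => F u * V u where
  contDiff := contDiff_iff_contDiffAt.2 fun u => by
    rcases lt_or_ge 0 u with hu | hu
    · exact (hF.contDiffAt (Ioi_mem_nhds hu)).mul hV.contDiff.contDiffAt
    · have hVu : V =ᶠ[𝓝 u] 0 :=
        notMem_tsupport_iff_eventuallyEq.1 fun h => hu.not_gt (hV.tsupport_subset h)
      refine contDiffAt_const (c := (0 : ℂ)) |>.congr_of_eventuallyEq ?_
      filter_upwards [hVu] with v hv
      rw [hv, Pi.zero_apply, mul_zero]
  hasCompactSupport := hV.hasCompactSupport.mul_left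
  tsupport_subset := tsupport_mul_subset_right.trans hV.tsupport_subset

end IsPosTestFunction

/-- The model oscillatory integral: `I_k(a, b; X)` is a multiple of it after substituting
`x = X u²`, with frequencies `α = 4πa√X`, `β = 4πb√X`. -/
noncomputable def besselOsc (m : ℕ) (V : ℝ → ℂ) (α β : ℝ) : ℂ :=
  ∫ u : ℝ, V u * (cexp (α * u * I) * besselIntegral m 0 (β * u))

/-- The weight `V/u - V'` created by integrating the Bessel equation by parts against `V`. -/
noncomputable def ibpWeight (V : ℝ → ℂ) (u : ℝ) : ℂ :=
  (u : ℂ)⁻¹ * V u + -1 * deriv V u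

/-- The weight multiplying `iα` after one integration by parts of `besselOsc`. -/
noncomputable def ibpWeightOne (V : ℝ → ℂ) (u : ℝ) : ℂ :=
  ibpWeight V u + -1 * deriv V u

/-- The weight not multiplied by the frequency after one integration by parts of `besselOsc`. -/
noncomputable def ibpWeightZero (m : ℕ) (V : ℝ → ℂ) (u : ℝ) : ℂ :=
  (m : ℂ) ^ 2 * (u : ℂ)⁻¹ ^ 2 * V u + deriv (ibpWeight V) u

lemma contDiffOn_ofReal_inv : ContDiffOn ℝ ∞ (fun u : ℝ => (u : ℂ)⁻¹) (Ioi 0) :=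
  ofRealCLM.contDiff.contDiffOn.inv fun _ hu => ofReal_ne_zero.2 (ne_of_gt hu)

namespace IsPosTestFunction

variable {V : ℝ → ℂ}

protected lemma ibpWeight (hV : IsPosTestFunction V) : IsPosTestFunction (ibpWeight V) :=
  (hV.mul_left contDiffOn_ofReal_inv).add (hV.deriv.mul_left contDiffOn_const)

protected lemma ibpWeightOne (hV : IsPosTestFunction V) : IsPosTestFunction (ibpWeightOne V) :=
  hV.ibpWeight.add (hV.deriv.mul_left contDiffOn_const)

protected lemma ibpWeightZero (hV : IsPosTestFunction V) (m : ℕ) :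
    IsPosTestFunction (ibpWeightZero m V) :=
  (hV.mul_left (contDiffOn_const.mul (contDiffOn_ofReal_inv.pow 2))).add hV.ibpWeight.deriv

end IsPosTestFunction

section OffDiagonal

variable {V : ℝ → ℂ}

lemma norm_besselOsc_le (hV : IsPosTestFunction V) (m : ℕ) (α β : ℝ) :
    ‖besselOsc m V α β‖ ≤ 2 * π * ∫ u, ‖V u‖ := by
  rw [← integral_const_mul]
  refine norm_integral_le_of_norm_le (hV.integrable.norm.const_mul _) (.of_forall fun u => ?_)
  have hexp : ‖cexp (α * u * I)‖ = 1 := by exact_mod_cast norm_exp_ofReal_mul_I (α * u)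
  rw [norm_mul, norm_mul, hexp, one_mul, mul_comm]
  gcongr
  exact norm_besselIntegral_zero_le m _

-- Bessel's equation eliminates the second derivative of `u ↦ besselIntegral m 0 (β * u)`.
lemma hasDerivAt_besselOsc_primitive (hV : IsPosTestFunction V) (m : ℕ) (α β u : ℝ) :
    HasDerivAt (fun u : ℝ => V u * (cexp (α * u * I) * (β * besselIntegral m 1 (β * u)))
        + (ibpWeight V u - I * α * V u) * (cexp (α * u * I) * besselIntegral m 0 (β * u)))
      ((α ^ 2 - β ^ 2) * (V u * (cexp (α * u * I) * besselIntegral m 0 (β * u)))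
        + ibpWeightZero m V u * (cexp (α * u * I) * besselIntegral m 0 (β * u))
        + I * α * (ibpWeightOne V u * (cexp (α * u * I) * besselIntegral m 0 (β * u)))) u := by
  have hbessel (j : ℕ) : HasDerivAt (fun u : ℝ => besselIntegral m j (β * u))
      (β * besselIntegral m (j + 1) (β * u)) u := by
    simpa [Function.comp_def] using (hasDerivAt_besselIntegral m j (β * u)).scomp u
      ((hasDerivAt_id u).const_mul β)
  have hexp : HasDerivAt (fun u : ℝ => cexp (α * u * I)) (cexp (α * u * I) * (α * I)) u := by
    simpa using (((hasDerivAt_id u).ofReal_comp.const_mul (α : ℂ)).mul_const I).cexp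
  have hode : V u * (β ^ 2 * besselIntegral m 2 (β * u))
      = -((u : ℂ)⁻¹ * V u * (β * besselIntegral m 1 (β * u)))
        + ((m : ℂ) ^ 2 * (u : ℂ)⁻¹ ^ 2 - β ^ 2) * V u * besselIntegral m 0 (β * u) := by
    rcases eq_or_ne u 0 with rfl | hu
    · simp [hV.eq_zero_of_nonpos le_rfl]
    · have hu' : (u : ℂ) ≠ 0 := ofReal_ne_zero.2 hu
      have h := besselIntegral_ode m (β * u)
      push_cast at h
      field_simp
      linear_combination V u * h
  refine (((hV.hasDerivAt u).mul (hexp.mul ((hbessel 1).const_mul (β : ℂ)))).add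
    (((hV.ibpWeight.hasDerivAt u).sub ((hV.hasDerivAt u).const_mul (I * α))).mul
      (hexp.mul (hbessel 0)))).congr_deriv ?_
  simp only [Pi.mul_apply, Pi.sub_apply, ibpWeightZero, ibpWeightOne]
  simp only [ibpWeight]
  linear_combination cexp (α * u * I) * hode
    - α ^ 2 * V u * cexp (α * u * I) * besselIntegral m 0 (β * u) * I_sq

lemma besselOsc_integration_by_parts (hV : IsPosTestFunction V) (m : ℕ) (α β : ℝ) :
    ((α : ℂ) ^ 2 - β ^ 2) * besselOsc m V α β
      = -(besselOsc m (ibpWeightZero m V) α β + I * α * besselOsc m (ibpWeightOne V) α β) := by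
  have hosc : Continuous fun u : ℝ => cexp (α * u * I) * besselIntegral m 0 (β * u) := by fun_prop
  have hmain := (hV.integrable_mul hosc).const_mul ((α : ℂ) ^ 2 - β ^ 2)
  have hzero := (hV.ibpWeightZero m).integrable_mul hosc
  have hone := (hV.ibpWeightOne.integrable_mul hosc).const_mul (I * α)
  have hprimitive : Integrable fun u : ℝ =>
      V u * (cexp (α * u * I) * (β * besselIntegral m 1 (β * u)))
        + (ibpWeight V u - I * α * V u) * (cexp (α * u * I) * besselIntegral m 0 (β * u)) := by
    simp_rw [sub_mul, mul_assoc (I * (α : ℂ))]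
    exact (hV.integrable_mul (by fun_prop)).add
      ((hV.ibpWeight.integrable_mul hosc).sub ((hV.integrable_mul hosc).const_mul _))
  have h := integral_eq_zero_of_hasDerivAt_of_integrable
    (hasDerivAt_besselOsc_primitive hV m α β) ((hmain.fun_add hzero).fun_add hone) hprimitive
  rw [integral_add (hmain.fun_add hzero) hone, integral_add hmain hzero, integral_const_mul,
    integral_const_mul] at h
  rw [eq_neg_iff_add_eq_zero, ← add_assoc]
  exact h

theorem exists_norm_besselOsc_le_pow (m K : ℕ) (hV : IsPosTestFunction V) :
    ∃ C : ℝ, 0 ≤ C ∧ ∀ α β : ℝ, α ^ 2 ≠ β ^ 2 →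
      ‖besselOsc m V α β‖ ≤ C * ((1 + |α|) / |α ^ 2 - β ^ 2|) ^ K := by
  induction K generalizing V with
  | zero =>
    exact ⟨2 * π * ∫ u, ‖V u‖, by positivity, fun α β _ => by
      simpa using norm_besselOsc_le hV m α β⟩
  | succ K ih =>
    obtain ⟨C₀, hC₀, hzero⟩ := ih (hV.ibpWeightZero m)
    obtain ⟨C₁, hC₁, hone⟩ := ih hV.ibpWeightOne
    refine ⟨C₀ + C₁, by positivity, fun α β hne => ?_⟩
    have hpos : 0 < |α ^ 2 - β ^ 2| := abs_pos.2 (sub_ne_zero.2 hne)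
    set Q := ((1 + |α|) / |α ^ 2 - β ^ 2|) ^ K with hQ
    have hQ0 : 0 ≤ Q := by positivity
    have hparts : |α ^ 2 - β ^ 2| * ‖besselOsc m V α β‖ ≤ (1 + |α|) * ((C₀ + C₁) * Q) := by
      calc |α ^ 2 - β ^ 2| * ‖besselOsc m V α β‖
          = ‖besselOsc m (ibpWeightZero m V) α β + I * α * besselOsc m (ibpWeightOne V) α β‖ := by
            rw [← norm_neg (_ + _), ← besselOsc_integration_by_parts hV, norm_mul,
              ← Real.norm_eq_abs, ← norm_real]
            push_cast
            rfl
        _ ≤ C₀ * Q + |α| * (C₁ * Q) := by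
            refine (norm_add_le _ _).trans (add_le_add (hzero α β hne) ?_)
            rw [norm_mul, norm_mul, norm_I, one_mul, norm_real, Real.norm_eq_abs]
            gcongr
            exact hone α β hne
        _ ≤ (1 + |α|) * ((C₀ + C₁) * Q) := by
            nlinarith [mul_nonneg hC₁ hQ0, mul_nonneg (abs_nonneg α) (mul_nonneg hC₀ hQ0)]
    calc ‖besselOsc m V α β‖ ≤ (1 + |α|) * ((C₀ + C₁) * Q) / |α ^ 2 - β ^ 2| :=
          (le_div_iff₀' hpos).2 hparts
      _ = (C₀ + C₁) * ((1 + |α|) / |α ^ 2 - β ^ 2|) ^ (K + 1) := by rw [pow_succ _ K, ← hQ]; ring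

end OffDiagonal

section Laplace

lemma exists_norm_le_div_one_add_abs_pow (F : 𝓢(ℝ, ℂ)) (k : ℕ) :
    ∃ C : ℝ, 0 ≤ C ∧ ∀ x, ‖F x‖ ≤ C / (1 + |x|) ^ k := by
  refine ⟨2 ^ k * ((Finset.Iic (k, 0)).sup fun n => SchwartzMap.seminorm ℝ n.1 n.2) F,
    by positivity, fun x => ?_⟩
  rw [le_div_iff₀' (by positivity)]
  simpa using SchwartzMap.one_add_le_sup_seminorm_apply (𝕜 := ℝ) (m := (k, 0)) le_rfl le_rfl F x

lemma sq_div_five_le_one_sub_cos {φ : ℝ} (hφ : |φ| ≤ π) : φ ^ 2 / 5 ≤ 1 - Real.cos φ := by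
  have hpi : (1 : ℝ) / 5 ≤ 2 / π ^ 2 := by
    rw [div_le_div_iff₀ (by norm_num) (by positivity)]
    nlinarith [Real.pi_lt_d2, Real.pi_pos]
  nlinarith [Real.cos_le_one_sub_mul_cos_sq hφ, sq_nonneg φ]

lemma sq_div_two_sub_one_sub_cos_le (φ : ℝ) : φ ^ 2 / 2 - (1 - Real.cos φ) ≤ φ ^ 4 := by
  rcases le_or_gt |φ| 1 with h | h
  · have hcos := (abs_le.1 (Real.cos_bound h)).2
    rw [Even.pow_abs (by decide)] at hcos
    nlinarith [show 0 ≤ φ ^ 4 by positivity]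
  · have hφ : 1 < φ ^ 2 := by rw [← sq_abs]; nlinarith
    nlinarith [Real.cos_le_one φ]

lemma norm_cos_sub_one_le (x : ℝ) : ‖(Real.cos x : ℂ) - 1‖ ≤ x ^ 2 := by
  rw [← ofReal_one, ← ofReal_sub, norm_real, Real.norm_eq_abs, abs_le]
  constructor <;> nlinarith [Real.one_sub_sq_div_two_le_cos (x := x), Real.cos_le_one x]

variable {F : ℝ → ℂ} {C C₀ C₁ b φ : ℝ}

lemma norm_le_div_of_norm_le_div_one_add_abs {k : ℕ} (hF : ∀ x, ‖F x‖ ≤ C / (1 + |x|) ^ k)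
    {t x : ℝ} (ht : 0 ≤ t) (htx : t ≤ x) : ‖F x‖ ≤ C / (1 + t) ^ k := by
  have hC : 0 ≤ C := by simpa using (norm_nonneg _).trans (hF 0)
  refine (hF x).trans ?_
  rw [abs_of_nonneg (ht.trans htx)]
  gcongr

lemma norm_comp_one_sub_cos_sub_comp_sq_le (hF : Differentiable ℝ F)
    (hF' : ∀ x, ‖deriv F x‖ ≤ C / (1 + |x|) ^ 3) (hb : 0 ≤ b) (hφ : |φ| ≤ π) :
    ‖F (b * (1 - Real.cos φ)) - F (b * (φ ^ 2 / 2))‖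
      ≤ 5 * C * (φ ^ 2 / (1 + b * φ ^ 2 / 5) ^ 2) := by
  set t := b * φ ^ 2 / 5 with ht
  have ht0 : 0 ≤ t := by positivity
  have hC : 0 ≤ C := by simpa using (norm_nonneg _).trans (hF' 0)
  have hcos : t ≤ b * (1 - Real.cos φ) := by
    rw [ht, mul_div_assoc]
    exact mul_le_mul_of_nonneg_left (sq_div_five_le_one_sub_cos hφ) hb
  have hsq : t ≤ b * (φ ^ 2 / 2) := by nlinarith [show 0 ≤ b * φ ^ 2 by positivity]
  have hdist : ‖b * (1 - Real.cos φ) - b * (φ ^ 2 / 2)‖ ≤ 5 * t * φ ^ 2 := by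
    rw [← mul_sub, norm_mul, Real.norm_eq_abs, Real.norm_eq_abs, abs_of_nonneg hb, abs_sub_comm,
      abs_of_nonneg (by linarith [Real.one_sub_sq_div_two_le_cos (x := φ)])]
    calc b * (φ ^ 2 / 2 - (1 - Real.cos φ)) ≤ b * φ ^ 4 := by
          gcongr
          exact sq_div_two_sub_one_sub_cos_le φ
      _ = 5 * t * φ ^ 2 := by rw [ht]; ring
  calc ‖F (b * (1 - Real.cos φ)) - F (b * (φ ^ 2 / 2))‖
      ≤ C / (1 + t) ^ 3 * ‖b * (1 - Real.cos φ) - b * (φ ^ 2 / 2)‖ :=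
        (convex_Ici t).norm_image_sub_le_of_norm_deriv_le (fun x _ => hF x)
          (fun x hx => norm_le_div_of_norm_le_div_one_add_abs hF' ht0 hx) hsq hcos
    _ ≤ C / (1 + t) ^ 3 * (5 * t * φ ^ 2) := by gcongr
    _ = 5 * C * (φ ^ 2 / (1 + t) ^ 2) * (t / (1 + t)) := by field_simp
    _ ≤ 5 * C * (φ ^ 2 / (1 + t) ^ 2) :=
        mul_le_of_le_one_right (by positivity) ((div_le_one (by positivity)).2 (by linarith))

lemma norm_cos_mul_comp_one_sub_cos_sub_comp_sq_le (m : ℕ) (hF : Differentiable ℝ F)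
    (hF₀ : ∀ x, ‖F x‖ ≤ C₀ / (1 + |x|) ^ 2) (hF₁ : ∀ x, ‖deriv F x‖ ≤ C₁ / (1 + |x|) ^ 3)
    (hb : 0 ≤ b) (hφ : |φ| ≤ π) :
    ‖Real.cos (m * φ) * F (b * (1 - Real.cos φ)) - F (b * (φ ^ 2 / 2))‖
      ≤ (m ^ 2 * C₀ + 5 * C₁) * (φ ^ 2 / (1 + b * φ ^ 2 / 5) ^ 2) := by
  have hcos : b * φ ^ 2 / 5 ≤ b * (1 - Real.cos φ) := by
    rw [mul_div_assoc]
    exact mul_le_mul_of_nonneg_left (sq_div_five_le_one_sub_cos hφ) hb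
  calc ‖Real.cos (m * φ) * F (b * (1 - Real.cos φ)) - F (b * (φ ^ 2 / 2))‖
      = ‖((Real.cos (m * φ) : ℂ) - 1) * F (b * (1 - Real.cos φ))
          + (F (b * (1 - Real.cos φ)) - F (b * (φ ^ 2 / 2)))‖ := by congr 1; ring
    _ ≤ (m * φ) ^ 2 * (C₀ / (1 + b * φ ^ 2 / 5) ^ 2)
          + 5 * C₁ * (φ ^ 2 / (1 + b * φ ^ 2 / 5) ^ 2) := by
        refine (norm_add_le _ _).trans (add_le_add ?_
          (norm_comp_one_sub_cos_sub_comp_sq_le hF hF₁ hb hφ))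
        rw [norm_mul]
        exact mul_le_mul (norm_cos_sub_one_le _)
          (norm_le_div_of_norm_le_div_one_add_abs hF₀ (by positivity) hcos)
          (norm_nonneg _) (by positivity)
    _ = (m ^ 2 * C₀ + 5 * C₁) * (φ ^ 2 / (1 + b * φ ^ 2 / 5) ^ 2) := by ring

lemma norm_comp_sq_le_of_pi_le_abs (hF : ∀ x, ‖F x‖ ≤ C / (1 + |x|) ^ 2) (hb : 0 ≤ b)
    (hφ : π ≤ |φ|) :
    ‖F (b * (φ ^ 2 / 2))‖ ≤ C * (φ ^ 2 / (1 + b * φ ^ 2 / 5) ^ 2) := by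
  have hC : 0 ≤ C := by simpa using (norm_nonneg _).trans (hF 0)
  have hsq : 1 ≤ φ ^ 2 := by
    rw [← sq_abs]
    nlinarith [Real.pi_gt_three]
  have hle : b * φ ^ 2 / 5 ≤ b * (φ ^ 2 / 2) := by nlinarith [show 0 ≤ b * φ ^ 2 by positivity]
  refine (norm_le_div_of_norm_le_div_one_add_abs hF (by positivity) hle).trans ?_
  rw [← mul_div_assoc]
  gcongr
  exact le_mul_of_one_le_right hC hsq

lemma integrable_sq_div_one_add_sq_div_five_sq :
    Integrable fun y : ℝ => y ^ 2 / (1 + y ^ 2 / 5) ^ 2 := by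
  refine (integrable_inv_one_add_sq.const_mul 25).mono' (Continuous.div (by fun_prop)
    (by fun_prop) fun y => by positivity).aestronglyMeasurable (.of_forall fun y => ?_)
  rw [Real.norm_eq_abs, abs_of_nonneg (by positivity), ← div_eq_mul_inv,
    div_le_div_iff₀ (by positivity) (by positivity)]
  nlinarith [sq_nonneg y, sq_nonneg (y ^ 2)]

lemma sq_div_rescale (hb : 0 < b) (φ : ℝ) :
    φ ^ 2 / (1 + b * φ ^ 2 / 5) ^ 2
      = b⁻¹ * ((√b * φ) ^ 2 / (1 + (√b * φ) ^ 2 / 5) ^ 2) := by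
  rw [mul_pow, Real.sq_sqrt hb.le]
  field_simp

lemma integrable_sq_div_rescaled (hb : 0 < b) :
    Integrable fun φ : ℝ => φ ^ 2 / (1 + b * φ ^ 2 / 5) ^ 2 := by
  simp_rw [sq_div_rescale hb]
  exact (integrable_sq_div_one_add_sq_div_five_sq.comp_mul_left'
    (Real.sqrt_pos.2 hb).ne').const_mul _

lemma integral_sq_div_rescaled (hb : 0 < b) :
    ∫ φ : ℝ, φ ^ 2 / (1 + b * φ ^ 2 / 5) ^ 2
      = b⁻¹ * (√b)⁻¹ * ∫ y : ℝ, y ^ 2 / (1 + y ^ 2 / 5) ^ 2 := by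
  simp_rw [sq_div_rescale hb]
  rw [integral_const_mul,
    Measure.integral_comp_mul_left (fun y : ℝ => y ^ 2 / (1 + y ^ 2 / 5) ^ 2) (√b),
    abs_of_pos (by positivity), smul_eq_mul, mul_assoc]

lemma integrable_comp_sq_div_two (F : 𝓢(ℝ, ℂ)) : Integrable fun y : ℝ => F (y ^ 2 / 2) := by
  obtain ⟨C, hC, hF⟩ := exists_norm_le_div_one_add_abs_pow F 1
  refine (integrable_inv_one_add_sq.const_mul (2 * C)).mono'
    (F.continuous.comp (by fun_prop)).aestronglyMeasurable (.of_forall fun y => (hF _).trans ?_)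
  rw [abs_of_nonneg (by positivity), pow_one, ← div_eq_mul_inv,
    div_le_div_iff₀ (by positivity) (by positivity)]
  nlinarith [mul_nonneg hC (sq_nonneg y)]

lemma exists_norm_indicator_cos_mul_sub_le (m : ℕ) (F : 𝓢(ℝ, ℂ)) :
    ∃ C : ℝ, 0 ≤ C ∧ ∀ b : ℝ, 0 ≤ b → ∀ φ : ℝ,
      ‖(Ioc (-π) π).indicator (fun φ => Real.cos (m * φ) * F (b * (1 - Real.cos φ))) φ
        - F (b * (φ ^ 2 / 2))‖ ≤ C * (φ ^ 2 / (1 + b * φ ^ 2 / 5) ^ 2) := by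
  obtain ⟨C₀, hC₀, hF₀⟩ := exists_norm_le_div_one_add_abs_pow F 2
  obtain ⟨C₁, hC₁, hF₁⟩ := exists_norm_le_div_one_add_abs_pow (SchwartzMap.derivCLM ℝ ℂ F) 3
  refine ⟨m ^ 2 * C₀ + 5 * C₁ + C₀, by positivity, fun b hb φ => ?_⟩
  rw [add_mul]
  by_cases hφ : φ ∈ Ioc (-π) π
  · rw [indicator_of_mem hφ]
    exact (norm_cos_mul_comp_one_sub_cos_sub_comp_sq_le m F.differentiable hF₀ hF₁ hb
      (abs_le.2 ⟨hφ.1.le, hφ.2⟩)).trans (le_add_of_nonneg_right (by positivity))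
  · rw [indicator_of_notMem hφ, zero_sub, norm_neg]
    refine (norm_comp_sq_le_of_pi_le_abs hF₀ hb ?_).trans (le_add_of_nonneg_left (by positivity))
    by_contra! hlt
    exact hφ ⟨(abs_lt.1 hlt).1, (abs_lt.1 hlt).2.le⟩

theorem exists_norm_integral_cos_mul_comp_sub_le (m : ℕ) (F : 𝓢(ℝ, ℂ)) :
    ∃ C : ℝ, 0 ≤ C ∧ ∀ b : ℝ, 0 < b →
      ‖(∫ φ in (-π)..π, Real.cos (m * φ) * F (b * (1 - Real.cos φ)))
        - ((√b)⁻¹ : ℝ) * ∫ y : ℝ, F (y ^ 2 / 2)‖ ≤ C * (b⁻¹ * (√b)⁻¹) := by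
  obtain ⟨C, hC, hbound⟩ := exists_norm_indicator_cos_mul_sub_le m F
  refine ⟨C * ∫ y : ℝ, y ^ 2 / (1 + y ^ 2 / 5) ^ 2,
    mul_nonneg hC (integral_nonneg fun y => by positivity), fun b hb => ?_⟩
  have hb' : 0 < √b := Real.sqrt_pos.2 hb
  have hsq (φ : ℝ) : (√b * φ) ^ 2 / 2 = b * (φ ^ 2 / 2) := by
    rw [mul_pow, Real.sq_sqrt hb.le, mul_div_assoc]
  have hgauss : ((√b)⁻¹ : ℝ) * ∫ y : ℝ, F (y ^ 2 / 2) = ∫ φ : ℝ, F (b * (φ ^ 2 / 2)) := by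
    simp_rw [← hsq]
    rw [Measure.integral_comp_mul_left (fun y : ℝ => F (y ^ 2 / 2)), abs_of_pos (by positivity),
      real_smul]
  have hgauss_int : Integrable fun φ : ℝ => F (b * (φ ^ 2 / 2)) := by
    simpa only [hsq] using (integrable_comp_sq_div_two F).comp_mul_left' hb'.ne'
  have hcos_int : IntegrableOn (fun φ => Real.cos (m * φ) * F (b * (1 - Real.cos φ)))
      (Ioc (-π) π) :=
    (((by fun_prop : Continuous fun φ : ℝ => (Real.cos (m * φ) : ℂ)).mul
      (F.continuous.comp (by fun_prop))).continuousOn.integrableOn_compact isCompact_Icc).mono_set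
      Ioc_subset_Icc_self
  rw [intervalIntegral.integral_of_le (by linarith [Real.pi_pos]), hgauss,
    ← integral_indicator measurableSet_Ioc,
    ← integral_sub (hcos_int.integrable_indicator measurableSet_Ioc) hgauss_int]
  refine (norm_integral_le_of_norm_le ((integrable_sq_div_rescaled hb).const_mul C)
    (.of_forall (hbound b hb.le))).trans_eq ?_
  rw [integral_const_mul, integral_sq_div_rescaled hb]
  ring

end Laplace

section Fresnel

variable {V : ℝ → ℂ}

lemma fourierInv_eq_integral_mul_exp (V : ℝ → ℂ) (ξ : ℝ) :
    𝓕⁻ V ξ = ∫ u, V u * cexp (2 * π * u * ξ * I) := by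
  rw [Real.fourierInv_eq']
  refine integral_congr_ae (.of_forall fun u => ?_)
  simp only [RCLike.inner_apply, conj_trivial, smul_eq_mul]
  push_cast
  ring_nf

-- Gaussian damping makes the double integral absolutely convergent.
lemma integral_gaussian_mul_fourierInv_sq (hV : Integrable V) {δ : ℝ} (hδ : 0 < δ) :
    ∫ y : ℝ, cexp (-(π * δ) * y ^ 2) * 𝓕⁻ V (y ^ 2 / 2)
      = ∫ u : ℝ, V u * ((δ - I * u : ℂ)⁻¹) ^ (1 / 2 : ℂ) := by
  have hπ : (π : ℂ) ≠ 0 := ofReal_ne_zero.2 Real.pi_ne_zero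
  have hgauss : Integrable fun y : ℝ => cexp (-(π * δ) * y ^ 2) :=
    integrable_cexp_neg_mul_sq (by simpa using mul_pos Real.pi_pos hδ)
  have hphase (u y : ℝ) : cexp (-(π * (δ - I * u)) * y ^ 2)
      = cexp (-(π * δ) * y ^ 2) * cexp (2 * π * u * (y ^ 2 / 2 : ℝ) * I) := by
    rw [← Complex.exp_add]
    push_cast
    ring_nf
  have hprod : Integrable (Function.uncurry fun y u : ℝ =>
      cexp (-(π * δ) * y ^ 2) * (V u * cexp (2 * π * u * (y ^ 2 / 2 : ℝ) * I)))
      (volume.prod volume) := by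
    refine (hgauss.mul_prod hV).mono ?_ (.of_forall fun z => ?_)
    · exact hgauss.aestronglyMeasurable.comp_fst.mul (hV.aestronglyMeasurable.comp_snd.mul
        (by fun_prop : Continuous _).aestronglyMeasurable)
    · have hexp : ‖cexp (2 * π * z.2 * (z.1 ^ 2 / 2 : ℝ) * I)‖ = 1 := by
        exact_mod_cast norm_exp_ofReal_mul_I (2 * π * z.2 * (z.1 ^ (2 : ℕ) / 2))
      simp only [Function.uncurry_def, norm_mul, hexp, mul_one, le_refl]
  simp_rw [fourierInv_eq_integral_mul_exp, ← integral_const_mul]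
  rw [integral_integral_swap hprod]
  refine integral_congr_ae (.of_forall fun u => ?_)
  have hmoment := integral_gaussian_complex (b := π * (δ - I * u))
    (by simpa using mul_pos Real.pi_pos hδ)
  rw [← div_div, div_self hπ, one_div] at hmoment
  simp_rw [← hmoment, ← integral_const_mul, hphase]
  refine integral_congr_ae (.of_forall fun y => ?_)
  ring

lemma inv_neg_I_mul_cpow_half {u : ℝ} (hu : 0 < u) :
    ((-(I * u) : ℂ)⁻¹) ^ (1 / 2 : ℂ) = (1 + I) / √2 / √u := by
  have hinv : (-(I * u) : ℂ)⁻¹ = (u⁻¹ : ℝ) * I := by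
    rw [inv_neg, mul_inv, inv_I]
    push_cast
    ring
  have hexp : cexp (π / 2 * I * (1 / 2)) = (1 + I) / √2 := by
    rw [show (π : ℂ) / 2 * I * (1 / 2) = ((π / 4 : ℝ) : ℂ) * I by push_cast; ring,
      Complex.exp_mul_I, ← ofReal_cos, ← ofReal_sin, Real.cos_pi_div_four, Real.sin_pi_div_four,
      Real.sqrt_div_self']
    push_cast
    ring
  have hroot : cexp (Real.log u⁻¹ * (1 / 2)) = (√u : ℂ)⁻¹ := by
    rw [← ofReal_inv, ← Real.sqrt_inv, Real.sqrt_eq_rpow, Real.rpow_def_of_pos (inv_pos.2 hu),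
      ofReal_exp]
    push_cast
    rfl
  rw [hinv, cpow_def_of_ne_zero (mul_ne_zero (ofReal_ne_zero.2 (inv_pos.2 hu).ne') I_ne_zero),
    log_ofReal_mul (inv_pos.2 hu) I_ne_zero, log_I, add_mul, Complex.exp_add, hexp, hroot]
  ring

lemma norm_inv_sub_I_mul_cpow_half_le (δ : ℝ) {u : ℝ} (hu : 0 < u) :
    ‖((δ - I * u : ℂ)⁻¹) ^ (1 / 2 : ℂ)‖ ≤ (√u)⁻¹ := by
  have hnorm : u ≤ ‖(δ - I * u : ℂ)‖ := by
    simpa [abs_of_pos hu] using abs_im_le_norm (δ - I * u : ℂ)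
  rw [show (1 / 2 : ℂ) = ((1 / 2 : ℝ) : ℂ) by push_cast; rfl, norm_cpow_real,
    ← Real.sqrt_eq_rpow, norm_inv, Real.sqrt_inv]
  gcongr

lemma tendsto_inv_sub_I_mul_cpow_half {u : ℝ} (hu : 0 < u) :
    Tendsto (fun δ : ℝ => ((δ - I * u : ℂ)⁻¹) ^ (1 / 2 : ℂ)) (𝓝[>] 0)
      (𝓝 ((1 + I) / √2 / √u)) := by
  have hne : ((0 : ℝ) : ℂ) - I * u ≠ 0 := by simp [hu.ne']
  have hslit : (((0 : ℝ) : ℂ) - I * u)⁻¹ ∈ slitPlane := .inr (by simp [hu.ne'])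
  have hcont : ContinuousAt (fun δ : ℝ => ((δ - I * u : ℂ)⁻¹) ^ (1 / 2 : ℂ)) 0 :=
    ContinuousAt.cpow (ContinuousAt.inv₀ (by fun_prop) hne) continuousAt_const hslit
  simpa [← inv_neg_I_mul_cpow_half hu] using hcont.tendsto.mono_left nhdsWithin_le_nhds

lemma tendsto_integral_gaussian_mul {G : ℝ → ℂ} (hG : Integrable G) :
    Tendsto (fun δ : ℝ => ∫ y : ℝ, cexp (-(π * δ) * y ^ 2) * G y) (𝓝[>] 0) (𝓝 (∫ y, G y)) := by
  refine tendsto_integral_filter_of_dominated_convergence (fun y => ‖G y‖)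
    (.of_forall fun δ => (by fun_prop : Continuous _).aestronglyMeasurable.mul
      hG.aestronglyMeasurable) ?_ hG.norm (.of_forall fun y => ?_)
  · filter_upwards [self_mem_nhdsWithin] with δ hδ
    refine .of_forall fun y => ?_
    rw [norm_mul]
    refine mul_le_of_le_one_left (norm_nonneg _) ?_
    have hre : (-(π * δ) * y ^ 2 : ℂ).re = -(π * δ * y ^ 2) := by norm_cast; ring_nf
    have hδ' : 0 < δ := hδ
    rw [Complex.norm_exp, hre, Real.exp_le_one_iff, neg_nonpos]
    positivity
  · have hcont : Continuous fun δ : ℝ => cexp (-(π * δ) * y ^ 2) * G y := by fun_prop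
    simpa using (hcont.tendsto 0).mono_left nhdsWithin_le_nhds

theorem integral_fourierInv_sq_div_two (hV : Integrable V) (hV₀ : ∀ u ≤ 0, V u = 0)
    (hVsqrt : Integrable fun u => V u / √u) (hF : Integrable fun y : ℝ => 𝓕⁻ V (y ^ 2 / 2)) :
    ∫ y : ℝ, 𝓕⁻ V (y ^ 2 / 2) = (1 + I) / √2 * ∫ u, V u / √u := by
  have hkernel : Tendsto (fun δ : ℝ => ∫ u : ℝ, V u * ((δ - I * u : ℂ)⁻¹) ^ (1 / 2 : ℂ))
      (𝓝[>] 0) (𝓝 (∫ u, V u * ((1 + I) / √2 / √u))) := by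
    refine tendsto_integral_filter_of_dominated_convergence (fun u => ‖V u / √u‖)
      (.of_forall fun δ => hV.aestronglyMeasurable.mul
        (by fun_prop : Measurable _).aestronglyMeasurable)
      (.of_forall fun δ => .of_forall fun u => ?_) hVsqrt.norm (.of_forall fun u => ?_)
    · rcases le_or_gt u 0 with hu | hu
      · simp [hV₀ u hu]
      · rw [norm_mul, norm_div, norm_real, Real.norm_eq_abs, abs_of_nonneg (Real.sqrt_nonneg u),
          div_eq_mul_inv]
        exact mul_le_mul_of_nonneg_left (norm_inv_sub_I_mul_cpow_half_le δ hu) (norm_nonneg _)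
    · rcases le_or_gt u 0 with hu | hu
      · simp [hV₀ u hu]
      · exact (tendsto_inv_sub_I_mul_cpow_half hu).const_mul _
  have hdamped := (tendsto_integral_gaussian_mul hF).congr'
    (eventually_mem_nhdsWithin.mono fun δ (hδ : δ ∈ Ioi 0) =>
      integral_gaussian_mul_fourierInv_sq hV hδ)
  rw [tendsto_nhds_unique hdamped hkernel, ← integral_const_mul]
  refine integral_congr_ae (.of_forall fun u => ?_)
  ring

end Fresnel

section Diagonal

variable {V : ℝ → ℂ}

lemma besselOsc_diag_eq_integral_fourierInv (hV : IsPosTestFunction V) (m : ℕ) (β : ℝ) :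
    besselOsc m V β β
      = ∫ φ in (-π)..π, Real.cos (m * φ) * 𝓕⁻ V (β / (2 * π) * (1 - Real.cos φ)) := by
  have hπ : (π : ℂ) ≠ 0 := ofReal_ne_zero.2 Real.pi_ne_zero
  have hphase (u φ : ℝ) : cexp (2 * π * u * (β / (2 * π) * (1 - Real.cos φ) : ℝ) * I)
      = cexp (β * u * I) * cexp (-((β * u : ℝ) * Real.cos φ) * I) := by
    rw [← Complex.exp_add]
    congr 1
    push_cast
    field_simp
    ring
  have hprod : Integrable (fun z : ℝ × ℝ => V z.2 * (cexp (β * z.2 * I) *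
      (Real.cos (m * z.1) * cexp (-((β * z.2 : ℝ) * Real.cos z.1) * I))))
      ((volume.restrict (uIoc (-π) π)).prod volume) := by
    have hone : Integrable (fun _ : ℝ => (1 : ℂ)) (volume.restrict (uIoc (-π) π)) :=
      continuous_const.integrableOn_uIoc
    refine (hone.mul_prod hV.integrable).mono ?_ (.of_forall fun z => ?_)
    · have := hV.contDiff.continuous
      exact (by fun_prop : Continuous _).aestronglyMeasurable
    · have hexp₁ : ‖cexp (β * z.2 * I)‖ = 1 := by exact_mod_cast norm_exp_ofReal_mul_I (β * z.2)
      have hexp₂ : ‖cexp (-((β * z.2 : ℝ) * Real.cos z.1) * I)‖ = 1 := by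
        exact_mod_cast norm_exp_ofReal_mul_I (-(β * z.2 * Real.cos z.1))
      simp only [norm_mul, hexp₁, hexp₂, mul_one, one_mul, norm_real]
      exact mul_le_of_le_one_right (norm_nonneg _) (Real.abs_cos_le_one _)
  simp_rw [besselOsc, besselIntegral, pow_zero, one_mul, ← intervalIntegral.integral_const_mul]
  rw [← intervalIntegral_integral_swap hprod]
  refine intervalIntegral.integral_congr fun φ _ => ?_
  simp only [fourierInv_eq_integral_mul_exp, hphase, ← integral_const_mul]
  exact integral_congr_ae (.of_forall fun u => by ring)

lemma IsPosTestFunction.integrable_div_sqrt (hV : IsPosTestFunction V) :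
    Integrable fun u => V u / √u := by
  have hsqrt : ContDiffOn ℝ ∞ (fun u : ℝ => (√u : ℂ)⁻¹) (Ioi 0) :=
    (ofRealCLM.contDiff.comp_contDiffOn (contDiffOn_id.sqrt fun _ hu => ne_of_gt hu)).inv
      fun _ hu => ofReal_ne_zero.2 (Real.sqrt_pos.2 hu).ne'
  simpa only [div_eq_inv_mul] using (hV.mul_left hsqrt).integrable

theorem exists_norm_besselOsc_diag_sub_le (hV : IsPosTestFunction V) (m : ℕ) :
    ∃ C : ℝ, 0 ≤ C ∧ ∀ β : ℝ, 0 < β →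
      ‖√(β / (4 * π)) * besselOsc m V β β - (1 + I) / 2 * ∫ u, V u / √u‖ ≤ C / β := by
  set F : 𝓢(ℝ, ℂ) := 𝓕⁻ (hV.hasCompactSupport.toSchwartzMap hV.contDiff)
  have hF : ⇑F = 𝓕⁻ V := SchwartzMap.fourierInv_coe _
  obtain ⟨C, hC₀, hC⟩ := exists_norm_integral_cos_mul_comp_sub_le m F
  have hfresnel : ∫ y, F (y ^ 2 / 2) = (1 + I) / √2 * ∫ u, V u / √u := by
    rw [hF]
    exact integral_fourierInv_sq_div_two hV.integrable (fun _ => hV.eq_zero_of_nonpos)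
      hV.integrable_div_sqrt (hF ▸ integrable_comp_sq_div_two F)
  refine ⟨2 * π * C, by positivity, fun β hβ => ?_⟩
  have hb : 0 < β / (2 * π) := by positivity
  have hlaplace := hC _ hb
  rw [hfresnel, hF, ← besselOsc_diag_eq_integral_fourierInv hV] at hlaplace
  set b := β / (2 * π) with hbdef
  have hsqrtb : 0 < √b := Real.sqrt_pos.2 hb
  have hsplit : √(β / (4 * π)) = √b / √2 := by
    rw [← Real.sqrt_div hb.le, hbdef]
    ring_nf
  have hmain : (√b / √2 : ℝ) * (((√b)⁻¹ : ℝ) * ((1 + I) / √2 * ∫ u, V u / √u))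
      = (1 + I) / 2 * ∫ u, V u / √u := by
    have hne : (√b : ℂ) ≠ 0 := ofReal_ne_zero.2 hsqrtb.ne'
    have htwo : (√2 : ℂ) ^ 2 = 2 := by exact_mod_cast Real.sq_sqrt (zero_le_two (α := ℝ))
    push_cast
    rw [← htwo]
    field_simp
  rw [hsplit, ← hmain, ← mul_sub, norm_mul, norm_real, Real.norm_of_nonneg (by positivity)]
  calc √b / √2 * _ ≤ √b * (C * (b⁻¹ * (√b)⁻¹)) :=
        mul_le_mul (div_le_self hsqrtb.le (Real.one_le_sqrt.2 one_le_two)) hlaplace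
          (norm_nonneg _) hsqrtb.le
    _ = 2 * π * C / β := by
        rw [hbdef] at hsqrtb ⊢
        field_simp

end Diagonal

section SquareSubstitution

variable {U : ℝ → ℝ}

/-- The density `2u U(u²) du` of `U(x) dx` under the substitution `x = u²`, `u > 0`; extended by `0`
to `u ≤ 0`. -/
noncomputable def sqWeight (U : ℝ → ℝ) : ℝ → ℂ :=
  (Ioi 0).indicator fun u => 2 * u * U (u ^ 2)

lemma isPosTestFunction_sqWeight (hU : ContDiff ℝ ∞ U) (hcomp : HasCompactSupport U)
    (hpos : tsupport U ⊆ Ioi 0) : IsPosTestFunction (sqWeight U) := by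
  have hcompact : IsCompact (Real.sqrt '' tsupport U) := hcomp.isCompact.image continuous_sqrt
  have hsubset : tsupport (sqWeight U) ⊆ Real.sqrt '' tsupport U := by
    refine closure_minimal (fun u hu => ?_) hcompact.isClosed
    have hu₀ : u ∈ Ioi 0 := mem_of_indicator_ne_zero hu
    have hUu : U (u ^ 2) ≠ 0 := fun h => hu (by simp [sqWeight, h])
    exact ⟨u ^ 2, subset_tsupport U hUu, Real.sqrt_sq (le_of_lt hu₀)⟩
  have hpos' : tsupport (sqWeight U) ⊆ Ioi 0 := by
    refine hsubset.trans ?_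
    rintro _ ⟨x, hx, rfl⟩
    exact Real.sqrt_pos.2 (hpos hx)
  refine ⟨contDiff_iff_contDiffAt.2 fun u => ?_, hcompact.of_isClosed_subset
    (isClosed_tsupport _) hsubset, hpos'⟩
  by_cases hu : u ∈ tsupport (sqWeight U)
  · have hsmooth : ContDiff ℝ ∞ fun u : ℝ => (2 * u * U (u ^ 2) : ℂ) :=
      (contDiff_const.mul ofRealCLM.contDiff).mul
        (ofRealCLM.contDiff.comp (hU.comp (contDiff_id.pow 2)))
    refine hsmooth.contDiffAt.congr_of_eventuallyEq ?_
    filter_upwards [Ioi_mem_nhds (hpos' hu)] with v hv using indicator_of_mem hv _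
  · exact contDiffAt_const.congr_of_eventuallyEq (notMem_tsupport_iff_eventuallyEq.1 hu)

lemma setIntegral_mul_comp_sqrt (U : ℝ → ℝ) (F : ℝ → ℂ) :
    ∫ x in Ioi (0 : ℝ), (U x : ℂ) * F (√x) = ∫ u : ℝ, sqWeight U u * F u := by
  have hsubst := integral_comp_rpow_Ioi_of_pos (g := fun x => (U x : ℂ) * F (√x)) (two_pos (α := ℝ))
  have hzero : ∀ u ∉ Ioi (0 : ℝ), sqWeight U u * F u = 0 := fun u hu => by
    rw [sqWeight, indicator_of_notMem hu, zero_mul]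
  rw [← hsubst, ← setIntegral_eq_integral_of_forall_compl_eq_zero hzero]
  refine setIntegral_congr_fun measurableSet_Ioi fun u (hu : 0 < u) => ?_
  have hpow : u ^ ((2 : ℝ) - 1) = u := by norm_num
  simp only [hpow, Real.rpow_two, Real.sqrt_sq hu.le, sqWeight, indicator_of_mem (mem_Ioi.2 hu),
    real_smul]
  push_cast
  ring

lemma ofReal_mellinU_three_div_four (U : ℝ → ℝ) :
    (mellinU U (3 / 4) : ℂ) = ∫ u : ℝ, sqWeight U u / √u := by
  simp_rw [div_eq_mul_inv (sqWeight U _)]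
  rw [mellinU, ← setIntegral_mul_comp_sqrt U fun u => (√u : ℂ)⁻¹, ← integral_complex_ofReal]
  refine setIntegral_congr_fun measurableSet_Ioi fun x (hx : 0 < x) => ?_
  have hpow : x ^ ((3 : ℝ) / 4 - 1) = (√√x)⁻¹ := by
    rw [Real.sqrt_eq_rpow, Real.sqrt_eq_rpow, ← Real.rpow_mul hx.le, ← Real.rpow_neg hx.le]
    norm_num
  simp only [hpow, ofReal_mul, ofReal_inv]

lemma mellinU_pos (hU : Continuous U) (hcomp : HasCompactSupport U) (hpos : tsupport U ⊆ Ioi 0)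
    (hnonneg : ∀ x, 0 ≤ U x) (hne : U ≠ 0) (s : ℝ) : 0 < mellinU U s := by
  have hzero {x : ℝ} (hx : x ∉ Ioi (0 : ℝ)) : U x = 0 :=
    image_eq_zero_of_notMem_tsupport fun h => hx (hpos h)
  obtain ⟨x, hx⟩ := Function.ne_iff.1 hne
  have hx₀ : 0 < x := not_not.1 fun h => hx (hzero h)
  have hpow : ContinuousOn (fun x : ℝ => x ^ (s - 1)) (Ioi 0) := fun x hx =>
    (Real.continuousAt_rpow_const _ _ (.inl (ne_of_gt hx))).continuousWithinAt
  have hcont : Continuous fun x => U x * x ^ (s - 1) :=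
    (hU.continuousOn.mul hpow).continuous_of_tsupport_subset isOpen_Ioi
      (tsupport_mul_subset_left.trans hpos)
  rw [mellinU, setIntegral_eq_integral_of_forall_compl_eq_zero
    fun x hx => by rw [hzero hx, zero_mul]]
  refine hcont.integral_pos_of_hasCompactSupport_nonneg_nonzero hcomp.mul_right (fun y => ?_)
    (mul_ne_zero hx (Real.rpow_pos_of_pos hx₀ _).ne')
  by_cases hy : y ∈ Ioi (0 : ℝ)
  · exact mul_nonneg (hnonneg y) (Real.rpow_nonneg (le_of_lt hy) _)
  · simp [hzero hy]

lemma Ik_eq_besselOsc (U : ℝ → ℝ) (k : ℕ) (a b : ℝ) {X : ℝ} (hX : 0 < X) :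
    Ik U k a b X = X * (I ^ (k - 1) / (2 * π)) *
      besselOsc (k - 1) (sqWeight U) (4 * π * a * √X) (4 * π * b * √X) := by
  have hscale := integral_comp_mul_left_Ioi (fun x : ℝ => (U (x / X) : ℂ) * e (2 * a * √x) *
      (besselJ (k - 1) (4 * π * b * √x) : ℂ)) 0 hX
  have hphase (u : ℝ) : e (2 * a * (√X * u)) = cexp ((4 * π * a * √X : ℝ) * u * I) := by
    rw [e]
    congr 1
    push_cast
    ring
  rw [mul_zero, real_smul, ofReal_inv, eq_inv_mul_iff_mul_eq₀ (ofReal_ne_zero.2 hX.ne')] at hscale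
  have hbessel (u : ℝ) : (besselJ (k - 1) (4 * π * b * (√X * u)) : ℂ)
      = I ^ (k - 1) / (2 * π) * besselIntegral (k - 1) 0 (4 * π * b * √X * u) := by
    rw [besselJ_eq_besselIntegral, mul_assoc _ √X]
  rw [Ik, ← hscale, mul_assoc (X : ℂ), besselOsc, ← integral_const_mul (I ^ (k - 1) / (2 * π))]
  simp only [mul_div_cancel_left₀ _ hX.ne', Real.sqrt_mul hX.le, mul_assoc (U _ : ℂ)]
  rw [setIntegral_mul_comp_sqrt U fun u => e (2 * a * (√X * u)) *
    (besselJ (k - 1) (4 * π * b * (√X * u)) : ℂ)]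
  congr 1
  refine integral_congr_ae (.of_forall fun u => ?_)
  simp only [hphase, hbessel]
  ring

end SquareSubstitution

section CharacterSum

lemma average_e_mul_div {p : ℕ} (hp : p ≠ 0) (t : ℤ) :
    (1 / (p : ℂ)) * ∑ a ∈ Finset.range p, e ((a : ℝ) * t / p)
      = if (p : ℤ) ∣ t then 1 else 0 := by
  have hp₀ : (p : ℂ) ≠ 0 := Nat.cast_ne_zero.2 hp
  set ζ := cexp (2 * π * I * (t / p)) with hζ
  have hterm (a : ℕ) : e ((a : ℝ) * t / p) = ζ ^ a := by
    rw [e, hζ, ← Complex.exp_nat_mul]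
    congr 1
    push_cast
    ring
  have hroot : ζ ^ p = 1 := by
    rw [hζ, ← Complex.exp_nat_mul, Complex.exp_eq_one_iff]
    exact ⟨t, by field_simp⟩
  have hone : ζ = 1 ↔ (p : ℤ) ∣ t := by
    rw [hζ, Complex.exp_eq_one_iff]
    refine exists_congr fun q => ?_
    rw [mul_comm (q : ℂ), mul_right_inj' two_pi_I_ne_zero, div_eq_iff hp₀, mul_comm (q : ℂ)]
    norm_cast
  simp_rw [hterm]
  split_ifs with hdvd
  · simp [hone.2 hdvd, hp₀]
  · rw [geom_sum_eq (mt hone.1 hdvd), hroot, sub_self, zero_div, mul_zero]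

end CharacterSum

section BesselDelta

variable {U : ℝ → ℝ} {k p : ℕ} {X : ℝ} {r n : ℕ}

/-- The frequency `4π√(qX)/p` of `e(2(√q/p)√x)` and `J_{k-1}(4π(√q/p)√x)` in the variable
`u = √(x/X)`. -/
noncomputable def besselFreq (p : ℕ) (X : ℝ) (q : ℕ) : ℝ := 4 * π * (√q / p) * √X

/-- The expression by which the Bessel δ-method detects `r = n`. -/
noncomputable def besselDelta (U : ℝ → ℝ) (k p : ℕ) (X : ℝ) (r n : ℕ) : ℂ :=
  (2 * (π : ℂ) * ((1 + I) / (mellinU U (3 / 4) : ℂ)) * (((r : ℝ) ^ ((1 : ℝ) / 4) : ℝ) : ℂ)) /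
      (I ^ k * (((p : ℝ) ^ ((1 : ℝ) / 2) : ℝ) : ℂ) * ((X ^ ((3 : ℝ) / 4) : ℝ) : ℂ)) *
    ((1 / (p : ℂ)) * ∑ a ∈ Finset.range p, e ((a : ℝ) * ((n : ℝ) - (r : ℝ)) / p)) *
    Ik U k (√r / p) (√n / p) X

lemma sqrt_besselFreq_div (p r : ℕ) (hX : 0 < X) :
    √(besselFreq p X r / (4 * π))
      = (r : ℝ) ^ ((1 : ℝ) / 4) / ((p : ℝ) ^ ((1 : ℝ) / 2) * X ^ ((3 : ℝ) / 4)) * X := by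
  have hquarter {y : ℝ} (hy : 0 ≤ y) : √√y = y ^ ((1 : ℝ) / 4) := by
    rw [Real.sqrt_eq_rpow, Real.sqrt_eq_rpow, ← Real.rpow_mul hy]
    norm_num
  have hXpow : X ^ ((1 : ℝ) / 4) * X ^ ((3 : ℝ) / 4) = X := by
    rw [← Real.rpow_add hX]
    norm_num
  have hfreq : besselFreq p X r / (4 * π) = √r / p * √X := by
    rw [besselFreq]
    field_simp
  rw [hfreq, Real.sqrt_mul (by positivity), Real.sqrt_div (by positivity),
    hquarter r.cast_nonneg, hquarter hX.le, ← Real.sqrt_eq_rpow]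
  nth_rw 3 [← hXpow]
  field_simp

lemma besselDelta_eq (U : ℝ → ℝ) (hk : 1 ≤ k) (hp : p ≠ 0) (hX : 0 < X) (r n : ℕ) :
    besselDelta U k p X r n = (if (p : ℤ) ∣ n - r then 1 else 0) *
      ((1 - I) / mellinU U (3 / 4) * (√(besselFreq p X r / (4 * π)) *
        besselOsc (k - 1) (sqWeight U) (besselFreq p X r) (besselFreq p X n))) := by
  obtain ⟨m, rfl⟩ := Nat.exists_eq_add_of_le' hk
  have hsum := average_e_mul_div hp (n - r)
  push_cast at hsum
  have hπ : (π : ℂ) ≠ 0 := ofReal_ne_zero.2 Real.pi_ne_zero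
  have hI : I ^ m ≠ 0 := pow_ne_zero _ I_ne_zero
  have hunit : (1 + I) / I = 1 - I := by
    rw [div_eq_iff I_ne_zero]
    linear_combination I_sq
  rw [besselDelta, hsum, Ik_eq_besselOsc U _ _ _ hX, sqrt_besselFreq_div _ _ hX, ← hunit, pow_succ,
    Nat.add_sub_cancel]
  rw [← besselFreq, ← besselFreq]
  push_cast
  field_simp

theorem exists_norm_besselDelta_self_sub_one_le (hV : IsPosTestFunction (sqWeight U))
    (hM : mellinU U (3 / 4) ≠ 0) (hk : 1 ≤ k) :
    ∃ C : ℝ, 0 ≤ C ∧ ∀ {p : ℕ} {X : ℝ} {r : ℕ}, p ≠ 0 → 0 < X → 0 < r →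
      ‖besselDelta U k p X r r - 1‖ ≤ C * p / √(r * X) := by
  obtain ⟨C, hC₀, hC⟩ := exists_norm_besselOsc_diag_sub_le hV (k - 1)
  refine ⟨‖(1 - I) / mellinU U (3 / 4)‖ * C / (4 * π), by positivity, fun {p X r} hp hX hr => ?_⟩
  have hM' : (mellinU U (3 / 4) : ℂ) ≠ 0 := ofReal_ne_zero.2 hM
  have hone : (1 - I) / mellinU U (3 / 4) * ((1 + I) / 2 * mellinU U (3 / 4)) = 1 := by
    field_simp
    linear_combination -I_sq
  have hfreq : 0 < besselFreq p X r := by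
    rw [besselFreq]
    positivity
  have hdelta : besselDelta U k p X r r - 1 = (1 - I) / mellinU U (3 / 4) *
      (√(besselFreq p X r / (4 * π)) * besselOsc (k - 1) (sqWeight U) (besselFreq p X r)
        (besselFreq p X r) - (1 + I) / 2 * mellinU U (3 / 4)) := by
    rw [besselDelta_eq U hk hp hX, if_pos (by simp), one_mul, mul_sub, hone]
  calc ‖besselDelta U k p X r r - 1‖
      ≤ ‖(1 - I) / mellinU U (3 / 4)‖ * (C / besselFreq p X r) := by
        rw [hdelta, norm_mul]
        refine mul_le_mul_of_nonneg_left ?_ (norm_nonneg _)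
        rw [ofReal_mellinU_three_div_four]
        exact hC _ hfreq
    _ = ‖(1 - I) / mellinU U (3 / 4)‖ * C / (4 * π) * p / √(r * X) := by
        rw [besselFreq, Real.sqrt_mul r.cast_nonneg]
        field_simp

lemma besselFreq_sq_sub_sq (p : ℕ) (hX : 0 ≤ X) (r n : ℕ) :
    besselFreq p X r ^ 2 - besselFreq p X n ^ 2 = (4 * π / p) ^ 2 * X * (r - n) := by
  simp only [besselFreq, mul_pow, div_pow, Real.sq_sqrt hX, Real.sq_sqrt (Nat.cast_nonneg _)]
  ring

lemma one_le_besselFreq (hp : p ≠ 0) (hpr : (p : ℝ) ^ 2 ≤ r * X) :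
    1 ≤ besselFreq p X r := by
  have hp₀ : (0 : ℝ) < p := Nat.cast_pos.2 (Nat.pos_of_ne_zero hp)
  have hsqrt : (p : ℝ) ≤ √r * √X := by
    rw [← Real.sqrt_mul r.cast_nonneg]
    exact Real.le_sqrt_of_sq_le hpr
  calc (1 : ℝ) ≤ 4 * π * 1 := by linarith [Real.pi_gt_three]
    _ ≤ 4 * π * (√r * √X / p) := by gcongr; exact (one_le_div hp₀).2 hsqrt
    _ = besselFreq p X r := by rw [besselFreq]; ring

lemma one_add_besselFreq_div_le (hp : p ≠ 0) (hX : 0 < X) (hpr : (p : ℝ) ^ 2 ≤ r * X)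
    (hrn : (p : ℝ) ≤ |(r : ℝ) - n|) :
    (1 + |besselFreq p X r|) / |besselFreq p X r ^ 2 - besselFreq p X n ^ 2| ≤ √(r / (4 * X)) := by
  have hfreq := one_le_besselFreq hp hpr
  have hsqrt : √(r / (4 * X)) = √r / (2 * √X) := by
    rw [Real.sqrt_div r.cast_nonneg, Real.sqrt_mul (by norm_num), show (4 : ℝ) = 2 ^ 2 by norm_num,
      Real.sqrt_sq zero_le_two]
  rw [besselFreq_sq_sub_sq p hX.le, abs_mul, abs_of_pos (by positivity : 0 < (4 * π / p) ^ 2 * X),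
    abs_of_pos (by linarith)]
  calc (1 + besselFreq p X r) / ((4 * π / p) ^ 2 * X * |(r : ℝ) - n|)
      ≤ (besselFreq p X r + besselFreq p X r) / ((4 * π / p) ^ 2 * X * p) := by gcongr
    _ = √r / (2 * √X) / π := by
        rw [besselFreq]
        nth_rw 3 [← Real.sq_sqrt hX.le]
        field_simp
        ring
    _ ≤ √(r / (4 * X)) := by
        rw [hsqrt]
        exact div_le_self (by positivity) (by linarith [Real.pi_gt_three])

lemma sqrt_besselFreq_div_le (hp : p ≠ 0) (hX : 1 ≤ X) (hr : (r : ℝ) ≤ 2 * X) :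
    √(besselFreq p X r / (4 * π)) ≤ 2 * X := by
  have hp₁ : (1 : ℝ) ≤ p := Nat.one_le_cast.2 (Nat.one_le_iff_ne_zero.2 hp)
  have hfreq : besselFreq p X r / (4 * π) = √r * √X / p := by
    rw [besselFreq]
    field_simp
  have hroots : √(r : ℝ) * √X ≤ 2 * X := by
    rw [← Real.sqrt_mul r.cast_nonneg]
    exact Real.sqrt_le_iff.2 ⟨by positivity, by nlinarith⟩
  rw [hfreq]
  refine Real.sqrt_le_iff.2 ⟨by positivity, (div_le_self (by positivity) hp₁).trans ?_⟩
  nlinarith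

lemma sqrt_div_four_mul_le_rpow (hX : 0 < X) {ε y : ℝ} (hy : y ≤ 2 * X ^ (1 - ε)) :
    √(y / (4 * X)) ≤ X ^ (-(ε / 2)) := by
  have hpow : (X ^ (-(ε / 2))) ^ 2 * X = X ^ (1 - ε) := by
    rw [← Real.rpow_mul_natCast hX.le, ← Real.rpow_add_one hX.ne']
    ring_nf
  have hpos : 0 < X ^ (1 - ε) := Real.rpow_pos_of_pos hX _
  refine Real.sqrt_le_iff.2 ⟨by positivity, ?_⟩
  rw [div_le_iff₀ (by positivity)]
  linarith

theorem exists_norm_besselDelta_le_rpow (hV : IsPosTestFunction (sqWeight U)) (hk : 1 ≤ k)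
    {ε : ℝ} (hε : 0 < ε) (A : ℝ) :
    ∃ C : ℝ, 0 ≤ C ∧ ∀ {p : ℕ} {X : ℝ} {r n : ℕ}, p ≠ 0 → 1 < X → (p : ℝ) ^ 2 ≤ r * X →
      (r : ℝ) ≤ 2 * X ^ (1 - ε) → r ≠ n → ‖besselDelta U k p X r n‖ ≤ C * X ^ (-A) := by
  obtain ⟨K, hK⟩ := exists_nat_ge (2 * (A + 1) / ε)
  obtain ⟨D, hD₀, hD⟩ := exists_norm_besselOsc_le_pow (k - 1) K hV
  refine ⟨‖(1 - I) / mellinU U (3 / 4)‖ * (2 * D), by positivity,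
    fun {p X r n} hp hX hpr hr hrn => ?_⟩
  have hX₀ : 0 < X := one_pos.trans hX
  rw [besselDelta_eq U hk hp hX₀]
  split_ifs with hdvd
  swap
  · rw [zero_mul, norm_zero]
    positivity
  have hdist : (p : ℝ) ≤ |(r : ℝ) - n| := by
    have := Int.le_of_dvd (abs_pos.2 (by lia)) ((dvd_abs _ _).2 (dvd_sub_comm.1 hdvd))
    exact_mod_cast this
  have hne : besselFreq p X r ^ 2 ≠ besselFreq p X n ^ 2 := by
    have hpos : 0 < |(r : ℝ) - n| := (Nat.cast_pos.2 (Nat.pos_of_ne_zero hp)).trans_le hdist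
    have := abs_pos.1 hpos
    rw [← sub_ne_zero, besselFreq_sq_sub_sq p hX₀.le]
    positivity
  have hdecay : ((1 + |besselFreq p X r|) / |besselFreq p X r ^ 2 - besselFreq p X n ^ 2|) ^ K
      ≤ X ^ (-(A + 1)) := by
    have hbase := (one_add_besselFreq_div_le hp hX₀ hpr hdist).trans
      (sqrt_div_four_mul_le_rpow hX₀ hr)
    refine (pow_le_pow_left₀ (by positivity) hbase K).trans ?_
    rw [← Real.rpow_mul_natCast hX₀.le]
    rw [div_le_iff₀ hε] at hK
    exact Real.rpow_le_rpow_of_exponent_le hX.le (by linarith)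
  have hrX : (r : ℝ) ≤ 2 * X := by
    have := Real.rpow_le_rpow_of_exponent_le hX.le (sub_le_self 1 hε.le)
    rw [Real.rpow_one] at this
    linarith
  rw [one_mul, norm_mul, norm_mul, norm_real, Real.norm_of_nonneg (Real.sqrt_nonneg _), mul_assoc]
  refine mul_le_mul_of_nonneg_left ?_ (norm_nonneg _)
  calc _ ≤ 2 * X * (D * X ^ (-(A + 1))) := by
        gcongr
        · exact sqrt_besselFreq_div_le hp hX.le hrX
        · exact (hD _ _ hne).trans (by gcongr)
    _ = 2 * D * X ^ (-A) := by
        rw [← neg_add_cancel_right (-A) (1 : ℝ), ← neg_add, Real.rpow_add_one hX₀.ne']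
        ring

theorem stmt7_general (hk : 1 ≤ k) (hU : ContDiff ℝ ∞ U) (hcomp : HasCompactSupport U)
    (hpos : tsupport U ⊆ Ioi 0) (hM : mellinU U (3 / 4) ≠ 0) :
    ∃ C₁ : ℝ, 0 < C₁ ∧ ∀ ε A : ℝ, 0 < ε → ∃ C₂ : ℝ, 0 < C₂ ∧
      ∀ p : ℕ, p ≠ 0 → ∀ (N X : ℝ) (r n : ℕ), 0 < N → 1 < X → (p : ℝ) ^ 2 / N < X →
        N < X ^ (1 - ε) → N ≤ r → r ≤ 2 * N →
        ∃ E₁ E₂ : ℂ, besselDelta U k p X r n = (if r = n then 1 else 0) * (1 + E₁) + E₂ ∧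
          ‖E₁‖ ≤ C₁ * p / √(N * X) ∧ ‖E₂‖ ≤ C₂ * X ^ (-A) := by
  have hV := isPosTestFunction_sqWeight hU hcomp hpos
  obtain ⟨C₁, hC₁, hdiag⟩ := exists_norm_besselDelta_self_sub_one_le hV hM hk
  refine ⟨C₁ + 1, by positivity, fun ε A hε => ?_⟩
  obtain ⟨C₂, hC₂, hoff⟩ := exists_norm_besselDelta_le_rpow hV hk hε A
  refine ⟨C₂ + 1, by positivity, fun p hp N X r n hN hX hpN hNX hNr hrN => ?_⟩
  have hX₀ : 0 < X := one_pos.trans hX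
  rcases eq_or_ne r n with rfl | hrn
  · have hr : 0 < r := Nat.cast_pos.1 (hN.trans_le hNr)
    refine ⟨besselDelta U k p X r r - 1, 0, by simp, ?_, by rw [norm_zero]; positivity⟩
    calc _ ≤ C₁ * p / √(r * X) := hdiag hp hX₀ hr
      _ ≤ (C₁ + 1) * p / √(N * X) := by gcongr; linarith
  · refine ⟨0, besselDelta U k p X r n, by simp [hrn], by rw [norm_zero]; positivity, ?_⟩
    have hpr : (p : ℝ) ^ 2 ≤ r * X := by
      rw [div_lt_iff₀ hN, mul_comm] at hpN
      exact hpN.le.trans (by gcongr)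
    calc _ ≤ C₂ * X ^ (-A) := hoff hp hX hpr (by linarith) hrn
      _ ≤ (C₂ + 1) * X ^ (-A) := by gcongr; linarith

end BesselDelta

end BesselDeltaMethod

/-- The Bessel δ-method: with `C_U = (1+i)/Ũ(3/4)`, for a prime `p` and
`N, X > 1` with `X > p²/N` and `X^{1−ε} > N`, and integers `r, n ∈ [N, 2N]`,
`(2π C_U r^{1/4} / (i^k p^{1/2} X^{3/4})) (1/p) Σ_{a mod p} e(a(n−r)/p) I_k(√r/p, √n/p; X)
  = δ(r=n)(1 + E₁) + E₂`,
with `|E₁| ≤ C₁ p/√(NX)` (`C₁` depending only on `k, U`) and `|E₂| ≤ C₂ X^{−A}`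
(`C₂` depending only on `k, U, A, ε`). -/
theorem stmt7 (k : ℕ) (hk : 1 ≤ k) (U : ℝ → ℝ) (hU : ContDiff ℝ (⊤ : ℕ∞) U)
    (hsupp : Function.support U ⊆ Set.Icc 1 2) (hU0 : ∀ x, 0 ≤ U x) (hUne : U ≠ 0) :
    ∃ C₁ : ℝ, 0 < C₁ ∧
      ∀ ε A : ℝ, 0 < ε → 0 ≤ A →
        ∃ C₂ : ℝ, 0 < C₂ ∧
          ∀ (p : ℕ), Nat.Prime p →
            ∀ (N X : ℝ) (r n : ℕ),
              1 < N → 1 < X → (p : ℝ) ^ 2 / N < X → N < X ^ (1 - ε) →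
              N ≤ (r : ℝ) → (r : ℝ) ≤ 2 * N → N ≤ (n : ℝ) → (n : ℝ) ≤ 2 * N →
              ∃ E₁ E₂ : ℂ,
                (2 * (Real.pi : ℂ) * ((1 + Complex.I) / (mellinU U (3 / 4) : ℂ)) *
                      (((r : ℝ) ^ ((1 : ℝ) / 4) : ℝ) : ℂ)) /
                    (Complex.I ^ k * (((p : ℝ) ^ ((1 : ℝ) / 2) : ℝ) : ℂ) *
                      ((X ^ ((3 : ℝ) / 4) : ℝ) : ℂ)) *
                    ((1 / (p : ℂ)) *
                      ∑ a ∈ Finset.range p, e ((a : ℝ) * ((n : ℝ) - (r : ℝ)) / p)) *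
                    Ik U k (Real.sqrt r / p) (Real.sqrt n / p) X
                  = (if r = n then 1 else 0) * (1 + E₁) + E₂ ∧
                ‖E₁‖ ≤ C₁ * p / Real.sqrt (N * X) ∧ ‖E₂‖ ≤ C₂ * X ^ (-A) := by
  have hcomp := HasCompactSupport.of_support_subset_isCompact isCompact_Icc hsupp
  have hpos : tsupport U ⊆ Set.Ioi 0 := (closure_minimal hsupp isClosed_Icc).trans
    fun _ hx => one_pos.trans_le hx.1
  have hM := (mellinU_pos hU.continuous hcomp hpos hU0 hUne (3 / 4)).ne'
  obtain ⟨C₁, hC₁, h⟩ := stmt7_general hk hU hcomp hpos hM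
  refine ⟨C₁, hC₁, fun ε A hε _ => ?_⟩
  obtain ⟨C₂, hC₂, h⟩ := h ε A hε
  exact ⟨C₂, hC₂, fun p hp N X r n hN hX hpN hNX hNr hrN _ _ =>
    h p hp.ne_zero N X r n (one_pos.trans hN) hX hpN hNX hNr hrN⟩
end

section
/- Let ε > 0 and let x > N^ε > 1. Define W(λ) = e(−λ)·𝒦(√(λx), x) for λ ∈ (x/4, 4x). Then for every integer j ≥ 0 there is a constant C_j, depending only on j and U, such that |λ^j · W^{(j)}(λ)| ≤ C_j/√x for all λ ∈ (x/4, 4x). -/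
/-- The oscillatory integral `𝒦(v,x) = ∫_0^∞ U(y) e(2v√y − xy) dy`. -/
noncomputable def Kcal (U : ℝ → ℝ) (v x : ℝ) : ℂ :=
  ∫ y in Set.Ioi (0 : ℝ), (U y : ℂ) * e (2 * v * Real.sqrt y - x * y)

/-!
Substituting `y = t²` and completing the square turns `W(λ)` into `(V ⋆ g)(√λ / √x)`, where
`V(t) = 2t U(t²)` on `t > 0` and `g(s) = e(-x s²)`. The primitives of `g` are `O(1 / √x)` by van der
Corput's first derivative test away from `|s| ≤ 1 / √x`, so integrating by parts bounds each
derivative `V^(k) ⋆ g` of `V ⋆ g` by `O(1 / √x)`. Finally, `λ^j (d/dλ)^j` applied to `F(c √λ)` is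
a linear combination of the terms `s^k F^(k)(s)`, `k ≤ j`, at `s = c √λ`, with coefficients
depending only on `j` and `k`.
-/

open MeasureTheory Set Filter Topology
open scoped ContDiff Convolution

section AdditiveCharacter

lemma e_add (s t : ℝ) : e (s + t) = e s * e t := by
  simp only [e, ← Complex.exp_add]
  push_cast
  ring_nf

lemma e_neg_eq_conj (t : ℝ) : e (-t) = starRingEnd ℂ (e t) := by
  simp [e, ← Complex.exp_conj, Complex.conj_ofNat]

lemma norm_integral_e_neg (φ : ℝ → ℝ) (a b : ℝ) :
    ‖∫ s in a..b, e (-φ s)‖ = ‖∫ s in a..b, e (φ s)‖ := by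
  simp_rw [e_neg_eq_conj, intervalIntegral, integral_conj, ← map_sub, RCLike.norm_conj]

lemma norm_e (t : ℝ) : ‖e t‖ = 1 := by
  rw [e, show 2 * (Real.pi : ℂ) * Complex.I * t = ((2 * Real.pi * t : ℝ) : ℂ) * Complex.I by
    push_cast; ring]
  exact Complex.norm_exp_ofReal_mul_I _

lemma continuous_e : Continuous e := by
  unfold e
  fun_prop

lemma hasDerivAt_e_comp {φ : ℝ → ℝ} {φ' t : ℝ} (hφ : HasDerivAt φ φ' t) :
    HasDerivAt (fun s => e (φ s)) (e (φ t) * (2 * Real.pi * Complex.I * φ')) t :=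
  (hφ.ofReal_comp.const_mul _).cexp

end AdditiveCharacter

section VanDerCorput

variable {φ φ' φ'' : ℝ → ℝ} {a b : ℝ}

lemma continuousOn_deriv_div_sq (hφ' : ∀ s ∈ uIcc a b, HasDerivAt φ' (φ'' s) s)
    (hφ'' : ContinuousOn φ'' (uIcc a b)) (hne : ∀ s ∈ uIcc a b, φ' s ≠ 0) :
    ContinuousOn (fun s => φ'' s / φ' s ^ 2) (uIcc a b) :=
  hφ''.div (ContinuousOn.pow (fun s hs => (hφ' s hs).continuousAt.continuousWithinAt) 2)
    fun s hs => pow_ne_zero 2 (hne s hs)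

lemma two_pi_I_mul_integral_e_eq_sub_add_integral
    (hφ : ∀ s ∈ uIcc a b, HasDerivAt φ (φ' s) s) (hφ' : ∀ s ∈ uIcc a b, HasDerivAt φ' (φ'' s) s)
    (hφ'' : ContinuousOn φ'' (uIcc a b)) (hne : ∀ s ∈ uIcc a b, φ' s ≠ 0) :
    2 * Real.pi * Complex.I * ∫ s in a..b, e (φ s) =
      ((φ' b)⁻¹ : ℝ) * e (φ b) - ((φ' a)⁻¹ : ℝ) * e (φ a) +
        ∫ s in a..b, ((φ'' s / φ' s ^ 2 : ℝ) : ℂ) * e (φ s) := by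
  have hφcont : ContinuousOn φ (uIcc a b) := fun s hs => (hφ s hs).continuousAt.continuousWithinAt
  have hφ'cont : ContinuousOn φ' (uIcc a b) :=
    fun s hs => (hφ' s hs).continuousAt.continuousWithinAt
  have hecont : ContinuousOn (fun s => e (φ s)) (uIcc a b) := continuous_e.comp_continuousOn hφcont
  have hinv : ∀ s ∈ uIcc a b,
      HasDerivAt (fun s => (((φ' s)⁻¹ : ℝ) : ℂ)) ((-(φ'' s / φ' s ^ 2) : ℝ) : ℂ) s :=
    fun s hs => (((hφ' s hs).fun_inv (hne s hs)).congr_deriv (neg_div _ _)).ofReal_comp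
  have hinv' : ContinuousOn (fun s => ((-(φ'' s / φ' s ^ 2) : ℝ) : ℂ)) (uIcc a b) :=
    Complex.continuous_ofReal.comp_continuousOn (continuousOn_deriv_div_sq hφ' hφ'' hne).neg
  have hparts := intervalIntegral.integral_mul_deriv_eq_deriv_mul hinv
    (fun s hs => hasDerivAt_e_comp (hφ s hs)) hinv'.intervalIntegrable
    (ContinuousOn.intervalIntegrable (by fun_prop))
  have hcancel : ∀ s ∈ uIcc a b,
      (((φ' s)⁻¹ : ℝ) : ℂ) * (e (φ s) * (2 * Real.pi * Complex.I * φ' s)) =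
        2 * Real.pi * Complex.I * e (φ s) := fun s hs => by
    have : (φ' s : ℂ) ≠ 0 := by exact_mod_cast hne s hs
    push_cast
    field_simp
  rw [intervalIntegral.integral_congr hcancel, intervalIntegral.integral_const_mul] at hparts
  rw [hparts, sub_eq_add_neg _ (∫ s in a..b, _), ← intervalIntegral.integral_neg]
  simp

lemma integral_deriv_div_sq_eq_inv_sub_inv (hφ' : ∀ s ∈ uIcc a b, HasDerivAt φ' (φ'' s) s)
    (hφ'' : ContinuousOn φ'' (uIcc a b)) (hne : ∀ s ∈ uIcc a b, φ' s ≠ 0) :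
    ∫ s in a..b, φ'' s / φ' s ^ 2 = (φ' a)⁻¹ - (φ' b)⁻¹ := by
  have hderiv : ∀ s ∈ uIcc a b, HasDerivAt (fun s => -(φ' s)⁻¹) (φ'' s / φ' s ^ 2) s :=
    fun s hs => by simpa [neg_div] using ((hφ' s hs).fun_inv (hne s hs)).fun_neg
  rw [intervalIntegral.integral_eq_sub_of_hasDerivAt hderiv
    (continuousOn_deriv_div_sq hφ' hφ'' hne).intervalIntegrable]
  ring

/-- **Van der Corput's first derivative test**. -/
theorem norm_integral_e_le_of_le_deriv {Λ : ℝ} (hab : a ≤ b) (hΛ : 0 < Λ)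
    (hφ : ∀ s ∈ Icc a b, HasDerivAt φ (φ' s) s) (hφ' : ∀ s ∈ Icc a b, HasDerivAt φ' (φ'' s) s)
    (hφ'' : ContinuousOn φ'' (Icc a b)) (hle : ∀ s ∈ Icc a b, Λ ≤ φ' s)
    (hconvex : ∀ s ∈ Icc a b, 0 ≤ φ'' s) :
    ‖∫ s in a..b, e (φ s)‖ ≤ 1 / (Real.pi * Λ) := by
  have hpos : ∀ s ∈ Icc a b, 0 < φ' s := fun s hs => hΛ.trans_le (hle s hs)
  have hφ'a := hpos a (left_mem_Icc.2 hab)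
  have hφ'b := hpos b (right_mem_Icc.2 hab)
  have hrem : ‖∫ s in a..b, ((φ'' s / φ' s ^ 2 : ℝ) : ℂ) * e (φ s)‖ ≤
      (φ' a)⁻¹ - (φ' b)⁻¹ := by
    rw [← uIcc_of_le hab] at hφ' hφ'' hpos
    rw [← integral_deriv_div_sq_eq_inv_sub_inv hφ' hφ'' fun s hs => (hpos s hs).ne']
    refine intervalIntegral.norm_integral_le_of_norm_le hab (.of_forall fun s hs => ?_)
      (continuousOn_deriv_div_sq hφ' hφ'' fun s hs => (hpos s hs).ne').intervalIntegrable
    have := hconvex s (Ioc_subset_Icc_self hs)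
    rw [norm_mul, norm_e, mul_one, Complex.norm_of_nonneg (by positivity)]
  have hboundary : ∀ s, 0 < φ' s → ‖(((φ' s)⁻¹ : ℝ) : ℂ) * e (φ s)‖ = (φ' s)⁻¹ := fun s hs => by
    rw [norm_mul, norm_e, mul_one, Complex.norm_of_nonneg (by positivity)]
  have hbound : 2 * Real.pi * ‖∫ s in a..b, e (φ s)‖ ≤ 2 / Λ := calc
    _ = ‖2 * Real.pi * Complex.I * ∫ s in a..b, e (φ s)‖ := by simp [abs_of_pos Real.pi_pos]
    _ ≤ (φ' b)⁻¹ + (φ' a)⁻¹ + ((φ' a)⁻¹ - (φ' b)⁻¹) := by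
      rw [← uIcc_of_le hab] at hφ hφ' hφ'' hpos
      rw [two_pi_I_mul_integral_e_eq_sub_add_integral hφ hφ' hφ'' fun s hs => (hpos s hs).ne']
      refine (norm_add_le _ _).trans (add_le_add ((norm_sub_le _ _).trans_eq ?_) hrem)
      rw [hboundary a hφ'a, hboundary b hφ'b]
    _ = 2 / φ' a := by ring
    _ ≤ 2 / Λ := by gcongr; exact hle a (left_mem_Icc.2 hab)
  rw [le_div_iff₀ (by positivity)] at hbound ⊢
  linarith

end VanDerCorput

section FresnelIntegral

/-- The quadratic chirp `s ↦ e(-x s²)`, the oscillating kernel left after completing the square in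
the phase of `Kcal`. -/
noncomputable def chirp (x s : ℝ) : ℂ := e (-x * s ^ 2)

variable {x : ℝ}

lemma continuous_chirp (x : ℝ) : Continuous (chirp x) :=
  continuous_e.comp (by fun_prop)

lemma norm_chirp (x s : ℝ) : ‖chirp x s‖ = 1 := norm_e _

lemma norm_integral_chirp_le_of_pos {a b : ℝ} (hx : 0 < x) (ha : 0 < a) (hab : a ≤ b) :
    ‖∫ s in a..b, chirp x s‖ ≤ 1 / (2 * Real.pi * x * a) := by
  have htest : ‖∫ s in a..b, e (x * s ^ 2)‖ ≤ 1 / (Real.pi * (2 * x * a)) :=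
    norm_integral_e_le_of_le_deriv (φ' := fun s => 2 * x * s) (φ'' := fun _ => 2 * x) hab
      (by positivity)
      (fun s _ => ((hasDerivAt_pow 2 s).const_mul x).congr_deriv (by norm_num; ring))
      (fun s _ => by simpa using (hasDerivAt_id s).const_mul (2 * x))
      continuousOn_const (fun s hs => by gcongr; exact hs.1) (fun _ _ => by positivity)
  simp_rw [chirp, neg_mul, norm_integral_e_neg]
  exact htest.trans_eq (by ring)

lemma norm_integral_zero_chirp_le_of_nonneg (hx : 0 < x) {w : ℝ} (hw : 0 ≤ w) :
    ‖∫ s in 0..w, chirp x s‖ ≤ 2 / √x := by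
  have hsqrt : 0 < √x := Real.sqrt_pos.2 hx
  have htrivial : ∀ v, 0 ≤ v → ‖∫ s in 0..v, chirp x s‖ ≤ v := fun v hv => by
    simpa only [one_mul, sub_zero, abs_of_nonneg hv] using
      intervalIntegral.norm_integral_le_of_norm_le_const (a := 0) (b := v)
        fun s _ => (norm_chirp x s).le
  rcases le_total w (1 / √x) with hsmall | hlarge
  · exact (htrivial w hw).trans (hsmall.trans (by gcongr; norm_num))
  · have htail : ‖∫ s in (1 / √x)..w, chirp x s‖ ≤ 1 / √x := calc
      _ ≤ 1 / (2 * Real.pi * x * (1 / √x)) :=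
        norm_integral_chirp_le_of_pos hx (by positivity) hlarge
      _ = 1 / (2 * Real.pi * √x) := by
        nth_rw 1 [← Real.mul_self_sqrt hx.le]
        field_simp
      _ ≤ 1 / √x := by
        gcongr
        nlinarith [Real.pi_gt_three]
    have hcont := continuous_chirp x
    rw [← intervalIntegral.integral_add_adjacent_intervals
      (hcont.intervalIntegrable 0 (1 / √x)) (hcont.intervalIntegrable (1 / √x) w)]
    calc _ ≤ 1 / √x + 1 / √x :=
          (norm_add_le _ _).trans (add_le_add (htrivial _ (by positivity)) htail)
      _ = 2 / √x := by ring

theorem norm_integral_zero_chirp_le (hx : 0 < x) (w : ℝ) :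
    ‖∫ s in 0..w, chirp x s‖ ≤ 2 / √x := by
  rcases le_total 0 w with hw | hw
  · exact norm_integral_zero_chirp_le_of_nonneg hx hw
  · have hreflect : ∫ s in 0..-w, chirp x s = ∫ s in w..0, chirp x s := by
      simpa only [chirp, neg_sq, neg_neg, neg_zero] using
        intervalIntegral.integral_comp_neg (a := 0) (b := -w) (chirp x)
    rw [intervalIntegral.integral_symm, norm_neg, ← hreflect]
    exact norm_integral_zero_chirp_le_of_nonneg hx (neg_nonneg.2 hw)

end FresnelIntegral

section Convolution

variable {E E' F : Type*} [NormedAddCommGroup E] [NormedSpace ℝ E] [NormedAddCommGroup E']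
  [NormedSpace ℝ E'] [CompleteSpace E'] [NormedAddCommGroup F] [NormedSpace ℝ F]
  (L : E →L[ℝ] E' →L[ℝ] F) {f : ℝ → E} {g : ℝ → E'} {B : ℝ}

lemma norm_convolution_le_of_norm_primitive_le (hf : ContDiff ℝ 1 f) (hsupp : HasCompactSupport f)
    (hg : Continuous g) (hB : ∀ w, ‖∫ s in 0..w, g s‖ ≤ B) (m : ℝ) :
    ‖(f ⋆[L] g) m‖ ≤ ‖L‖ * B * ∫ t, ‖deriv f t‖ := by
  set G : ℝ → E' := fun t => -∫ s in 0..m - t, g s with hG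
  have hGderiv : ∀ t, HasDerivAt G (g (m - t)) t := fun t => by
    simpa [hG] using ((hg.integral_hasStrictDerivAt 0 (m - t)).hasDerivAt.scomp t
      ((hasDerivAt_id t).const_sub m)).fun_neg
  have hGcont : Continuous G := continuous_iff_continuousAt.2 fun t => (hGderiv t).continuousAt
  have hf' : Continuous (deriv f) := hf.continuous_deriv_one
  have hintegrable {u : ℝ → E} {v : ℝ → E'} (hu : Continuous u) (hus : HasCompactSupport u)
      (hv : Continuous v) : Integrable fun t => L (u t) (v t) :=
    ((L.continuous.comp hu).clm_apply hv).integrable_of_hasCompactSupport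
      (hus.mono fun t ht hzero => ht (by simp [hzero]))
  have hparts : (f ⋆[L] g) m = -∫ t, L (deriv f t) (G t) :=
    integral_bilinear_hasDerivAt_right_eq_neg_left_of_integrable
      (fun t _ => (hf.differentiable one_ne_zero t).hasDerivAt) (fun t _ => hGderiv t)
      (hintegrable hf.continuous hsupp (by fun_prop)) (hintegrable hf' hsupp.deriv hGcont)
      (hintegrable hf.continuous hsupp hGcont)
  rw [hparts, norm_neg, ← integral_const_mul]
  refine norm_integral_le_of_norm_le
    ((hf'.integrable_of_hasCompactSupport hsupp.deriv).norm.const_mul _) (.of_forall fun t => ?_)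
  calc ‖L (deriv f t) (G t)‖ ≤ ‖L‖ * ‖deriv f t‖ * ‖G t‖ := L.le_opNorm₂ _ _
    _ ≤ ‖L‖ * ‖deriv f t‖ * B := by
      gcongr
      exact (norm_neg _).trans_le (hB _)
    _ = ‖L‖ * B * ‖deriv f t‖ := by ring

theorem norm_iteratedDeriv_convolution_le_of_norm_primitive_le {k : ℕ} (hf : ContDiff ℝ (k + 1) f)
    (hsupp : HasCompactSupport f) (hg : Continuous g) (hB : ∀ w, ‖∫ s in 0..w, g s‖ ≤ B) (m : ℝ) :
    ‖iteratedDeriv k (f ⋆[L] g) m‖ ≤ ‖L‖ * B * ∫ t, ‖iteratedDeriv (k + 1) f t‖ := by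
  induction k generalizing f with
  | zero =>
    simpa using norm_convolution_le_of_norm_primitive_le L (by simpa using hf) hsupp hg hB m
  | succ k ih =>
    have hderiv : deriv (f ⋆[L] g) = deriv f ⋆[L] g := funext fun t =>
      (hsupp.hasDerivAt_convolution_left L (hf.of_le (by simp)) hg.locallyIntegrable t).deriv
    rw [iteratedDeriv_succ', hderiv, iteratedDeriv_succ' (n := k + 1)]
    exact ih (by exact_mod_cast hf.deriv') hsupp.deriv

theorem exists_pow_mul_norm_iteratedDeriv_convolution_chirp_le {V : ℝ → ℂ} {j : ℕ}
    (hV : ContDiff ℝ (j + 1) V) (hsupp : HasCompactSupport V) (R : ℝ) :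
    ∃ B, ∀ x s, 0 < x → 0 ≤ s → s ≤ R → ∀ k ≤ j,
      s ^ k * ‖iteratedDeriv k (V ⋆[ContinuousLinearMap.mul ℝ ℂ] chirp x) s‖ ≤ B / √x := by
  refine ⟨∑ k ∈ Finset.range (j + 1), |R| ^ k * (2 * ∫ t, ‖iteratedDeriv (k + 1) V t‖),
    fun x s hx hs hsR k hk => ?_⟩
  have hderiv : ‖iteratedDeriv k (V ⋆[ContinuousLinearMap.mul ℝ ℂ] chirp x) s‖ ≤
      2 / √x * ∫ t, ‖iteratedDeriv (k + 1) V t‖ := by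
    simpa using norm_iteratedDeriv_convolution_le_of_norm_primitive_le
      (ContinuousLinearMap.mul ℝ ℂ) (hV.of_le (by exact_mod_cast Nat.succ_le_succ hk)) hsupp
      (continuous_chirp x) (norm_integral_zero_chirp_le hx) s
  calc _ ≤ |R| ^ k * (2 / √x * ∫ t, ‖iteratedDeriv (k + 1) V t‖) := by
        gcongr
        exact hsR.trans (le_abs_self R)
    _ = |R| ^ k * (2 * ∫ t, ‖iteratedDeriv (k + 1) V t‖) / √x := by ring
    _ ≤ _ := by
      gcongr
      exact Finset.single_le_sum
        (f := fun k => |R| ^ k * (2 * ∫ t, ‖iteratedDeriv (k + 1) V t‖))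
        (fun i _ => by positivity) (Finset.mem_range.2 (by lia))

end Convolution

section CompSqrt

variable {E : Type*} [NormedAddCommGroup E] [NormedSpace ℝ E] {F : ℝ → E} {u : ℝ}

lemma hasDerivAt_rpow_smul_comp_sqrt (hF : Differentiable ℝ F) (hu : 0 < u) (p : ℝ) :
    HasDerivAt (fun v => v ^ p • F √v)
      (p • u ^ (p - 1) • F √u + (1 / 2 : ℝ) • u ^ (p - 1 / 2) • deriv F √u) u := by
  have hcomp := (hF √u).hasDerivAt.scomp u (Real.hasDerivAt_sqrt hu.ne')
  refine ((Real.hasDerivAt_rpow_const (Or.inl hu.ne')).fun_smul hcomp).congr_deriv ?_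
  rw [Function.comp_apply, Real.rpow_sub hu p (1 / 2), ← Real.sqrt_eq_rpow, smul_smul, smul_smul,
    smul_smul, add_comm]
  congr 2
  ring

lemma contDiffAt_rpow_smul_comp_sqrt {n : ℕ∞ω} (hF : ContDiff ℝ n F) (hu : 0 < u) (p : ℝ) :
    ContDiffAt ℝ n (fun v => v ^ p • F √v) u :=
  (Real.contDiffAt_rpow_const_of_ne hu.ne').smul
    (hF.contDiffAt.comp u (Real.contDiffAt_sqrt hu.ne'))

lemma iteratedDeriv_succ_rpow_smul_comp_sqrt {j : ℕ} (hF : ContDiff ℝ (j + 1) F) (hu : 0 < u)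
    (p : ℝ) :
    iteratedDeriv (j + 1) (fun v => v ^ p • F √v) u =
      p • iteratedDeriv j (fun v => v ^ (p - 1) • F √v) u +
        (1 / 2 : ℝ) • iteratedDeriv j (fun v => v ^ (p - 1 / 2) • deriv F √v) u := by
  have hderiv : deriv (fun v => v ^ p • F √v) =ᶠ[𝓝 u] fun v =>
      p • v ^ (p - 1) • F √v + (1 / 2 : ℝ) • v ^ (p - 1 / 2) • deriv F √v := by
    filter_upwards [lt_mem_nhds hu] with v hv
    exact (hasDerivAt_rpow_smul_comp_sqrt (hF.differentiable (by simp)) hv p).deriv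
  have hsmooth := contDiffAt_rpow_smul_comp_sqrt (hF.of_le le_self_add) hu (p - 1)
  have hsmooth' := contDiffAt_rpow_smul_comp_sqrt hF.deriv' hu (p - 1 / 2)
  rw [iteratedDeriv_succ', hderiv.iteratedDeriv_eq,
    iteratedDeriv_fun_add (hsmooth.const_smul p) (hsmooth'.const_smul (1 / 2 : ℝ)),
    iteratedDeriv_fun_const_smul hsmooth, iteratedDeriv_fun_const_smul hsmooth']

variable (E)

-- The weight `v ^ p` is what makes the induction close: differentiating produces the same kind of
-- function, with exponents `p - 1` (and `F`) and `p - 1 / 2` (and `F'`).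
lemma exists_norm_iteratedDeriv_rpow_smul_comp_sqrt_le (j : ℕ) (p : ℝ) :
    ∃ C, ∀ (F : ℝ → E) (u M : ℝ), ContDiff ℝ j F → 0 < u →
      (∀ k ≤ j, √u ^ k * ‖iteratedDeriv k F √u‖ ≤ M) →
        ‖iteratedDeriv j (fun v => v ^ p • F √v) u‖ ≤ C * u ^ (p - j) * M := by
  induction j generalizing p with
  | zero =>
    refine ⟨1, fun F u M _ hu hM => ?_⟩
    have := Real.rpow_nonneg hu.le p
    simpa [norm_smul, abs_of_nonneg this] using mul_le_mul_of_nonneg_left (hM 0 le_rfl) this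
  | succ j ih =>
    obtain ⟨C₁, hbound₁⟩ := ih (p - 1)
    obtain ⟨C₂, hbound₂⟩ := ih (p - 1 / 2)
    refine ⟨|p| * C₁ + 1 / 2 * C₂, fun F u M hF hu hM => ?_⟩
    have hF : ContDiff ℝ (j + 1) F := by exact_mod_cast hF
    have hsqrt : 0 < √u := Real.sqrt_pos.2 hu
    have hM' : ∀ k ≤ j, √u ^ k * ‖iteratedDeriv k (deriv F) √u‖ ≤ M / √u := fun k hk => by
      rw [le_div_iff₀ hsqrt, ← iteratedDeriv_succ']
      exact (hM (k + 1) (by lia)).trans_eq' (by ring)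
    have hexp₁ : u ^ (p - 1 - j) = u ^ (p - (j + 1 : ℕ)) := by
      push_cast
      ring_nf
    have hexp₂ : u ^ (p - 1 / 2 - j) / √u = u ^ (p - (j + 1 : ℕ)) := by
      rw [Real.sqrt_eq_rpow, ← Real.rpow_sub hu]
      push_cast
      ring_nf
    calc _ ≤ |p| * (C₁ * u ^ (p - 1 - j) * M) + 1 / 2 * (C₂ * u ^ (p - 1 / 2 - j) * (M / √u)) := by
          rw [iteratedDeriv_succ_rpow_smul_comp_sqrt hF hu]
          refine (norm_add_le _ _).trans ?_
          rw [norm_smul, norm_smul, Real.norm_eq_abs, Real.norm_of_nonneg one_half_pos.le]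
          gcongr
          · exact hbound₁ F u M (hF.of_le le_self_add) hu fun k hk => hM k (hk.trans j.le_succ)
          · exact hbound₂ (deriv F) u (M / √u) hF.deriv' hu hM'
      _ = |p| * C₁ * u ^ (p - 1 - j) * M + 1 / 2 * C₂ * (u ^ (p - 1 / 2 - j) / √u) * M := by ring
      _ = _ := by rw [hexp₁, hexp₂]; ring

theorem exists_pow_mul_norm_iteratedDeriv_comp_mul_sqrt_le (j : ℕ) :
    ∃ C, ∀ (F : ℝ → E) (c u M : ℝ), ContDiff ℝ j F → 0 ≤ c → 0 < u →
      (∀ k ≤ j, (c * √u) ^ k * ‖iteratedDeriv k F (c * √u)‖ ≤ M) →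
        u ^ j * ‖iteratedDeriv j (fun v => F (c * √v)) u‖ ≤ C * M := by
  obtain ⟨C, hbound⟩ := exists_norm_iteratedDeriv_rpow_smul_comp_sqrt_le E j 0
  refine ⟨C, fun F c u M hF hc hu hM => ?_⟩
  have hscaled : ∀ k ≤ j, √u ^ k * ‖iteratedDeriv k (fun s => F (c * s)) √u‖ ≤ M := fun k hk => by
    rw [iteratedDeriv_comp_const_smul (hF.of_le (by exact_mod_cast hk)), norm_smul, norm_pow,
      Real.norm_of_nonneg hc]
    exact (hM k hk).trans_eq' (by ring)
  have hderiv := hbound (fun s => F (c * s)) u M (hF.comp (by fun_prop)) hu hscaled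
  simp only [Real.rpow_zero, one_smul, zero_sub, Real.rpow_neg hu.le, Real.rpow_natCast] at hderiv
  calc _ ≤ u ^ j * (C * (u ^ j)⁻¹ * M) := by gcongr
    _ = C * M := by field_simp

end CompSqrt

section QuadraticSubstitution

/-- The amplitude `V(t) = 2t U(t²)` on `t > 0`, extended by zero, which the substitution `y = t²`
produces from `U(y) dy`. It is complex-valued so that it can be convolved with `chirp x`. -/
noncomputable def sqAmplitude (U : ℝ → ℝ) : ℝ → ℂ :=
  (Ioi 0).indicator fun t => ((2 * t * U (t ^ 2) : ℝ) : ℂ)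

variable {U : ℝ → ℝ}

lemma support_sqAmplitude_subset : Function.support (sqAmplitude U) ⊆ Real.sqrt '' tsupport U := by
  intro t ht
  obtain ⟨htpos, hne⟩ := by simpa [sqAmplitude] using ht
  exact ⟨t ^ 2, subset_tsupport U hne.2, Real.sqrt_sq htpos.le⟩

lemma hasCompactSupport_sqAmplitude (hsupp : HasCompactSupport U) :
    HasCompactSupport (sqAmplitude U) :=
  .of_support_subset_isCompact (hsupp.isCompact.image Real.continuous_sqrt)
    support_sqAmplitude_subset

lemma contDiff_sqAmplitude {n : ℕ∞ω} (hU : ContDiff ℝ n U) (hsupp : HasCompactSupport U)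
    (hpos : tsupport U ⊆ Ioi 0) : ContDiff ℝ n (sqAmplitude U) := by
  have hsub : tsupport (sqAmplitude U) ⊆ Ioi 0 :=
    (closure_minimal support_sqAmplitude_subset
      (hsupp.isCompact.image Real.continuous_sqrt).isClosed).trans
      (image_subset_iff.2 fun y hy => Real.sqrt_pos.2 (hpos hy))
  refine contMDiff_iff_contDiff.1 <| contMDiff_of_tsupport fun t ht => ContDiffAt.contMDiffAt ?_
  have hsmooth : ContDiff ℝ n fun t : ℝ => ((2 * t * U (t ^ 2) : ℝ) : ℂ) :=
    Complex.ofRealCLM.contDiff.comp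
      ((contDiff_const.mul contDiff_id).mul (hU.comp (contDiff_id.pow 2)))
  exact hsmooth.contDiffAt.congr_of_eventuallyEq
    ((eqOn_indicator).eventuallyEq_of_mem (Ioi_mem_nhds (hsub ht)))

lemma e_neg_mul_e_eq_chirp {x l : ℝ} (hx : 0 < x) (hl : 0 ≤ l) (t : ℝ) :
    e (-l) * e (2 * √(l * x) * t - x * t ^ 2) = chirp x ((√x)⁻¹ * √l - t) := by
  rw [chirp, ← e_add]
  congr 1
  have hsqrt : √x ≠ 0 := (Real.sqrt_pos.2 hx).ne'
  rw [Real.sqrt_mul hl]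
  nth_rw 1 [← Real.sq_sqrt hl]
  nth_rw 2 3 [← Real.sq_sqrt hx.le]
  field_simp
  ring

theorem e_neg_mul_Kcal_eq_convolution (U : ℝ → ℝ) {x l : ℝ} (hx : 0 < x) (hl : 0 ≤ l) :
    e (-l) * Kcal U √(l * x) x =
      (sqAmplitude U ⋆[ContinuousLinearMap.mul ℝ ℂ] chirp x) ((√x)⁻¹ * √l) := by
  have hindicator : ∀ t, sqAmplitude U t * chirp x ((√x)⁻¹ * √l - t) = (Ioi 0).indicator
      (fun t => ((2 * t * U (t ^ 2) : ℝ) : ℂ) * chirp x ((√x)⁻¹ * √l - t)) t :=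
    fun t => (indicator_mul_left _ _ (fun t => chirp x ((√x)⁻¹ * √l - t))).symm
  simp only [convolution_def, ContinuousLinearMap.mul_apply', hindicator]
  rw [integral_indicator measurableSet_Ioi, Kcal, ← integral_comp_rpow_Ioi_of_pos two_pos,
    ← integral_const_mul]
  refine setIntegral_congr_fun measurableSet_Ioi fun t (ht : 0 < t) => ?_
  have hexp : (2 : ℝ) - 1 = 1 := by norm_num
  simp only [hexp, Real.rpow_one, Real.rpow_two, Real.sqrt_sq ht.le, Complex.real_smul,
    ← e_neg_mul_e_eq_chirp hx hl]
  push_cast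
  ring

end QuadraticSubstitution

theorem stmt10_general (U : ℝ → ℝ) (j : ℕ) (hU : ContDiff ℝ (j + 1) U) (hsupp : HasCompactSupport U)
    (hpos : tsupport U ⊆ Ioi 0) (A : ℝ) :
    ∃ C : ℝ, 0 < C ∧ ∀ x, 0 < x → ∀ lam ∈ Ioo 0 (A * x),
      lam ^ j * ‖iteratedDeriv j (fun l : ℝ => e (-l) * Kcal U √(l * x) x) lam‖ ≤ C / √x := by
  have hV : ContDiff ℝ (j + 1) (sqAmplitude U) := contDiff_sqAmplitude hU hsupp hpos
  have hVsupp : HasCompactSupport (sqAmplitude U) := hasCompactSupport_sqAmplitude hsupp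
  obtain ⟨B, hB⟩ := exists_pow_mul_norm_iteratedDeriv_convolution_chirp_le hV hVsupp √A
  obtain ⟨C, hC⟩ := exists_pow_mul_norm_iteratedDeriv_comp_mul_sqrt_le ℂ j
  refine ⟨max (C * B) 1, by positivity, fun x hx lam hlam => ?_⟩
  have hW : (fun l : ℝ => e (-l) * Kcal U √(l * x) x) =ᶠ[𝓝 lam] fun l =>
      (sqAmplitude U ⋆[ContinuousLinearMap.mul ℝ ℂ] chirp x) ((√x)⁻¹ * √l) := by
    filter_upwards [lt_mem_nhds hlam.1] with l hl
    exact e_neg_mul_Kcal_eq_convolution U hx hl.le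
  have hpoint : (√x)⁻¹ * √lam ≤ √A := by
    rw [inv_mul_le_iff₀ (Real.sqrt_pos.2 hx), ← Real.sqrt_mul hx.le, mul_comm x]
    exact Real.sqrt_le_sqrt hlam.2.le
  rw [hW.iteratedDeriv_eq]
  calc _ ≤ C * (B / √x) := by
        refine hC _ _ lam _ ?_ (by positivity) hlam.1 fun k hk =>
          hB x _ hx (by positivity) hpoint k hk
        exact hVsupp.contDiff_convolution_left _ (n := j) (hV.of_le le_self_add)
          (continuous_chirp x).locallyIntegrable
    _ = C * B / √x := by ring
    _ ≤ max (C * B) 1 / √x := by gcongr; exact le_max_left _ _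

/-- For `x > N^ε > 1`, the function `W(λ) = e(−λ) 𝒦(√(λx), x)` satisfies
`λ^j W^{(j)}(λ) ≪_j 1/√x` for `λ ∈ (x/4, 4x)`, with implied constants
depending only on `j` and `U`. -/
theorem stmt10 (U : ℝ → ℝ) (hU : ContDiff ℝ (⊤ : ℕ∞) U) (hsupp : Function.support U ⊆ Set.Icc 1 2)
    (j : ℕ) :
    ∃ C : ℝ, 0 < C ∧
      ∀ ε N x : ℝ, 0 < ε → 1 < N ^ ε → N ^ ε < x →
        ∀ lam ∈ Set.Ioo (x / 4) (4 * x),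
          lam ^ j * ‖iteratedDeriv j (fun l : ℝ => e (-l) * Kcal U (Real.sqrt (l * x)) x) lam‖
            ≤ C / Real.sqrt x := by
  have htsupp : tsupport U ⊆ Ioi 0 :=
    (closure_minimal hsupp isClosed_Icc).trans fun y hy => zero_lt_one.trans_le hy.1
  obtain ⟨C, hC, hbound⟩ := stmt10_general U j (hU.of_le (by exact_mod_cast le_top))
    (.of_support_subset_isCompact isCompact_Icc hsupp) htsupp 4
  refine ⟨C, hC, fun ε N x _ hN hx lam hlam => ?_⟩
  exact hbound x (by linarith) lam ⟨by linarith [hlam.1], hlam.2⟩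
end

section
/- Let ε > 0, let M ≥ 1 be an integer, and let c₀ > 0, c₂ > 0 be constants. Suppose: N, T, K, P > 1 with N^ε ≤ K ≤ T^{1−ε}, X = P²K²/N; V is smooth, supported in [1,2], with total variation Var(V) = ∫|V'| ≤ 1; φ : (1/2, 5/2) → ℝ is smooth with |φ''(x)| ≥ c₀ and |φ''(x)| ≤ c₂ for all x ∈ (1/2, 5/2); p is a prime with P ≤ p ≤ 2P; r is an integer; γ is real. Then there are constants C and T₀, depending only on ε, M, c₀, c₂ and U, such that for all T ≥ T₀ and all y with MX ≤ y ≤ 2MX, |𝒥(y,r,p)| ≤ C/√T. -/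
/-- The oscillatory integral
`𝒥(y,r,p) = ∫_0^∞ V(x) e(Tφ(x) + γNx + 2√(Nxy)/(√M p) − rNx/p) dx`. -/
noncomputable def Jcal (V : ℝ → ℂ) (φ : ℝ → ℝ) (M : ℕ) (N T γ : ℝ) (p : ℕ) (r : ℤ)
    (y : ℝ) : ℂ :=
  ∫ x in Set.Ioi (0 : ℝ),
    V x * e (T * φ x + γ * N * x + 2 * Real.sqrt (N * x * y) / (Real.sqrt M * p)
      - r * N * x / p)

/-!
The proof is van der Corput's second-derivative test. Multiplying `exp(if)` by the smoothed
reciprocal `f' / (f'² + s²)` gives an approximate primitive of size `O(1/s)`; where `f'' ≥ s²`, the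
error in its derivative is at most `2f'' / (f'² + s²)`, whose primitive is `(2/s) arctan(f'/s)`.
Hence `∫ exp(if) ≪ 1/s` on every interval, and partial integration brings in the weight `V`.

In the phase of `𝒥` the terms in `γ` and `r` are linear, and the square-root term is `A√x` with
`A ≤ 4K`, so on `[1, 2]` it contributes at most `K ≤ T^{1-ε}` to the second derivative. For large
`T` this is at most `c₀T/2`, half of the lower bound for `T|φ''|` there.
-/

section VanDerCorput

open Complex MeasureTheory Set

/-- The smoothed reciprocal `u / (u² + s²)`: it is close to `1 / u` for `|u|` much larger than `s`,
but stays bounded by `1 / (2s)` near `u = 0`. -/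
noncomputable def smoothedInv (s u : ℝ) : ℝ := u / (u ^ 2 + s ^ 2)

lemma one_sub_mul_smoothedInv {s : ℝ} (hs : s ≠ 0) (u : ℝ) :
    1 - u * smoothedInv s u = s ^ 2 / (u ^ 2 + s ^ 2) := by
  rw [smoothedInv]
  field_simp
  ring

lemma abs_smoothedInv_le {s : ℝ} (hs : 0 < s) (u : ℝ) : |smoothedInv s u| ≤ 1 / (2 * s) := by
  have hpos : 0 < u ^ 2 + s ^ 2 := by positivity
  rw [smoothedInv, abs_div, abs_of_pos hpos, div_le_div_iff₀ hpos (by positivity), ← sq_abs u]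
  linarith [two_mul_le_add_sq |u| s]

lemma hasDerivAt_smoothedInv {s : ℝ} (hs : s ≠ 0) (u : ℝ) :
    HasDerivAt (smoothedInv s) ((s ^ 2 - u ^ 2) / (u ^ 2 + s ^ 2) ^ 2) u := by
  have hpos : 0 < u ^ 2 + s ^ 2 := by positivity
  refine ((hasDerivAt_id u).div ((hasDerivAt_pow 2 u).add_const (s ^ 2)) hpos.ne').congr_deriv ?_
  simp only [id_eq]
  ring

lemma abs_sq_sub_sq_div_le (s u : ℝ) :
    |(s ^ 2 - u ^ 2) / (u ^ 2 + s ^ 2) ^ 2| ≤ 1 / (u ^ 2 + s ^ 2) := by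
  have hdiff : |s ^ 2 - u ^ 2| ≤ u ^ 2 + s ^ 2 := by
    rw [abs_le]
    constructor <;> linarith [sq_nonneg s, sq_nonneg u]
  rw [abs_div, abs_of_nonneg (by positivity : 0 ≤ (u ^ 2 + s ^ 2) ^ 2)]
  calc |s ^ 2 - u ^ 2| / (u ^ 2 + s ^ 2) ^ 2
      ≤ (u ^ 2 + s ^ 2) / (u ^ 2 + s ^ 2) ^ 2 := by gcongr
    _ = 1 / (u ^ 2 + s ^ 2) := by rw [sq (u ^ 2 + s ^ 2), div_self_mul_self', one_div]

lemma norm_integral_le_of_norm_sub_deriv_le {E : Type*} [NormedAddCommGroup E] [NormedSpace ℝ E]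
    [CompleteSpace E] {F F' g : ℝ → E} {B : ℝ → ℝ} {a b : ℝ} (hab : a ≤ b)
    (hF : ∀ x ∈ Icc a b, HasDerivAt F (F' x) x) (hF' : IntervalIntegrable F' volume a b)
    (hg : IntervalIntegrable g volume a b) (hB : IntervalIntegrable B volume a b)
    (hgB : ∀ x ∈ Icc a b, ‖g x - F' x‖ ≤ B x) :
    ‖∫ x in a..b, g x‖ ≤ ‖F b‖ + ‖F a‖ + ∫ x in a..b, B x := by
  have hFTC : ∫ x in a..b, F' x = F b - F a :=
    intervalIntegral.integral_eq_sub_of_hasDerivAt (by rwa [uIcc_of_le hab]) hF'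
  have herror : ‖∫ x in a..b, (g x - F' x)‖ ≤ ∫ x in a..b, B x :=
    intervalIntegral.norm_integral_le_of_norm_le hab
      (ae_of_all _ fun x hx => hgB x (Ioc_subset_Icc_self hx)) hB
  calc ‖∫ x in a..b, g x‖ = ‖F b - F a + ∫ x in a..b, (g x - F' x)‖ := by
        rw [intervalIntegral.integral_sub hg hF', hFTC, add_sub_cancel]
    _ ≤ ‖F b‖ + ‖F a‖ + ∫ x in a..b, B x :=
        (norm_add_le _ _).trans (add_le_add (norm_sub_le _ _) herror)

lemma hasDerivAt_arctan_div {g : ℝ → ℝ} {g' s x : ℝ} (hs : s ≠ 0) (hg : HasDerivAt g g' x) :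
    HasDerivAt (fun x => Real.arctan (g x / s) / s) (g' / (g x ^ 2 + s ^ 2)) x := by
  have hsum : 1 + (g x / s) ^ 2 = (g x ^ 2 + s ^ 2) / s ^ 2 := by
    field_simp
    ring
  refine ((hg.div_const s).arctan.div_const s).congr_deriv ?_
  rw [hsum]
  field_simp

lemma integral_deriv_div_sq_add_sq_le {g g' : ℝ → ℝ} {a b s : ℝ} (hab : a ≤ b) (hs : 0 < s)
    (hg : ∀ x ∈ Icc a b, HasDerivAt g (g' x) x)
    (hquot : IntervalIntegrable (fun x => g' x / (g x ^ 2 + s ^ 2)) volume a b) :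
    ∫ x in a..b, g' x / (g x ^ 2 + s ^ 2) ≤ Real.pi / s := by
  rw [intervalIntegral.integral_eq_sub_of_hasDerivAt (fun x hx =>
    hasDerivAt_arctan_div hs.ne' (hg x (uIcc_of_le hab ▸ hx))) hquot, ← sub_div]
  gcongr
  linarith [Real.arctan_lt_pi_div_two (g b / s), Real.neg_pi_div_two_lt_arctan (g a / s)]

lemma hasDerivAt_cexp_mul_smoothedInv {f f' : ℝ → ℝ} {f'' s x : ℝ} (hs : s ≠ 0)
    (hf : HasDerivAt f (f' x) x) (hf' : HasDerivAt f' f'' x) :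
    HasDerivAt (fun x => -I * (cexp (f x * I) * smoothedInv s (f' x)))
      (cexp (f x * I) * (f' x * smoothedInv s (f' x)
        - f'' * ((s ^ 2 - f' x ^ 2) / (f' x ^ 2 + s ^ 2) ^ 2 : ℝ) * I)) x := by
  have hexp : HasDerivAt (fun x => cexp (f x * I)) (cexp (f x * I) * (f' x * I)) x :=
    (hf.ofReal_comp.mul_const I).cexp
  have hinv := ((hasDerivAt_smoothedInv hs (f' x)).comp x hf').ofReal_comp
  refine ((hexp.mul hinv).const_mul (-I)).congr_deriv ?_
  push_cast [Function.comp_apply]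
  linear_combination (-cexp (f x * I) * f' x * smoothedInv s (f' x)) * I_sq

lemma norm_cexp_sub_deriv_cexp_mul_smoothedInv_le {s : ℝ} (hs : s ≠ 0) (θ u : ℝ) {v : ℝ}
    (hv : s ^ 2 ≤ v) :
    ‖cexp (θ * I) - cexp (θ * I) * (u * smoothedInv s u
        - v * ((s ^ 2 - u ^ 2) / (u ^ 2 + s ^ 2) ^ 2 : ℝ) * I)‖ ≤ 2 * (v / (u ^ 2 + s ^ 2)) := by
  have hv₀ : 0 ≤ v := (sq_nonneg s).trans hv
  set q' : ℝ := (s ^ 2 - u ^ 2) / (u ^ 2 + s ^ 2) ^ 2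
  have hfactor : cexp (θ * I) - cexp (θ * I) * (u * smoothedInv s u - v * q' * I)
      = cexp (θ * I) * (((s ^ 2 / (u ^ 2 + s ^ 2) : ℝ) : ℂ) + (v * q' : ℝ) * I) := by
    rw [← one_sub_mul_smoothedInv hs]
    push_cast
    ring
  have hfst : ‖((s ^ 2 / (u ^ 2 + s ^ 2) : ℝ) : ℂ)‖ ≤ v / (u ^ 2 + s ^ 2) := by
    rw [norm_real, Real.norm_of_nonneg (by positivity)]
    gcongr
  have hsnd : ‖((v * q' : ℝ) : ℂ) * I‖ ≤ v / (u ^ 2 + s ^ 2) := by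
    rw [norm_mul, norm_I, mul_one, norm_real, Real.norm_eq_abs, abs_mul, abs_of_nonneg hv₀,
      div_eq_mul_one_div v]
    gcongr
    exact abs_sq_sub_sq_div_le s u
  rw [hfactor, norm_mul, norm_exp_ofReal_mul_I, one_mul, two_mul]
  exact (norm_add_le _ _).trans (add_le_add hfst hsnd)

variable {f f' f'' : ℝ → ℝ} {a b : ℝ}

lemma norm_integral_cexp_le_of_sq_le_deriv2 {s : ℝ} (hab : a ≤ b) (hs : 0 < s)
    (hf : ∀ x ∈ Icc a b, HasDerivAt f (f' x) x) (hf' : ∀ x ∈ Icc a b, HasDerivAt f' (f'' x) x)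
    (hf'' : ContinuousOn f'' (Icc a b)) (hlow : ∀ x ∈ Icc a b, s ^ 2 ≤ f'' x) :
    ‖∫ x in a..b, cexp (f x * I)‖ ≤ 8 / s := by
  have hfc : ContinuousOn f (Icc a b) := HasDerivAt.continuousOn hf
  have hf'c : ContinuousOn f' (Icc a b) := HasDerivAt.continuousOn hf'
  have hpos (x : ℝ) : 0 < f' x ^ 2 + s ^ 2 := by positivity
  have hqc : ContinuousOn (fun x => smoothedInv s (f' x)) (Icc a b) :=
    hf'c.div (by fun_prop) fun x _ => (hpos x).ne'
  have hq'c : ContinuousOn (fun x => (s ^ 2 - f' x ^ 2) / (f' x ^ 2 + s ^ 2) ^ 2) (Icc a b) :=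
    ContinuousOn.div (by fun_prop) (by fun_prop) fun x _ => (pow_pos (hpos x) 2).ne'
  have hBint : IntervalIntegrable (fun x => f'' x / (f' x ^ 2 + s ^ 2)) volume a b :=
    (hf''.div (by fun_prop) fun x _ => (hpos x).ne').intervalIntegrable_of_Icc hab
  have hboundary (x : ℝ) : ‖-I * (cexp (f x * I) * smoothedInv s (f' x))‖ ≤ 1 / (2 * s) := by
    rw [norm_mul, norm_mul, norm_exp_ofReal_mul_I, norm_neg, norm_I, one_mul, one_mul, norm_real]
    exact abs_smoothedInv_le hs _
  calc ‖∫ x in a..b, cexp (f x * I)‖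
      ≤ _ + _ + ∫ x in a..b, 2 * (f'' x / (f' x ^ 2 + s ^ 2)) :=
        norm_integral_le_of_norm_sub_deriv_le hab
          (fun x hx => hasDerivAt_cexp_mul_smoothedInv hs.ne' (hf x hx) (hf' x hx))
          (ContinuousOn.intervalIntegrable_of_Icc hab (by fun_prop))
          (ContinuousOn.intervalIntegrable_of_Icc hab (by fun_prop)) (hBint.const_mul 2)
          fun x hx => norm_cexp_sub_deriv_cexp_mul_smoothedInv_le hs.ne' _ _ (hlow x hx)
    _ ≤ 1 / (2 * s) + 1 / (2 * s) + 2 * (Real.pi / s) := by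
        rw [intervalIntegral.integral_const_mul]
        exact add_le_add (add_le_add (hboundary b) (hboundary a)) (mul_le_mul_of_nonneg_left
          (integral_deriv_div_sq_add_sq_le hab hs hf' hBint) zero_le_two)
    _ = (1 + 2 * Real.pi) / s := by
        field_simp
        ring
    _ ≤ 8 / s := by
        gcongr
        linarith [Real.pi_lt_d2]

lemma forall_le_or_forall_le_neg_of_le_abs {α : Type*} [TopologicalSpace α] {S : Set α}
    (hS : IsPreconnected S) {g : α → ℝ} (hg : ContinuousOn g S) {c : ℝ} (hc : 0 < c)
    (hlow : ∀ x ∈ S, c ≤ |g x|) : (∀ x ∈ S, c ≤ g x) ∨ ∀ x ∈ S, c ≤ -g x := by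
  by_contra! ⟨⟨x, hx, hgx⟩, y, hy, hgy⟩
  have hx_neg : g x ≤ 0 := by
    rcases le_abs.1 (hlow x hx) with h | h <;> linarith
  have hy_pos : 0 ≤ g y := by
    rcases le_abs.1 (hlow y hy) with h | h <;> linarith
  obtain ⟨z, hz, hgz⟩ := hS.intermediate_value hx hy hg ⟨hx_neg, hy_pos⟩
  have := hlow z hz
  rw [hgz, abs_zero] at this
  exact this.not_gt hc

lemma norm_integral_cexp_neg (f : ℝ → ℝ) (a b : ℝ) :
    ‖∫ x in a..b, cexp ((-f x : ℝ) * I)‖ = ‖∫ x in a..b, cexp (f x * I)‖ := by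
  rw [← norm_conj, ← intervalIntegral.intervalIntegral_conj]
  simp only [← exp_conj, map_mul, conj_ofReal, conj_I, ofReal_neg, map_neg, neg_mul_neg]

theorem norm_integral_cexp_le_of_le_abs_deriv2 {c : ℝ} (hab : a ≤ b) (hc : 0 < c)
    (hf : ∀ x ∈ Icc a b, HasDerivAt f (f' x) x) (hf' : ∀ x ∈ Icc a b, HasDerivAt f' (f'' x) x)
    (hf'' : ContinuousOn f'' (Icc a b)) (hlow : ∀ x ∈ Icc a b, c ≤ |f'' x|) :
    ‖∫ x in a..b, cexp (f x * I)‖ ≤ 8 / √c := by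
  rw [← Real.sq_sqrt hc.le] at hlow
  have hs : 0 < √c := Real.sqrt_pos.2 hc
  rcases forall_le_or_forall_le_neg_of_le_abs isPreconnected_Icc hf'' (by positivity) hlow
    with hpos | hneg
  · exact norm_integral_cexp_le_of_sq_le_deriv2 hab hs hf hf' hf'' hpos
  · rw [← norm_integral_cexp_neg]
    exact norm_integral_cexp_le_of_sq_le_deriv2 hab hs (fun x hx => (hf x hx).neg)
      (fun x hx => (hf' x hx).neg) hf''.neg hneg

lemma norm_integral_mul_le_of_norm_primitive_le {R : Type*} [NormedRing R] [NormedAlgebra ℝ R]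
    [CompleteSpace R] {V V' g : ℝ → R} {B : ℝ} (hab : a ≤ b)
    (hV : ∀ x ∈ Icc a b, HasDerivAt V (V' x) x) (hV' : IntervalIntegrable V' volume a b)
    (hg : ContinuousOn g (Icc a b)) (hB : ∀ x ∈ Icc a b, ‖∫ t in a..x, g t‖ ≤ B) :
    ‖∫ x in a..b, V x * g x‖ ≤ B * (‖V b‖ + ∫ x in a..b, ‖V' x‖) := by
  have hgint : IntervalIntegrable g volume a b := hg.intervalIntegrable_of_Icc hab
  have hprim : ∀ x ∈ Ioo (min a b) (max a b), HasDerivAt (fun x => ∫ t in a..x, g t) (g x) x := by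
    rw [min_eq_left hab, max_eq_right hab]
    intro x hx
    exact intervalIntegral.integral_hasDerivAt_right
      ((hg.mono (Icc_subset_Icc_right hx.2.le)).intervalIntegrable_of_Icc hx.1.le)
      ((hg.mono Ioo_subset_Icc_self).stronglyMeasurableAtFilter isOpen_Ioo x hx)
      (hg.continuousAt (Icc_mem_nhds hx.1 hx.2))
  have hparts := intervalIntegral.integral_mul_deriv_eq_deriv_mul_of_hasDerivAt
    (HasDerivAt.continuousOn (uIcc_of_le hab ▸ hV))
    (intervalIntegral.continuousOn_primitive_interval' hgint left_mem_uIcc)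
    (fun x hx => hV x (Ioo_subset_Icc_self (by rwa [min_eq_left hab, max_eq_right hab] at hx)))
    hprim hV' hgint
  have hinner : ‖∫ x in a..b, V' x * ∫ t in a..x, g t‖ ≤ ∫ x in a..b, B * ‖V' x‖ := by
    refine intervalIntegral.norm_integral_le_of_norm_le hab (ae_of_all _ fun x hx => ?_)
      (hV'.norm.const_mul B)
    rw [mul_comm B]
    exact norm_mul_le_of_le le_rfl (hB x (Ioc_subset_Icc_self hx))
  rw [intervalIntegral.integral_const_mul] at hinner
  have hright : ‖V b * ∫ t in a..b, g t‖ ≤ B * ‖V b‖ := by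
    rw [mul_comm B]
    exact norm_mul_le_of_le le_rfl (hB b (right_mem_Icc.2 hab))
  rw [hparts, intervalIntegral.integral_same, mul_zero, sub_zero, mul_add]
  exact (norm_sub_le _ _).trans (add_le_add hright hinner)

lemma e_eq_cexp (t : ℝ) : e t = cexp ((2 * Real.pi * t : ℝ) * I) := by
  rw [e]
  congr 1
  push_cast
  ring

theorem norm_integral_mul_e_le_of_le_abs_deriv2 {V V' : ℝ → ℂ} {c : ℝ} (hab : a ≤ b) (hc : 0 < c)
    (hV : ∀ x ∈ Icc a b, HasDerivAt V (V' x) x) (hV' : IntervalIntegrable V' volume a b)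
    (hf : ∀ x ∈ Icc a b, HasDerivAt f (f' x) x) (hf' : ∀ x ∈ Icc a b, HasDerivAt f' (f'' x) x)
    (hf'' : ContinuousOn f'' (Icc a b)) (hlow : ∀ x ∈ Icc a b, c ≤ |f'' x|) :
    ‖∫ x in a..b, V x * e (f x)‖ ≤ 8 / √(2 * Real.pi * c) * (‖V b‖ + ∫ x in a..b, ‖V' x‖) := by
  have hfc : ContinuousOn f (Icc a b) := HasDerivAt.continuousOn hf
  simp only [e_eq_cexp]
  refine norm_integral_mul_le_of_norm_primitive_le hab hV hV' (by fun_prop) fun x hx => ?_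
  have hsub : Icc a x ⊆ Icc a b := Icc_subset_Icc_right hx.2
  refine norm_integral_cexp_le_of_le_abs_deriv2 hx.1 (by positivity)
    (fun t ht => (hf t (hsub ht)).const_mul _) (fun t ht => (hf' t (hsub ht)).const_mul _)
    ((hf''.mono hsub).const_mul _) fun t ht => ?_
  rw [abs_mul, abs_of_pos Real.two_pi_pos]
  gcongr
  exact hlow t (hsub ht)

end VanDerCorput

section SupportIcc

open MeasureTheory Set

lemma eq_zero_right_of_support_subset_Icc {E : Type*} [TopologicalSpace E] [T1Space E] [Zero E]
    {V : ℝ → E} {a b : ℝ} (hV : Continuous V) (hsupp : Function.support V ⊆ Icc a b) : V b = 0 := by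
  have hopen : IsOpen (Function.support V) := hV.isOpen_preimage _ isOpen_compl_singleton
  have hinterior : Function.support V ⊆ Ioo a b := by
    rwa [← interior_Icc, hopen.subset_interior_iff]
  by_contra hne
  exact (hinterior hne).2.false

lemma setIntegral_Ioi_eq_intervalIntegral_of_support_subset {E : Type*} [NormedAddCommGroup E]
    [NormedSpace ℝ E] {g : ℝ → E} {a b c : ℝ} (hca : c < a) (hab : a ≤ b)
    (hsupp : Function.support g ⊆ Icc a b) : ∫ x in Ioi c, g x = ∫ x in a..b, g x := by
  rw [intervalIntegral.integral_of_le hab, ← integral_Icc_eq_integral_Ioc]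
  refine setIntegral_eq_of_subset_of_forall_sdiff_eq_zero measurableSet_Ioi
    (fun x hx => hca.trans_le hx.1) fun x hx => ?_
  exact Function.notMem_support.1 fun hx' => hx.2 (hsupp hx')

end SupportIcc

section Phase

open MeasureTheory Set

lemma hasDerivAt_one_div_two_mul_sqrt {x : ℝ} (hx : 0 < x) :
    HasDerivAt (fun x => 1 / (2 * √x)) (-(1 / (4 * (x * √x)))) x := by
  simp only [one_div]
  refine (((Real.hasDerivAt_sqrt hx.ne').const_mul 2).inv (by positivity)).congr_deriv ?_
  rw [mul_pow, Real.sq_sqrt hx.le]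
  field_simp
  norm_num

lemma half_mul_le_abs_sub_of_le {T c u v : ℝ} (hT : 0 ≤ T) (hu : c ≤ |u|)
    (hv : |v| ≤ c / 2 * T) : c / 2 * T ≤ |T * u - v| := by
  have hTu : c * T ≤ |T * u| := by
    rw [abs_mul, abs_of_nonneg hT, mul_comm]
    gcongr
  linarith [abs_sub_abs_le_abs_sub (T * u) v]

lemma abs_mul_one_div_le_of_one_le {A D x : ℝ} (hA : 0 ≤ A) (hAD : A ≤ 4 * D) (hx : 1 ≤ x) :
    |A * (1 / (4 * (x * √x)))| ≤ D := by
  have hprod : 1 ≤ x * √x := one_le_mul_of_one_le_of_one_le hx (Real.one_le_sqrt.2 hx)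
  rw [abs_of_nonneg (by positivity), mul_one_div, div_le_iff₀ (by positivity)]
  nlinarith

lemma norm_integral_mul_e_add_sqrt_add_linear_le {V V' : ℝ → ℂ} {φ φ' φ'' : ℝ → ℝ}
    {a b c T A B : ℝ} (ha : 1 ≤ a) (hab : a ≤ b) (hc : 0 < c) (hT : 0 < T) (hA : 0 ≤ A)
    (hAT : A ≤ 4 * (c / 2 * T))
    (hV : ∀ x ∈ Icc a b, HasDerivAt V (V' x) x) (hV' : IntervalIntegrable V' volume a b)
    (hφ : ∀ x ∈ Icc a b, HasDerivAt φ (φ' x) x) (hφ' : ∀ x ∈ Icc a b, HasDerivAt φ' (φ'' x) x)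
    (hφ'' : ContinuousOn φ'' (Icc a b)) (hlow : ∀ x ∈ Icc a b, c ≤ |φ'' x|) :
    ‖∫ x in a..b, V x * e (T * φ x + A * √x + B * x)‖
      ≤ 8 / √(c * T) * (‖V b‖ + ∫ x in a..b, ‖V' x‖) := by
  have hone {x : ℝ} (hx : x ∈ Icc a b) : 1 ≤ x := ha.trans hx.1
  have hpos {x : ℝ} (hx : x ∈ Icc a b) : 0 < x := zero_lt_one.trans_le (hone hx)
  have hderiv : ∀ x ∈ Icc a b, HasDerivAt (fun x => T * φ x + A * √x + B * x)
      (T * φ' x + A * (1 / (2 * √x)) + B) x := fun x hx =>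
    (((hφ x hx).const_mul T).add ((Real.hasDerivAt_sqrt (hpos hx).ne').const_mul A)).add
      (hasDerivAt_const_mul B)
  have hderiv2 : ∀ x ∈ Icc a b, HasDerivAt (fun x => T * φ' x + A * (1 / (2 * √x)) + B)
      (T * φ'' x - A * (1 / (4 * (x * √x)))) x := fun x hx => by
    rw [sub_eq_add_neg, ← mul_neg]
    exact (((hφ' x hx).const_mul T).add
      ((hasDerivAt_one_div_two_mul_sqrt (hpos hx)).const_mul A)).add_const B
  have hcont : ContinuousOn (fun x => T * φ'' x - A * (1 / (4 * (x * √x)))) (Icc a b) := by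
    have hsqrt : ContinuousOn (fun x : ℝ => 1 / (4 * (x * √x))) (Icc a b) :=
      continuousOn_const.div (by fun_prop) fun x hx => by
        have := Real.sqrt_pos.2 (hpos hx)
        have := hpos hx
        positivity
    fun_prop
  have hπ : √(c * T) ≤ √(2 * Real.pi * (c / 2 * T)) :=
    Real.sqrt_le_sqrt (by nlinarith [Real.pi_gt_three, mul_pos hc hT])
  calc _ ≤ 8 / √(2 * Real.pi * (c / 2 * T)) * (‖V b‖ + ∫ x in a..b, ‖V' x‖) :=
        norm_integral_mul_e_le_of_le_abs_deriv2 hab (by positivity) hV hV' hderiv hderiv2 hcont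
          fun x hx => half_mul_le_abs_sub_of_le hT.le (hlow x hx)
            (abs_mul_one_div_le_of_one_le hA hAT (hone hx))
    _ ≤ 8 / √(c * T) * (‖V b‖ + ∫ x in a..b, ‖V' x‖) := by
        have : 0 ≤ ∫ x in a..b, ‖V' x‖ :=
          intervalIntegral.integral_nonneg hab fun x _ => norm_nonneg _
        gcongr

end Phase

section Jcal

open MeasureTheory Set

lemma Jcal_eq_intervalIntegral {V : ℝ → ℂ} {a b N y : ℝ} (ha : 0 < a) (hab : a ≤ b)
    (hsupp : Function.support V ⊆ Icc a b) (hN : 0 ≤ N) (hy : 0 ≤ y) (φ : ℝ → ℝ) (M : ℕ) (T γ : ℝ)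
    (p : ℕ) (r : ℤ) :
    Jcal V φ M N T γ p r y = ∫ x in a..b,
      V x * e (T * φ x + 2 * √(N * y) / (√M * p) * √x + (γ * N - r * N / p) * x) := by
  rw [Jcal, setIntegral_Ioi_eq_intervalIntegral_of_support_subset ha hab
    ((Function.support_mul_subset_left _ _).trans hsupp)]
  congr! 4 with x
  rw [mul_right_comm N x y, Real.sqrt_mul (mul_nonneg hN hy)]
  ring

lemma two_mul_sqrt_div_le {M N K P p y : ℝ} (hM : 0 < M) (hN : 0 < N) (hK : 0 ≤ K) (hP : 0 < P)
    (hPp : P ≤ p) (hy : y ≤ 2 * (M * (P ^ 2 * K ^ 2 / N))) :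
    2 * √(N * y) / (√M * p) ≤ 4 * K := by
  have hp : 0 < p := hP.trans_le hPp
  have hsq : N * y ≤ (2 * (√M * p * K)) ^ 2 :=
    calc N * y ≤ N * (2 * (M * (P ^ 2 * K ^ 2 / N))) := by gcongr
      _ = 2 * (M * (P ^ 2 * K ^ 2)) := by field_simp
      _ ≤ 4 * (M * (p ^ 2 * K ^ 2)) := by
        gcongr
        norm_num
      _ = (2 * (√M * p * K)) ^ 2 := by
        simp only [mul_pow, Real.sq_sqrt hM.le]
        ring
  have hsqrt : √(N * y) ≤ 2 * (√M * p * K) := Real.sqrt_le_iff.2 ⟨by positivity, hsq⟩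
  rw [div_le_iff₀ (by positivity)]
  linarith

lemma hasDerivAt_deriv_of_contDiffOn_two {E : Type*} [NormedAddCommGroup E] [NormedSpace ℝ E]
    {φ : ℝ → E} {U : Set ℝ} (hU : IsOpen U) (hφ : ContDiffOn ℝ 2 φ U) :
    (∀ x ∈ U, HasDerivAt φ (deriv φ x) x) ∧
      (∀ x ∈ U, HasDerivAt (deriv φ) (iteratedDerivWithin 2 φ U x) x) ∧
        ContinuousOn (iteratedDerivWithin 2 φ U) U := by
  have hderiv : ContDiffOn ℝ 1 (deriv φ) U := hφ.deriv_of_isOpen hU (by norm_num)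
  refine ⟨fun x hx => ?_, fun x hx => ?_, ?_⟩
  · exact ((hφ.differentiableOn two_ne_zero).differentiableAt (hU.mem_nhds hx)).hasDerivAt
  · rw [iteratedDerivWithin_of_isOpen hU hx, iteratedDeriv_succ, iteratedDeriv_one]
    exact ((hderiv.differentiableOn one_ne_zero).differentiableAt (hU.mem_nhds hx)).hasDerivAt
  · exact hφ.continuousOn_iteratedDerivWithin le_rfl hU.uniqueDiffOn

theorem norm_Jcal_le {V : ℝ → ℂ} {φ : ℝ → ℝ} {U : Set ℝ} {M p : ℕ} {r : ℤ}
    {a b c N T K P γ y : ℝ} (ha : 1 ≤ a) (hab : a ≤ b) (hc : 0 < c) (hM : 1 ≤ M) (hN : 0 < N)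
    (hT : 0 < T) (hK : 0 ≤ K) (hKT : K ≤ c / 2 * T) (hP : 0 < P) (hPp : P ≤ p)
    (hV : ContDiff ℝ 1 V) (hsupp : Function.support V ⊆ Icc a b)
    (hU : IsOpen U) (habU : Icc a b ⊆ U) (hφ : ContDiffOn ℝ 2 φ U)
    (hlow : ∀ x ∈ Icc a b, c ≤ |iteratedDerivWithin 2 φ U x|)
    (hy : 0 ≤ y) (hyM : y ≤ 2 * (M * (P ^ 2 * K ^ 2 / N))) :
    ‖Jcal V φ M N T γ p r y‖ ≤ 8 / √(c * T) * ∫ x in a..b, ‖deriv V x‖ := by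
  obtain ⟨hφ₁, hφ₂, hφ₂c⟩ := hasDerivAt_deriv_of_contDiffOn_two hU hφ
  have hsqrt : 2 * √(N * y) / (√M * p) ≤ 4 * (c / 2 * T) :=
    (two_mul_sqrt_div_le (by exact_mod_cast hM) hN hK hP hPp hyM).trans (by gcongr)
  rw [Jcal_eq_intervalIntegral (zero_lt_one.trans_le ha) hab hsupp hN.le hy]
  refine (norm_integral_mul_e_add_sqrt_add_linear_le ha hab hc hT (by positivity) hsqrt
    (fun x _ => (hV.differentiable one_ne_zero x).hasDerivAt)
    ((hV.continuous_deriv le_rfl).intervalIntegrable a b) (fun x hx => hφ₁ x (habU hx))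
    (fun x hx => hφ₂ x (habU hx)) (hφ₂c.mono habU) hlow).trans_eq ?_
  rw [eq_zero_right_of_support_subset_Icc hV.continuous hsupp, norm_zero, zero_add]

lemma rpow_one_sub_le_mul_of_rpow_inv_le {ε δ T : ℝ} (hε : 0 < ε) (hδ : 0 < δ)
    (hT : δ⁻¹ ^ ε⁻¹ ≤ T) : T ^ (1 - ε) ≤ δ * T := by
  have hT₀ : 0 < T := (Real.rpow_pos_of_pos (inv_pos.2 hδ) _).trans_le hT
  have hpow : δ⁻¹ ≤ T ^ ε := (Real.rpow_inv_le_iff_of_pos (by positivity) hT₀.le hε).1 hT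
  rw [Real.rpow_sub hT₀, Real.rpow_one, div_le_iff₀ (by positivity)]
  calc T = δ * T * δ⁻¹ := by field_simp
    _ ≤ δ * T * T ^ ε := by gcongr

theorem stmt12_general {ε c₀ : ℝ} (hε : 0 < ε) (hc₀ : 0 < c₀) :
    ∃ C T₀ : ℝ, 0 < C ∧ 0 < T₀ ∧
      ∀ (M : ℕ) (N T K P γ : ℝ) (V : ℝ → ℂ) (φ : ℝ → ℝ) (p : ℕ) (r : ℤ) (y : ℝ),
        1 ≤ M → 0 < N → 0 ≤ K → 0 < P → T₀ ≤ T → K ≤ T ^ (1 - ε) →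
        ContDiff ℝ 1 V → Function.support V ⊆ Icc 1 2 →
        (∫ x in (1 / 2 : ℝ)..(5 / 2), ‖deriv V x‖) ≤ 1 →
        ContDiffOn ℝ 2 φ (Ioo (1 / 2) (5 / 2)) →
        (∀ x ∈ Icc (1 : ℝ) 2, c₀ ≤ |iteratedDerivWithin 2 φ (Ioo (1 / 2) (5 / 2)) x|) →
        P ≤ (p : ℝ) → 0 ≤ y → y ≤ 2 * (M * (P ^ 2 * K ^ 2 / N)) →
        ‖Jcal V φ M N T γ p r y‖ ≤ C / √T := by
  refine ⟨8 / √c₀, (c₀ / 2)⁻¹ ^ ε⁻¹, by positivity, by positivity, ?_⟩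
  intro M N T K P γ V φ p r y hM hN hK hP hT hKT hV hsupp hvar hφ hlow hPp hy hyM
  have hT₀ : 0 < T := (by positivity : 0 < (c₀ / 2)⁻¹ ^ ε⁻¹).trans_le hT
  have hKc : K ≤ c₀ / 2 * T := hKT.trans (rpow_one_sub_le_mul_of_rpow_inv_le hε (by positivity) hT)
  have hvar' : ∫ x in (1 : ℝ)..2, ‖deriv V x‖ ≤ 1 :=
    (intervalIntegral.integral_mono_interval (by norm_num) one_le_two (by norm_num)
      (ae_of_all _ fun x => norm_nonneg _)
      ((hV.continuous_deriv le_rfl).norm.intervalIntegrable _ _)).trans hvar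
  calc ‖Jcal V φ M N T γ p r y‖ ≤ 8 / √(c₀ * T) * ∫ x in (1 : ℝ)..2, ‖deriv V x‖ :=
        norm_Jcal_le le_rfl one_le_two hc₀ hM hN hT₀ hK hKc hP hPp hV hsupp isOpen_Ioo
          (Icc_subset_Ioo (by norm_num) (by norm_num)) hφ hlow hy hyM
    _ ≤ 8 / √(c₀ * T) * 1 := by gcongr
    _ = 8 / √c₀ / √T := by rw [mul_one, Real.sqrt_mul hc₀.le, div_div]

end Jcal

/-- Second-derivative bound for `𝒥`: under `N^ε ≤ K ≤ T^{1−ε}`, `X = P²K²/N`,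
`Var(V) ≤ 1`, `c₀ ≤ |φ''| ≤ c₂` on `(1/2,5/2)`, `p ∈ [P,2P]` prime and
`MX ≤ y ≤ 2MX`, one has `𝒥(y,r,p) ≪ 1/√T` for `T ≥ T₀`, with `C, T₀`
depending only on `ε, M, c₀, c₂`. -/
theorem stmt12 (ε : ℝ) (hε : 0 < ε) (M : ℕ) (hM : 1 ≤ M) (c₀ c₂ : ℝ)
    (hc₀ : 0 < c₀) (hc₂ : 0 < c₂) :
    ∃ C T₀ : ℝ, 0 < C ∧ 0 < T₀ ∧
      ∀ (N T K P X γ : ℝ) (V : ℝ → ℂ) (φ : ℝ → ℝ) (p : ℕ) (r : ℤ) (y : ℝ),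
        1 < N → 1 < T → 1 < K → 1 < P → T₀ ≤ T → X = P ^ 2 * K ^ 2 / N →
        N ^ ε ≤ K → K ≤ T ^ (1 - ε) →
        ContDiff ℝ (⊤ : ℕ∞) V → Function.support V ⊆ Set.Icc 1 2 →
        (∫ x in (1 / 2 : ℝ)..(5 / 2), ‖deriv V x‖) ≤ 1 →
        ContDiffOn ℝ (⊤ : ℕ∞) φ (Set.Ioo (1 / 2) (5 / 2)) →
        (∀ x ∈ Set.Ioo ((1 : ℝ) / 2) (5 / 2),
          c₀ ≤ |iteratedDerivWithin 2 φ (Set.Ioo (1 / 2) (5 / 2)) x| ∧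
          |iteratedDerivWithin 2 φ (Set.Ioo (1 / 2) (5 / 2)) x| ≤ c₂) →
        Nat.Prime p → P ≤ (p : ℝ) → (p : ℝ) ≤ 2 * P →
        (M : ℝ) * X ≤ y → y ≤ 2 * ((M : ℝ) * X) →
        ‖Jcal V φ M N T γ p r y‖ ≤ C / Real.sqrt T := by
  obtain ⟨C, T₀, hC, hT₀, hJ⟩ := stmt12_general hε hc₀
  refine ⟨C, T₀, hC, hT₀, ?_⟩
  rintro N T K P _ γ V φ p r y hN - hK hP hT rfl - hKT hV hsupp hvar hφ hφ'' - hPp - hMy hyM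
  exact hJ M N T K P γ V φ p r y hM (by linarith) (by linarith) (by linarith) hT hKT
    (contDiff_infty.1 hV 1) hsupp hvar (contDiffOn_infty.1 hφ 2)
    (fun x hx => (hφ'' x (Set.Icc_subset_Ioo (by norm_num) (by norm_num) hx)).1)
    hPp (le_trans (by positivity) hMy) hyM
end
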